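/- Let $f_1,\dots,f_n$ be real analytic and not identically zero on a neighborhood of the origin in $\mathbb{R}^2$, let $\gamma_1,\dots,\gamma_n\in\mathbb{R}$, and let $E\subseteq\mathbb{R}^2$ be of one of the following two forms, for some $r_0>0$: (i) $E$ is the disk $\{(x,y): x^2+y^2<r_0^2\}$; or (ii) $E=E_1\cup\dots\cup E_m$ with $m\ge 1$, where the $E_i$ are pairwise disjoint connected open subsets of the disk $\{x^2+y^2<r_0^2\}$, and the boundary of each $E_i$ consists of two curves joining the origin to the circle $x^2+y^2=r_0^2$ together with an arc of that circle. Each such curve is the part, from the origin up to its first point on the circle, of one half of a graph $y=h(|x|^{1/N})$ or $x=h(|y|^{1/N})$ (one half meaning $x\ge0$ or $x\le 0$, respectively $y\ge0$ or $y\le0$), for some positive integer $N$ and some real analytic $h$ with $h(0)=0$; $N$ and $h$ may depend on the curve. All $2m$ of these curves are pairwise disjoint away from the origin. Suppose that $g(x,y)=\chi_E(x,y)\prod_{i=1}^n|f_i(x,y)|^{\gamma_i}$ is integrable on a neighborhood of the origin. Let $v=(v_1,v_2)$ be a unit vector in $\mathbb{R}^2$ and let $v^\perp=(v_2,-v_1)$.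 Then there exist $\delta_v>0$, $c_v>0$ and $e_v\in\{0,1\}$ such that for every $0<c<c_v$ there exist $a_{v,c},b_{v,c}>0$ with $$a_{v,c}\,r^{\delta_v}|\ln r|^{e_v}\le\int_{\{(x,y):\,|(x,y)\cdot v|<r,\ |(x,y)\cdot v^\perp|<c\}}g(x,y)\,dx\,dy\le b_{v,c}\,r^{\delta_v}|\ln r|^{e_v}\qquad\text{for all }0<r<c.$$ -/

import Mathlib

open MeasureTheory Set
open scoped Topology

noncomputable section

/-- The open Euclidean disk `{(x,y) : x² + y² < r²}`. -/
def disk2 (r : ℝ) : Set (ℝ × ℝ) := {p | p.1 ^ 2 + p.2 ^ 2 < r ^ 2}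

/-- The circle `{(x,y) : x² + y² = r²}`. -/
def circle2 (r : ℝ) : Set (ℝ × ℝ) := {p | p.1 ^ 2 + p.2 ^ 2 = r ^ 2}

/-- Dot product on `ℝ²`. -/
def dot2 (p q : ℝ × ℝ) : ℝ := p.1 * q.1 + p.2 * q.2

/-- The perpendicular vector `v^⊥ = (v₂, −v₁)`. -/
def perp2 (v : ℝ × ℝ) : ℝ × ℝ := (v.2, -v.1)

/-- The strip `{(x,y) : |(x,y)·v| < r, |(x,y)·v^⊥| < c}`. -/
def strip2 (v : ℝ × ℝ) (r c : ℝ) : Set (ℝ × ℝ) :=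
  {p | |dot2 p v| < r ∧ |dot2 p (perp2 v)| < c}

/-- The function `g = χ_E · ∏ᵢ |fᵢ|^(γᵢ)`. -/
def stdFun (n : ℕ) (f : Fin n → ℝ × ℝ → ℝ) (γ : Fin n → ℝ) (E : Set (ℝ × ℝ)) :
    ℝ × ℝ → ℝ :=
  E.indicator fun p => ∏ i, |f i p| ^ (γ i)

/-- `C` is a curve joining the origin to the circle of radius `r₀`, running along one half of a
graph `y = h(|x|^{1/N})` or `x = h(|y|^{1/N})` with `h` real analytic and `h 0 = 0`. The sign `σ`
selects the half of the graph; the parameter `t` is `|x|` (resp. `|y|`), and `t = T` is where the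
curve reaches the circle. -/
def IsBoundaryCurve (r₀ : ℝ) (C : Set (ℝ × ℝ)) : Prop :=
  ∃ (N : ℕ) (h : ℝ → ℝ) (σ T : ℝ),
    0 < N ∧ (σ = 1 ∨ σ = -1) ∧ 0 < T ∧
    AnalyticOnNhd ℝ h (Icc 0 (T ^ (1 / (N : ℝ)))) ∧ h 0 = 0 ∧
    (∀ t, 0 ≤ t → t < T → t ^ 2 + h (t ^ (1 / (N : ℝ))) ^ 2 < r₀ ^ 2) ∧
    T ^ 2 + h (T ^ (1 / (N : ℝ))) ^ 2 = r₀ ^ 2 ∧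
    (C = (fun t : ℝ => (σ * t, h (t ^ (1 / (N : ℝ))))) '' Icc 0 T ∨
     C = (fun t : ℝ => (h (t ^ (1 / (N : ℝ))), σ * t)) '' Icc 0 T)

/-- `W` is a region (connected open set) inside the disk of radius `r₀` whose boundary consists of
the curves `C₁`, `C₂` and an arc of the circle of radius `r₀`. -/
def IsRegionBoundedBy (r₀ : ℝ) (C₁ C₂ W : Set (ℝ × ℝ)) : Prop :=
  IsOpen W ∧ IsConnected W ∧ W ⊆ disk2 r₀ ∧
    ∃ A ⊆ circle2 r₀, IsConnected A ∧ frontier W = C₁ ∪ C₂ ∪ A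

/-- The admissible sets `E`: a disk centered at the origin, or a nonempty finite disjoint union of
regions, each bounded by two boundary curves and an arc of the circle of radius `r₀`, all these
curves being pairwise disjoint away from the origin. -/
def IsStdDomain (E : Set (ℝ × ℝ)) : Prop :=
  ∃ r₀ > (0 : ℝ), E = disk2 r₀ ∨
    ∃ (m : ℕ) (Es : Fin m → Set (ℝ × ℝ)) (Cs : Fin m → Fin 2 → Set (ℝ × ℝ)),
      0 < m ∧ E = (⋃ i, Es i) ∧
      (Pairwise fun i j => Disjoint (Es i) (Es j)) ∧
      (∀ i j, IsBoundaryCurve r₀ (Cs i j)) ∧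
      (∀ i, IsRegionBoundedBy r₀ (Cs i 0) (Cs i 1) (Es i)) ∧
      (Pairwise fun q q' : Fin m × Fin 2 =>
        Disjoint (Cs q.1 q.2 \ {0}) (Cs q'.1 q'.2 \ {0}))

/-- The standard form: the `fᵢ` are real analytic and not identically zero near the origin,
`g = χ_E ∏ |fᵢ|^(γᵢ)` is integrable near the origin, and `E` is an admissible set. -/
structure StandardForm (n : ℕ) (f : Fin n → ℝ × ℝ → ℝ) (γ : Fin n → ℝ)
    (E : Set (ℝ × ℝ)) : Prop where
  analytic : ∃ U ∈ 𝓝 (0 : ℝ × ℝ), ∀ i, AnalyticOnNhd ℝ (f i) U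
  nontriv : ∀ i, ¬ (∀ᶠ p in 𝓝 (0 : ℝ × ℝ), f i p = 0)
  integ : ∃ U ∈ 𝓝 (0 : ℝ × ℝ), IntegrableOn (stdFun n f γ E) U
  domain : IsStdDomain E

end

/-!
The integral over a strip is comparable to a *gauge*: one of `0`, `∞` and `r ^ δ * |log r| ^ e` with
`δ > 0` and `e ≤ 1`. Of two gauges one dominates the other, so a sum of functions with gauges has a
gauge too, and the strip may be cut into pieces.

In coordinates adapted to `v`, the two halves of a strip are boxes `(0, r) × (-c, c)` with a weight
`χ_E s ^ α ∏ |F i| ^ γ i`, where each `F i` is regular of some order `d i` in the second variable.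
The frontier of `E` lies in the zero set of a nonzero analytic function, which is added to the `F i`
with exponent `0`; then `χ_E` is constant on every connected set that avoids the zeros of the `F i`.

The proof is an induction on `∑ d i`. A shear removes the coefficient of `y ^ (d i - 1)` from one of
the `F i`. Let `θ = p / Q` be the least value of `m / (d i - j)` over the terms `s ^ m y ^ j`,
`j < d i`, of the `F i`. Above the curves `|y| = M s ^ θ` the weight is comparable to a monomial.
Below them the region is covered by the images of finitely many weighted blow-ups
`(σ, u) ↦ (σ ^ Q, σ ^ p (u₀ + u))`, and the orders at `u₀` are the multiplicities of `u₀` as a root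
of the leading polynomials. If their sum were still `∑ d i`, each leading polynomial would be a
multiple of `(u - u₀) ^ d i`; the missing subleading coefficient forces `u₀ = 0`, so that all the
leading polynomials are pure powers, against the choice of `θ`.

Positivity and integrability exclude the gauges `0` and `∞`, and monotonicity in `r` extends the
bounds from small `r` to all `0 < r < c`.
-/

open Filter

noncomputable section

/-! ### Hadamard's lemma and orders in the second variable -/

section ContractionAverage

variable {E F : Type*} [NormedAddCommGroup E] [NormedSpace ℝ E] [NormedAddCommGroup F]
  [NormedSpace ℝ F]

theorem norm_compContinuousLinearMap_le_of_norm_le_one {n : ℕ}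
    (f : ContinuousMultilinearMap ℝ (fun _ : Fin n => E) F) {L : E →L[ℝ] E} (hL : ‖L‖ ≤ 1) :
    ‖f.compContinuousLinearMap fun _ => L‖ ≤ ‖f‖ :=
  (f.norm_compContinuousLinearMap_le _).trans <| mul_le_of_le_one_right (norm_nonneg _) <|
    Finset.prod_le_one (fun _ _ => norm_nonneg _) fun _ _ => hL

theorem continuous_compContinuousLinearMap {n : ℕ}
    (f : ContinuousMultilinearMap ℝ (fun _ : Fin n => E) F) {L : ℝ → E →L[ℝ] E}
    (hL : Continuous L) : Continuous fun t => f.compContinuousLinearMap fun _ => L t := by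
  have h : Continuous fun t =>
      ContinuousMultilinearMap.compContinuousLinearMapContinuousMultilinear ℝ
        (fun _ : Fin n => E) (fun _ => E) F (fun _ => L t) :=
    (ContinuousMultilinearMap.cont _).comp (continuous_pi fun _ => hL)
  exact h.clm_apply continuous_const

variable {L : ℝ → E →L[ℝ] E}

theorem hasSum_integral_compContinuousLinearMap {H : E → F}
    {q : FormalMultilinearSeries ℝ E F} {R : ENNReal} (hH : HasFPowerSeriesOnBall H q 0 R)
    (hL : Continuous L) (hL1 : ∀ t ∈ Icc (0 : ℝ) 1, ‖L t‖ ≤ 1) {z : E} (hz : ‖z‖ₑ < R) :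
    HasSum (fun n => ∫ t in (0 : ℝ)..1, (q n).compContinuousLinearMap (fun _ => L t) fun _ => z)
      (∫ t in (0 : ℝ)..1, H (L t z)) := by
  have hsum : Summable fun n => ‖q n‖ * ‖z‖ ^ n :=
    q.summable_norm_mul_pow (r := ‖z‖₊) (hz.trans_le hH.r_le)
  have hL1' : ∀ t ∈ uIoc (0 : ℝ) 1, ‖L t‖ ≤ 1 := fun t ht =>
    hL1 t (Ioc_subset_Icc_self (by rwa [uIoc_of_le zero_le_one] at ht))
  refine intervalIntegral.hasSum_integral_of_dominated_convergence
    (fun n _ => ‖q n‖ * ‖z‖ ^ n) (fun n => ?_) (fun n => .of_forall fun t ht => ?_)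
    (.of_forall fun _ _ => hsum) (by simp) (.of_forall fun t ht => ?_)
  · exact ((ContinuousMultilinearMap.apply ℝ (fun _ : Fin n => E) F
      fun _ => z).continuous.comp
        (continuous_compContinuousLinearMap _ hL)).aestronglyMeasurable
  · refine (ContinuousMultilinearMap.le_opNorm _ _).trans ?_
    simp only [Finset.prod_const, Finset.card_univ, Fintype.card_fin]
    gcongr
    exact norm_compContinuousLinearMap_le_of_norm_le_one _ (hL1' t ht)
  · have hLz : ‖L t z‖ ≤ ‖z‖ := by
      simpa using (L t).le_of_opNorm_le (hL1' t ht) z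
    have hmem : L t z ∈ Metric.eball (0 : E) R := by
      rw [Metric.mem_eball, edist_zero_right]
      exact (enorm_le_iff_norm_le.2 hLz).trans_lt hz
    simpa using hH.hasSum hmem

theorem analyticAt_integral_comp_contraction [CompleteSpace F] {H : E → F}
    (hH : AnalyticAt ℝ H 0) (hL : Continuous L) (hL1 : ∀ t ∈ Icc (0 : ℝ) 1, ‖L t‖ ≤ 1) :
    AnalyticAt ℝ (fun z => ∫ t in (0 : ℝ)..1, H (L t z)) 0 := by
  obtain ⟨q, R, hq⟩ := hH
  let Q : ∀ n, ℝ → ContinuousMultilinearMap ℝ (fun _ : Fin n => E) F :=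
    fun n t => (q n).compContinuousLinearMap fun _ => L t
  let G : FormalMultilinearSeries ℝ E F := fun n => ∫ t in (0 : ℝ)..1, Q n t
  have hGq (n : ℕ) : ‖G n‖ ≤ ‖q n‖ := by
    refine (intervalIntegral.norm_integral_le_of_norm_le_const fun t ht => ?_).trans
      (by rw [sub_zero, abs_one, mul_one])
    rw [uIoc_of_le zero_le_one] at ht
    exact norm_compContinuousLinearMap_le_of_norm_le_one _ (hL1 t (Ioc_subset_Icc_self ht))
  have hradius : q.radius ≤ G.radius := ENNReal.le_of_forall_nnreal_lt fun r hr => by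
    obtain ⟨C, -, hC⟩ := q.norm_mul_pow_le_of_lt_radius hr
    exact G.le_radius_of_bound C fun n => (by gcongr; exact hGq n : _ ≤ _).trans (hC n)
  refine ⟨G, R, hq.r_le.trans hradius, hq.r_pos, fun {z} hz => ?_⟩
  rw [Metric.mem_eball, edist_zero_right] at hz
  rw [zero_add]
  convert hasSum_integral_compContinuousLinearMap hq hL hL1 hz using 2 with n
  exact (ContinuousLinearMap.intervalIntegral_comp_comm (ContinuousMultilinearMap.apply ℝ
    (fun _ : Fin n => E) F fun _ => z)
    ((continuous_compContinuousLinearMap _ hL).intervalIntegrable 0 1)).symm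

end ContractionAverage

section Hadamard

variable {F : ℝ × ℝ → ℝ} {z : ℝ × ℝ}

/-- The partial derivative in the second variable. -/
def partialSnd (F : ℝ × ℝ → ℝ) (p : ℝ × ℝ) : ℝ := fderiv ℝ F p (0, 1)

theorem analyticAt_partialSnd (hF : AnalyticAt ℝ F z) : AnalyticAt ℝ (partialSnd F) z :=
  ((ContinuousLinearMap.apply ℝ ℝ ((0 : ℝ), (1 : ℝ))).analyticAt _).comp hF.fderiv

theorem analyticAt_iterate_partialSnd (hF : AnalyticAt ℝ F z) (k : ℕ) :
    AnalyticAt ℝ (partialSnd^[k] F) z := by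
  induction k with
  | zero => exact hF
  | succ k ih =>
    rw [Function.iterate_succ_apply']
    exact analyticAt_partialSnd ih

theorem hasDerivAt_partialSnd (hF : DifferentiableAt ℝ F z) :
    HasDerivAt (fun y => F (z.1, y)) (partialSnd F z) z.2 :=
  HasFDerivAt.comp_hasDerivAt (f := fun t : ℝ => (z.1, t)) z.2 hF.hasFDerivAt
    ((hasDerivAt_const z.2 z.1).prodMk (hasDerivAt_id z.2))

theorem partialSnd_congr {G : ℝ × ℝ → ℝ} (h : F =ᶠ[𝓝 z] G) :
    partialSnd F =ᶠ[𝓝 z] partialSnd G := by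
  filter_upwards [h.fderiv (𝕜 := ℝ)] with p hp
  rw [partialSnd, partialSnd, hp]

/-- The linear contraction `(x, y) ↦ (x, t y)`. -/
def scaleSnd (t : ℝ) : ℝ × ℝ →L[ℝ] ℝ × ℝ :=
  (ContinuousLinearMap.inl ℝ ℝ ℝ).comp (ContinuousLinearMap.fst ℝ ℝ ℝ) +
    t • (ContinuousLinearMap.inr ℝ ℝ ℝ).comp (ContinuousLinearMap.snd ℝ ℝ ℝ)

theorem scaleSnd_apply (t : ℝ) (p : ℝ × ℝ) : scaleSnd t p = (p.1, t * p.2) := by simp [scaleSnd]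

theorem continuous_scaleSnd : Continuous scaleSnd := by
  unfold scaleSnd
  fun_prop

theorem norm_scaleSnd_le {t : ℝ} (ht : t ∈ Icc (0 : ℝ) 1) : ‖scaleSnd t‖ ≤ 1 := by
  refine ContinuousLinearMap.opNorm_le_bound _ zero_le_one fun p => ?_
  rw [scaleSnd_apply, one_mul, Prod.norm_def, Prod.norm_def, norm_mul, Real.norm_of_nonneg ht.1]
  exact max_le_max le_rfl (mul_le_of_le_one_left (norm_nonneg _) ht.2)

theorem eq_add_snd_mul_integral {p : ℝ × ℝ}
    (hF : ∀ t ∈ Icc (0 : ℝ) 1, AnalyticAt ℝ F (scaleSnd t p)) :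
    F p = F (p.1, 0) + p.2 * ∫ t in (0 : ℝ)..1, partialSnd F (scaleSnd t p) := by
  have hderiv : ∀ t ∈ uIcc (0 : ℝ) 1,
      HasDerivAt (fun t => F (p.1, t * p.2)) (partialSnd F (scaleSnd t p) * p.2) t := by
    intro t ht
    rw [uIcc_of_le zero_le_one] at ht
    have h := hasDerivAt_partialSnd (hF t ht).differentiableAt
    rw [scaleSnd_apply] at h ⊢
    exact HasDerivAt.comp (h₂ := fun y => F (p.1, y)) t h (hasDerivAt_mul_const p.2)
  have hcont : ContinuousOn (fun t => partialSnd F (scaleSnd t p)) (uIcc 0 1) := by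
    rw [uIcc_of_le zero_le_one]
    intro t ht
    have hline : ContinuousAt (fun t => scaleSnd t p) t :=
      (continuous_scaleSnd.clm_apply continuous_const).continuousAt
    exact (ContinuousAt.comp (f := fun t => scaleSnd t p) (g := partialSnd F)
      (analyticAt_partialSnd (hF t ht)).continuousAt hline).continuousWithinAt
  have h := intervalIntegral.integral_eq_sub_of_hasDerivAt hderiv
    (hcont.mul continuousOn_const).intervalIntegrable
  rw [intervalIntegral.integral_mul_const, one_mul, zero_mul] at h
  linarith

theorem exists_eq_add_snd_mul (hF : AnalyticAt ℝ F 0) :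
    ∃ G, AnalyticAt ℝ G 0 ∧ ∀ᶠ p in 𝓝 (0 : ℝ × ℝ), F p = F (p.1, 0) + p.2 * G p := by
  refine ⟨_, analyticAt_integral_comp_contraction (analyticAt_partialSnd hF) continuous_scaleSnd
    fun t => norm_scaleSnd_le, ?_⟩
  obtain ⟨ε, hε, hball⟩ := Metric.eventually_nhds_iff_ball.1 hF.eventually_analyticAt
  filter_upwards [Metric.ball_mem_nhds 0 hε] with p hp
  refine eq_add_snd_mul_integral fun t ht => hball _ ?_
  rw [mem_ball_zero_iff] at hp ⊢
  exact (by simpa using (scaleSnd t).le_of_opNorm_le (norm_scaleSnd_le ht) p : _ ≤ ‖p‖).trans_lt hp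

theorem analyticAt_swap : AnalyticAt ℝ (Prod.swap : ℝ × ℝ → ℝ × ℝ) z :=
  analyticAt_snd.prod analyticAt_fst

theorem exists_eq_add_fst_mul (hF : AnalyticAt ℝ F 0) :
    ∃ G, AnalyticAt ℝ G 0 ∧ ∀ᶠ p in 𝓝 (0 : ℝ × ℝ), F p = F (0, p.2) + p.1 * G p := by
  obtain ⟨G, hG, hFG⟩ := exists_eq_add_snd_mul (hF.fun_comp_of_eq analyticAt_swap Prod.swap_zero)
  refine ⟨fun p => G p.swap, hG.fun_comp_of_eq analyticAt_swap Prod.swap_zero, ?_⟩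
  filter_upwards [(continuous_swap.tendsto' (0 : ℝ × ℝ) 0 Prod.swap_zero).eventually hFG] with p hp
  simpa using hp

end Hadamard

/-- `F` is, near the origin, a polynomial of degree less than `d` in the second variable with
coefficients `c` analytic in the first one, plus a multiple `U` of the `d`-th power. -/
structure TaylorForm (F : ℝ × ℝ → ℝ) (d : ℕ) (c : ℕ → ℝ → ℝ) (U : ℝ × ℝ → ℝ) : Prop where
  coeff : ∀ j, AnalyticAt ℝ (c j) 0
  rem : AnalyticAt ℝ U 0
  eq : ∀ᶠ p in 𝓝 (0 : ℝ × ℝ),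
    F p = ∑ j ∈ Finset.range d, c j p.1 * p.2 ^ j + p.2 ^ d * U p

/-- `F` is analytic at the origin and regular of order `d` in the second variable. -/
structure RegularOrder (F : ℝ × ℝ → ℝ) (d : ℕ) : Prop where
  analytic : AnalyticAt ℝ F 0
  order : analyticOrderAt (fun y => F (0, y)) 0 = d

section TaylorForm

variable {F U : ℝ × ℝ → ℝ} {d : ℕ} {c : ℕ → ℝ → ℝ}

theorem exists_taylorForm (hF : AnalyticAt ℝ F 0) (d : ℕ) : ∃ c U, TaylorForm F d c U := by
  induction d with
  | zero => exact ⟨fun _ _ => 0, F, fun _ => analyticAt_const, hF, by simp⟩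
  | succ d ih =>
    obtain ⟨c, U, hc, hU, hFU⟩ := ih
    obtain ⟨G, hG, hUG⟩ := exists_eq_add_snd_mul hU
    refine ⟨Function.update c d fun s => U (s, 0), G, fun j => ?_, hG, ?_⟩
    · rcases eq_or_ne j d with rfl | hj
      · rw [Function.update_self]
        exact hU.fun_comp_of_eq (analyticAt_id.prod analyticAt_const) rfl
      · rw [Function.update_of_ne hj]
        exact hc j
    · filter_upwards [hFU, hUG] with p hp hq
      have hsum : ∑ j ∈ Finset.range d, Function.update c d (fun s => U (s, 0)) j p.1 * p.2 ^ j =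
          ∑ j ∈ Finset.range d, c j p.1 * p.2 ^ j := Finset.sum_congr rfl fun j hj => by
        rw [Function.update_of_ne (Finset.mem_range.1 hj).ne]
      rw [Finset.sum_range_succ, hsum, Function.update_self, hp, hq]
      ring

theorem coeff_eq_zero_of_eventually_eq_pow_mul {a : ℕ → ℝ} {g : ℝ → ℝ} (hg : ContinuousAt g 0)
    (h : ∀ᶠ y in 𝓝[≠] (0 : ℝ), ∑ j ∈ Finset.range d, a j * y ^ j = y ^ d * g y) :
    ∀ j < d, a j = 0 := by
  induction d generalizing a with
  | zero => simp
  | succ d ih =>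
    have ha : a 0 = 0 := by
      have hpoly : Tendsto (fun y : ℝ => ∑ j ∈ Finset.range (d + 1), a j * y ^ j) (𝓝[≠] 0)
          (𝓝 (a 0)) := by
        have hc : Continuous fun y : ℝ => ∑ j ∈ Finset.range (d + 1), a j * y ^ j := by fun_prop
        exact (hc.tendsto' 0 _ (by simp [Finset.sum_range_succ'])).mono_left nhdsWithin_le_nhds
      have hpow : Tendsto (fun y => y ^ (d + 1) * g y) (𝓝[≠] 0) (𝓝 0) := by
        have hc : ContinuousAt (fun y => y ^ (d + 1) * g y) 0 := by fun_prop
        simpa using hc.tendsto.mono_left nhdsWithin_le_nhds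
      exact tendsto_nhds_unique hpoly (hpow.congr' (EventuallyEq.symm h))
    have hshift := ih (a := fun j => a (j + 1)) (by
      filter_upwards [h, self_mem_nhdsWithin] with y hy hy0
      refine mul_left_cancel₀ (show y ≠ 0 from hy0) ?_
      rw [← mul_assoc, ← pow_succ', ← hy, Finset.sum_range_succ', ha, zero_mul, add_zero,
        Finset.mul_sum]
      exact Finset.sum_congr rfl fun j _ => by ring)
    rintro (_ | j) hj
    · exact ha
    · exact hshift j (Nat.succ_lt_succ_iff.1 hj)

theorem analyticAt_comp_zero_left (hF : AnalyticAt ℝ F 0) : AnalyticAt ℝ (fun y => F (0, y)) 0 :=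
  hF.fun_comp_of_eq (analyticAt_const.prod analyticAt_id) rfl

theorem RegularOrder.exists_eq_pow_mul (h : RegularOrder F d) :
    ∃ g : ℝ → ℝ, AnalyticAt ℝ g 0 ∧ g 0 ≠ 0 ∧ ∀ᶠ y in 𝓝 0, F (0, y) = y ^ d * g y := by
  simpa using (analyticAt_comp_zero_left h.analytic).analyticOrderAt_eq_natCast.1 h.order

theorem TaylorForm.eventually_zero_left (h : TaylorForm F d c U) : ∀ᶠ y in 𝓝 (0 : ℝ),
    F (0, y) = ∑ j ∈ Finset.range d, c j 0 * y ^ j + y ^ d * U (0, y) :=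
  ((Continuous.prodMk_right (0 : ℝ)).tendsto 0).eventually h.eq

theorem TaylorForm.coeff_zero (h : TaylorForm F d c U) (hF : RegularOrder F d) :
    ∀ j < d, c j 0 = 0 := by
  obtain ⟨g, hg, -, hFg⟩ := hF.exists_eq_pow_mul
  have hU := analyticAt_comp_zero_left h.rem
  refine coeff_eq_zero_of_eventually_eq_pow_mul (hg.continuousAt.sub hU.continuousAt) ?_
  filter_upwards [nhdsWithin_le_nhds hFg, nhdsWithin_le_nhds h.eventually_zero_left] with y h₁ h₂
  simp only [Pi.sub_apply]
  linear_combination h₁ - h₂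

theorem TaylorForm.rem_ne_zero (h : TaylorForm F d c U) (hF : RegularOrder F d) : U 0 ≠ 0 := by
  obtain ⟨g, hg, hg0, hFg⟩ := hF.exists_eq_pow_mul
  have hU := analyticAt_comp_zero_left h.rem
  have hUg : (fun y => U (0, y)) =ᶠ[𝓝[≠] 0] g := by
    filter_upwards [nhdsWithin_le_nhds hFg, nhdsWithin_le_nhds h.eventually_zero_left,
      self_mem_nhdsWithin] with y h₁ h₂ hy
    rw [h₁, Finset.sum_eq_zero fun j hj => by
      rw [h.coeff_zero hF j (Finset.mem_range.1 hj), zero_mul], zero_add] at h₂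
    exact (mul_left_cancel₀ (pow_ne_zero d hy) h₂).symm
  have hU0 : U (0, 0) = g 0 :=
    ((hU.frequently_eq_iff_eventually_eq hg).1 hUg.frequently).self_of_nhds
  exact hU0 ▸ hg0

theorem TaylorForm.analyticAt (h : TaylorForm F d c U) : AnalyticAt ℝ F 0 := by
  have hc (j : ℕ) : AnalyticAt ℝ (fun p : ℝ × ℝ => c j p.1) 0 :=
    (h.coeff j).fun_comp_of_eq analyticAt_fst rfl
  exact ((Finset.analyticAt_fun_sum _ fun j _ => (hc j).fun_mul (analyticAt_snd.fun_pow j)).fun_add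
    ((analyticAt_snd.fun_pow d).fun_mul h.rem)).congr (EventuallyEq.symm h.eq)

theorem TaylorForm.partialSnd (h : TaylorForm F (d + 1) c U) :
    TaylorForm (partialSnd F) d (fun j s => (j + 1) * c (j + 1) s)
      (fun p => (d + 1) * U p + p.2 * _root_.partialSnd U p) := by
  refine ⟨fun j => analyticAt_const.fun_mul (h.coeff _), (analyticAt_const.fun_mul h.rem).fun_add
    (analyticAt_snd.fun_mul (analyticAt_partialSnd h.rem)), ?_⟩
  filter_upwards [h.eq.eventually_nhds, h.analyticAt.eventually_analyticAt,
    h.rem.eventually_analyticAt] with p hp hF hU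
  have hderiv : HasDerivAt (fun y => ∑ j ∈ Finset.range (d + 1), c j p.1 * y ^ j +
      y ^ (d + 1) * U (p.1, y)) (∑ j ∈ Finset.range (d + 1), c j p.1 * (j * p.2 ^ (j - 1)) +
      (((d + 1 : ℕ) * p.2 ^ (d + 1 - 1)) * U p + p.2 ^ (d + 1) * _root_.partialSnd U p)) p.2 :=
    (HasDerivAt.fun_sum fun j _ => (hasDerivAt_pow j p.2).const_mul _).add
      ((hasDerivAt_pow (d + 1) p.2).mul (hasDerivAt_partialSnd hU.differentiableAt))
  have hline : Tendsto (fun y : ℝ => (p.1, y)) (𝓝 p.2) (𝓝 p) :=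
    (Continuous.prodMk_right p.1).tendsto p.2
  rw [(hasDerivAt_partialSnd hF.differentiableAt).unique
    (hderiv.congr_of_eventuallyEq (hline.eventually hp)), Finset.sum_range_succ']
  simp only [Nat.cast_zero, zero_mul, mul_zero, add_zero, Nat.add_sub_cancel, Nat.cast_add,
    Nat.cast_one]
  rw [Finset.sum_congr rfl fun (j : ℕ) _ => show c (j + 1) p.1 * (((j : ℝ) + 1) * p.2 ^ j) =
    ((j : ℝ) + 1) * c (j + 1) p.1 * p.2 ^ j by ring]
  ring

theorem TaylorForm.iterate_partialSnd (h : TaylorForm F (d + 1) c U) :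
    ∃ V, V 0 = (d + 1).factorial * U 0 ∧
      TaylorForm (_root_.partialSnd^[d] F) 1 (fun _ s => d.factorial * c d s) V := by
  induction d generalizing F c U with
  | zero =>
    refine ⟨U, by simp, fun _ => analyticAt_const.fun_mul (h.coeff _), h.rem, ?_⟩
    simpa using h.eq
  | succ d ih =>
    obtain ⟨V, hV0, hV⟩ := ih h.partialSnd
    refine ⟨V, ?_, ?_⟩
    · rw [hV0, Nat.factorial_succ (d + 1)]
      simp only [Prod.snd_zero, zero_mul, add_zero, Nat.cast_mul, Nat.cast_add, Nat.cast_one]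
      ring
    · rw [Function.iterate_succ_apply]
      convert hV using 3 with _ s
      rw [Nat.factorial_succ]
      push_cast
      ring

end TaylorForm

section Shear

/-- The shear `(x, y) ↦ (x, y + φ x)`. -/
def shear (φ : ℝ → ℝ) (p : ℝ × ℝ) : ℝ × ℝ := (p.1, p.2 + φ p.1)

variable {F : ℝ × ℝ → ℝ} {φ : ℝ → ℝ} {d : ℕ}

theorem shear_zero (hφ0 : φ 0 = 0) : shear φ 0 = 0 := by simp [shear, hφ0]

theorem analyticAt_shear {p : ℝ × ℝ} (hφ : AnalyticAt ℝ φ p.1) : AnalyticAt ℝ (shear φ) p :=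
  analyticAt_fst.prod (analyticAt_snd.fun_add (hφ.fun_comp_of_eq analyticAt_fst rfl))

theorem tendsto_shear (hφ : AnalyticAt ℝ φ 0) (hφ0 : φ 0 = 0) :
    Tendsto (shear φ) (𝓝 0) (𝓝 0) := by
  simpa only [shear_zero hφ0] using
    (analyticAt_shear (p := 0) hφ).continuousAt.tendsto

theorem analyticAt_comp_shear (hF : AnalyticAt ℝ F 0) (hφ : AnalyticAt ℝ φ 0) (hφ0 : φ 0 = 0) :
    AnalyticAt ℝ (F ∘ shear φ) 0 :=
  hF.comp_of_eq (analyticAt_shear hφ) (shear_zero hφ0)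

theorem partialSnd_comp_shear (hF : AnalyticAt ℝ F 0) (hφ : AnalyticAt ℝ φ 0) (hφ0 : φ 0 = 0) :
    partialSnd (F ∘ shear φ) =ᶠ[𝓝 0] partialSnd F ∘ shear φ := by
  filter_upwards [(analyticAt_comp_shear hF hφ hφ0).eventually_analyticAt,
    (tendsto_shear hφ hφ0).eventually hF.eventually_analyticAt] with p hFφ hFp
  exact (hasDerivAt_partialSnd hFφ.differentiableAt).unique
    (HasDerivAt.comp_add_const p.2 (φ p.1) (hasDerivAt_partialSnd hFp.differentiableAt))

theorem iterate_partialSnd_comp_shear (hF : AnalyticAt ℝ F 0) (hφ : AnalyticAt ℝ φ 0)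
    (hφ0 : φ 0 = 0) (k : ℕ) :
    partialSnd^[k] (F ∘ shear φ) =ᶠ[𝓝 0] partialSnd^[k] F ∘ shear φ := by
  induction k with
  | zero => rfl
  | succ k ih =>
    simp only [Function.iterate_succ_apply']
    exact (partialSnd_congr ih).trans
      (partialSnd_comp_shear (analyticAt_iterate_partialSnd hF k) hφ hφ0)

theorem RegularOrder.comp_shear (hF : RegularOrder F d) (hφ : AnalyticAt ℝ φ 0)
    (hφ0 : φ 0 = 0) : RegularOrder (F ∘ shear φ) d :=
  ⟨analyticAt_comp_shear hF.analytic hφ hφ0, by simpa [shear, hφ0] using hF.order⟩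

theorem exists_analytic_implicit (hF : AnalyticAt ℝ F 0) (h0 : F 0 = 0)
    (h1 : partialSnd F 0 ≠ 0) :
    ∃ φ : ℝ → ℝ, AnalyticAt ℝ φ 0 ∧ φ 0 = 0 ∧ ∀ᶠ s in 𝓝 (0 : ℝ), F (s, φ s) = 0 := by
  have hcd : ContDiffAt ℝ (⊤ : WithTop ℕ∞) F 0 := hF.contDiffAt
  have hinv : (fderiv ℝ F 0 ∘L ContinuousLinearMap.inr ℝ ℝ ℝ).IsInvertible :=
    ⟨ContinuousLinearEquiv.unitsEquivAut ℝ (Units.mk0 _ h1), by ext; simp [partialSnd]⟩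
  refine ⟨hcd.implicitFunction (by simp) hinv, ?_, ?_, ?_⟩
  · exact (hcd.contDiffAt_implicitFunction (by simp) hinv).analyticAt
  · exact hcd.implicitFunction_apply_self (by simp) hinv
  · simpa [h0] using hcd.eventually_apply_implicitFunction (by simp) hinv

/-- The shear along the zero set of the `d`-th derivative (a Tschirnhausen transformation). -/
theorem RegularOrder.exists_shear (hF : RegularOrder F (d + 1)) :
    ∃ φ : ℝ → ℝ, AnalyticAt ℝ φ 0 ∧ φ 0 = 0 ∧
      ∀ c U, TaylorForm (F ∘ shear φ) (d + 1) c U → ∀ᶠ s in 𝓝 (0 : ℝ), c d s = 0 := by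
  obtain ⟨c, U, hT⟩ := exists_taylorForm hF.analytic (d + 1)
  obtain ⟨V, hV0, hV⟩ := hT.iterate_partialSnd
  have hD0 : partialSnd^[d] F 0 = 0 := by
    simpa [hT.coeff_zero hF d d.lt_succ_self] using hV.eq.self_of_nhds
  have hD1 : partialSnd (partialSnd^[d] F) 0 ≠ 0 := by
    rw [hV.partialSnd.eq.self_of_nhds]
    simp [hV0, hT.rem_ne_zero hF, Nat.factorial_ne_zero]
  obtain ⟨φ, hφ, hφ0, hφD⟩ := exists_analytic_implicit hV.analyticAt hD0 hD1
  refine ⟨φ, hφ, hφ0, fun c' U' hT' => ?_⟩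
  obtain ⟨V', -, hV'⟩ := hT'.iterate_partialSnd
  have haxis : Tendsto (fun s : ℝ => (s, (0 : ℝ))) (𝓝 0) (𝓝 0) :=
    (Continuous.prodMk_left (0 : ℝ)).tendsto 0
  filter_upwards [hφD, haxis.eventually hV'.eq,
    haxis.eventually (iterate_partialSnd_comp_shear hF.analytic hφ hφ0 d)] with s hs hV's hDs
  simpa [hDs, shear, hs, Nat.factorial_ne_zero] using hV's

end Shear

section Divisibility

variable {F : ℝ × ℝ → ℝ}

theorem eventually_eq_zero_of_forall_fst_pow_dvd (hF : AnalyticAt ℝ F 0)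
    (hdvd : ∀ a : ℕ, ∃ G, AnalyticAt ℝ G 0 ∧ ∀ᶠ p in 𝓝 (0 : ℝ × ℝ), F p = p.1 ^ a * G p) :
    ∀ᶠ p in 𝓝 (0 : ℝ × ℝ), F p = 0 := by
  obtain ⟨ε, hε, hball⟩ := Metric.eventually_nhds_iff_ball.1 hF.eventually_analyticAt
  filter_upwards [Metric.ball_mem_nhds 0 hε] with z hz
  have hray (t : ℝ) : AnalyticAt ℝ (fun t : ℝ => t • z) t := by fun_prop
  have hline : AnalyticOnNhd ℝ (fun t : ℝ => F (t • z)) (Icc 0 1) := fun t ht => by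
    refine AnalyticAt.fun_comp_of_eq (hball _ ?_) (hray t) rfl
    rw [mem_ball_zero_iff] at hz ⊢
    rw [norm_smul, Real.norm_of_nonneg ht.1]
    exact (mul_le_of_le_one_left (norm_nonneg _) ht.2).trans_lt hz
  have h0 : (0 : ℝ) ∈ Icc (0 : ℝ) 1 := by simp
  have htop : analyticOrderAt (fun t : ℝ => F (t • z)) 0 = ⊤ := by
    refine ENat.eq_top_iff_forall_ge.2 fun a => ?_
    obtain ⟨G, hG, hFG⟩ := hdvd a
    refine (natCast_le_analyticOrderAt (hline 0 h0)).2 ⟨fun t => z.1 ^ a * G (t • z),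
      analyticAt_const.fun_mul (hG.fun_comp_of_eq (hray 0) (zero_smul ℝ z)), ?_⟩
    have hlim : Tendsto (fun t : ℝ => t • z) (𝓝 0) (𝓝 0) := by
      simpa using (hray 0).continuousAt.tendsto
    filter_upwards [hlim.eventually hFG] with t ht
    rw [ht, Prod.smul_fst, smul_eq_mul, smul_eq_mul, sub_zero, mul_pow]
    ring
  simpa using hline.eqOn_zero_of_preconnected_of_eventuallyEq_zero isPreconnected_Icc h0
    (analyticOrderAt_eq_top.1 htop) (x := 1) (by simp)

theorem exists_eq_fst_mul_of_zero_left (hF : AnalyticAt ℝ F 0)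
    (hF0 : analyticOrderAt (fun y => F (0, y)) 0 = ⊤) :
    ∃ G, AnalyticAt ℝ G 0 ∧ ∀ᶠ p in 𝓝 (0 : ℝ × ℝ), F p = p.1 * G p := by
  obtain ⟨G, hG, hFG⟩ := exists_eq_add_fst_mul hF
  refine ⟨G, hG, ?_⟩
  filter_upwards [hFG, (continuous_snd.tendsto' (0 : ℝ × ℝ) 0 rfl).eventually
    (analyticOrderAt_eq_top.1 hF0)] with p hp hp0
  rw [hp, hp0, zero_add]

theorem exists_eq_fst_pow_mul (hF : AnalyticAt ℝ F 0)
    (hne : ¬ ∀ᶠ p in 𝓝 (0 : ℝ × ℝ), F p = 0) :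
    ∃ (a d : ℕ) (G : ℝ × ℝ → ℝ), RegularOrder G d ∧
      ∀ᶠ p in 𝓝 (0 : ℝ × ℝ), F p = p.1 ^ a * G p := by
  by_contra hcon
  refine hne (eventually_eq_zero_of_forall_fst_pow_dvd hF fun a => ?_)
  induction a with
  | zero => exact ⟨F, hF, by simp⟩
  | succ a ih =>
    obtain ⟨G, hG, hFG⟩ := ih
    have htop : analyticOrderAt (fun y => G (0, y)) 0 = ⊤ := by
      by_contra hfin
      obtain ⟨d, hd⟩ := ENat.ne_top_iff_exists.1 hfin
      exact hcon ⟨a, d, G, ⟨hG, hd.symm⟩, hFG⟩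
    obtain ⟨G', hG', hGG'⟩ := exists_eq_fst_mul_of_zero_left hG htop
    refine ⟨G', hG', ?_⟩
    filter_upwards [hFG, hGG'] with p hp hp'
    rw [hp, hp', pow_succ, mul_assoc]

end Divisibility

/-! ### Orders of magnitude -/

/-- `J` is bounded by a constant multiple of `φ` for small positive arguments. -/
def Dominated (J φ : ℝ → ENNReal) : Prop :=
  ∃ C : NNReal, ∀ᶠ r in 𝓝[>] (0 : ℝ), J r ≤ C * φ r

/-- `J` and `φ` have the same order of magnitude for small positive arguments. -/
def Comparable (J φ : ℝ → ENNReal) : Prop := Dominated J φ ∧ Dominated φ J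

section Dominated

variable {κ : Type*} {s : Finset κ} {J J' φ ψ : ℝ → ENNReal}

theorem Dominated.of_eventually_le (h : ∀ᶠ r in 𝓝[>] (0 : ℝ), J r ≤ φ r) : Dominated J φ :=
  ⟨1, by simpa using h⟩

theorem Dominated.of_le (h : J ≤ φ) : Dominated J φ := .of_eventually_le (.of_forall h)

theorem Dominated.trans (h : Dominated J φ) (h' : Dominated φ ψ) : Dominated J ψ := by
  obtain ⟨C, hC⟩ := h
  obtain ⟨D, hD⟩ := h'
  refine ⟨C * D, ?_⟩
  filter_upwards [hC, hD] with r hr hr'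
  calc J r ≤ C * φ r := hr
    _ ≤ C * (D * ψ r) := by gcongr
    _ = ↑(C * D) * ψ r := by rw [ENNReal.coe_mul, mul_assoc]

theorem Dominated.add (h : Dominated J φ) (h' : Dominated J' φ) : Dominated (J + J') φ := by
  obtain ⟨C, hC⟩ := h
  obtain ⟨D, hD⟩ := h'
  refine ⟨C + D, ?_⟩
  filter_upwards [hC, hD] with r hr hr'
  rw [ENNReal.coe_add, add_mul]
  exact add_le_add hr hr'

theorem Dominated.sum {J : κ → ℝ → ENNReal} (h : ∀ k ∈ s, Dominated (J k) φ) :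
    Dominated (∑ k ∈ s, J k) φ :=
  Finset.sum_induction J (Dominated · φ) (fun _ _ => .add) (.of_le fun _ => zero_le) h

theorem Dominated.sum_congr {J φ : κ → ℝ → ENNReal} (h : ∀ k ∈ s, Dominated (J k) (φ k)) :
    Dominated (∑ k ∈ s, J k) (∑ k ∈ s, φ k) :=
  .sum fun k hk => (h k hk).trans
    (.of_le (Finset.single_le_sum (f := φ) (fun _ _ => zero_le) hk))

theorem Dominated.comp (h : Dominated J φ) {k : ℝ → ℝ} (hk : Tendsto k (𝓝[>] 0) (𝓝[>] 0)) :
    Dominated (J ∘ k) (φ ∘ k) :=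
  h.imp fun _ hC => hk.eventually hC

theorem Dominated.ofReal {f g : ℝ → ℝ} {C : ℝ} (hC : 0 ≤ C)
    (h : ∀ᶠ r in 𝓝[>] (0 : ℝ), f r ≤ C * g r) :
    Dominated (fun r => ENNReal.ofReal (f r)) fun r => ENNReal.ofReal (g r) := by
  refine ⟨C.toNNReal, ?_⟩
  filter_upwards [h] with r hr
  exact (ENNReal.ofReal_le_ofReal hr).trans_eq (ENNReal.ofReal_mul hC)

theorem Comparable.trans (h : Comparable J φ) (h' : Comparable φ ψ) : Comparable J ψ :=
  ⟨h.1.trans h'.1, h'.2.trans h.2⟩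

theorem Comparable.of_eventuallyEq (h : J =ᶠ[𝓝[>] 0] φ) : Comparable J φ :=
  ⟨.of_eventually_le h.le, .of_eventually_le h.symm.le⟩

theorem Comparable.refl (J : ℝ → ENNReal) : Comparable J J := .of_eventuallyEq .rfl

theorem Comparable.comp (h : Comparable J φ) {k : ℝ → ℝ} (hk : Tendsto k (𝓝[>] 0) (𝓝[>] 0)) :
    Comparable (J ∘ k) (φ ∘ k) :=
  ⟨h.1.comp hk, h.2.comp hk⟩

theorem Comparable.sum_congr {J φ : κ → ℝ → ENNReal} (h : ∀ k ∈ s, Comparable (J k) (φ k)) :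
    Comparable (∑ k ∈ s, J k) (∑ k ∈ s, φ k) :=
  ⟨.sum_congr fun k hk => (h k hk).1, .sum_congr fun k hk => (h k hk).2⟩

theorem Comparable.const_mul {C : ENNReal} (hC0 : C ≠ 0) (hC : C ≠ ⊤) (J : ℝ → ENNReal) :
    Comparable (fun r => C * J r) J := by
  refine ⟨⟨C.toNNReal, .of_forall fun r => ?_⟩, ⟨C⁻¹.toNNReal, .of_forall fun r => ?_⟩⟩
  · simp only [ENNReal.coe_toNNReal hC, le_refl]
  · rw [ENNReal.coe_toNNReal (ENNReal.inv_ne_top.2 hC0), ← mul_assoc,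
      ENNReal.inv_mul_cancel hC0 hC, one_mul]

theorem Comparable.ofReal_const_mul {f : ℝ → ℝ} {C : ℝ} (hC : 0 < C) :
    Comparable (fun r => ENNReal.ofReal (C * f r)) fun r => ENNReal.ofReal (f r) := by
  simpa only [ENNReal.ofReal_mul hC.le] using
    Comparable.const_mul (ENNReal.ofReal_pos.2 hC).ne' ENNReal.ofReal_ne_top _

theorem Dominated.add_of_comparable (h : Dominated φ ψ) : Comparable (φ + ψ) ψ :=
  ⟨h.add (.of_le le_rfl), .of_le le_add_self⟩

end Dominated

/-- The function `r ↦ r ^ δ |log r| ^ e`. -/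
def powLog (δ : ℝ) (e : ℕ) (r : ℝ) : ENNReal := ENNReal.ofReal (r ^ δ * |Real.log r| ^ e)

/-- The possible orders of magnitude: `0`, `∞` and `r ^ δ |log r| ^ e` with `δ > 0` and
`e ∈ {0, 1}`. -/
def IsGauge (φ : ℝ → ENNReal) : Prop :=
  φ = 0 ∨ φ = ⊤ ∨ ∃ (δ : ℝ) (e : ℕ), 0 < δ ∧ e ≤ 1 ∧ φ = powLog δ e

section Gauge

variable {κ : Type*} {s : Finset κ} {φ ψ : ℝ → ENNReal}

theorem eventually_lt_nhdsGT_zero {ε : ℝ} (hε : 0 < ε) : ∀ᶠ r in 𝓝[>] (0 : ℝ), r < ε :=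
  nhdsWithin_le_nhds (Iio_mem_nhds hε)

theorem eventually_forall_mem_Ioo {P : ℝ → Prop} (h : ∀ᶠ s in 𝓝[>] (0 : ℝ), P s) :
    ∀ᶠ r in 𝓝[>] (0 : ℝ), ∀ s ∈ Ioo 0 r, P s := by
  obtain ⟨ε, hε, hlt⟩ := mem_nhdsGT_iff_exists_Ioo_subset.1 h
  filter_upwards [eventually_lt_nhdsGT_zero hε] with r hr s hs
  exact hlt ⟨hs.1, hs.2.trans hr⟩

theorem eventually_le_abs_log (C : ℝ) : ∀ᶠ r in 𝓝[>] (0 : ℝ), C ≤ |Real.log r| :=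
  (tendsto_abs_atBot_atTop.comp Real.tendsto_log_nhdsGT_zero).eventually_ge_atTop C

theorem tendsto_rpow_nhdsGT_zero {κ : ℝ} (hκ : 0 < κ) :
    Tendsto (fun r : ℝ => r ^ κ) (𝓝[>] 0) (𝓝[>] 0) := by
  refine tendsto_nhdsWithin_of_tendsto_nhds_of_eventually_within _ ?_ ?_
  · have h := (Real.continuousAt_rpow_const 0 κ (.inr hκ.le)).tendsto
    rw [Real.zero_rpow hκ.ne'] at h
    exact h.mono_left nhdsWithin_le_nhds
  · filter_upwards [self_mem_nhdsWithin] with r hr using Real.rpow_pos_of_pos hr _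

theorem dominated_powLog_of_lt {δ δ' : ℝ} (h : δ < δ') (e : ℕ) {e' : ℕ} (he' : e' ≤ 1) :
    Dominated (powLog δ' e') (powLog δ e) := by
  have hlog : ∀ᶠ r in 𝓝[>] (0 : ℝ), |Real.log r * r ^ (δ' - δ)| < 1 := by
    have hlim := (tendsto_log_mul_rpow_nhdsGT_zero (sub_pos.2 h)).abs
    rw [abs_zero] at hlim
    exact hlim.eventually_lt_const one_pos
  refine .of_eventually_le ?_
  filter_upwards [self_mem_nhdsWithin, hlog, eventually_le_abs_log 1] with r (hr : 0 < r) hr' hr1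
  refine ENNReal.ofReal_le_ofReal ?_
  have hpow := Real.rpow_pos_of_pos hr (δ' - δ)
  rw [abs_mul, abs_of_pos hpow] at hr'
  calc r ^ δ' * |Real.log r| ^ e' = r ^ δ * (|Real.log r| ^ e' * r ^ (δ' - δ)) := by
        rw [mul_comm (_ ^ e'), ← mul_assoc, ← Real.rpow_add hr, add_sub_cancel]
    _ ≤ r ^ δ * (|Real.log r| ^ 1 * r ^ (δ' - δ)) := by gcongr
    _ ≤ r ^ δ * |Real.log r| ^ e := by
        rw [pow_one]
        gcongr
        exact hr'.le.trans (one_le_pow₀ hr1)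

theorem dominated_powLog_of_le (δ : ℝ) {e e' : ℕ} (h : e' ≤ e) :
    Dominated (powLog δ e') (powLog δ e) := by
  refine .of_eventually_le ?_
  filter_upwards [self_mem_nhdsWithin, eventually_le_abs_log 1] with r (hr : 0 < r) hr1
  unfold powLog
  gcongr

theorem IsGauge.total (hφ : IsGauge φ) (hψ : IsGauge ψ) : Dominated φ ψ ∨ Dominated ψ φ := by
  rcases hφ with rfl | rfl | ⟨δ, e, -, he, rfl⟩
  · exact .inl (.of_le bot_le)
  · exact .inr (.of_le le_top)
  rcases hψ with rfl | rfl | ⟨δ', e', -, he', rfl⟩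
  · exact .inr (.of_le bot_le)
  · exact .inl (.of_le le_top)
  rcases lt_trichotomy δ δ' with h | rfl | h
  · exact .inr (dominated_powLog_of_lt h e he')
  · exact (le_total e e').imp (dominated_powLog_of_le δ) (dominated_powLog_of_le δ)
  · exact .inl (dominated_powLog_of_lt h e' he)

theorem exists_isGauge_add (hφ : IsGauge φ) (hψ : IsGauge ψ) :
    ∃ χ, IsGauge χ ∧ Comparable (φ + ψ) χ := by
  rcases hφ.total hψ with h | h
  · exact ⟨ψ, hψ, h.add_of_comparable⟩
  · exact ⟨φ, hφ, add_comm φ ψ ▸ h.add_of_comparable⟩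

theorem exists_isGauge_sum {φ : κ → ℝ → ENNReal} (h : ∀ k ∈ s, IsGauge (φ k)) :
    ∃ χ, IsGauge χ ∧ Comparable (∑ k ∈ s, φ k) χ := by
  refine Finset.sum_induction φ (fun J => ∃ χ, IsGauge χ ∧ Comparable J χ) ?_ ?_
    fun k hk => ⟨φ k, h k hk, .refl _⟩
  · rintro J J' ⟨χ, hχ, hJ⟩ ⟨χ', hχ', hJ'⟩
    obtain ⟨ω, hω, hadd⟩ := exists_isGauge_add hχ hχ'
    refine ⟨ω, hω, Comparable.trans ?_ hadd⟩
    simpa using Comparable.sum_congr (s := Finset.univ) (J := ![J, J']) (φ := ![χ, χ'])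
      (by simpa [Fin.forall_fin_two] using ⟨hJ, hJ'⟩)
  · exact ⟨0, .inl rfl, .refl _⟩

theorem powLog_rpow {κ r : ℝ} (hκ : 0 < κ) (hr : 0 < r) (δ : ℝ) (e : ℕ) :
    powLog δ e (r ^ κ) = ENNReal.ofReal (κ ^ e * (r ^ (κ * δ) * |Real.log r| ^ e)) := by
  rw [powLog, ← Real.rpow_mul hr.le, Real.log_rpow hr, abs_mul, abs_of_pos hκ, mul_pow]
  ring_nf

theorem IsGauge.comp_rpow (hφ : IsGauge φ) {κ : ℝ} (hκ : 0 < κ) :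
    ∃ ψ, IsGauge ψ ∧ Comparable (φ ∘ fun r => r ^ κ) ψ := by
  rcases hφ with rfl | rfl | ⟨δ, e, hδ, he, rfl⟩
  · exact ⟨0, .inl rfl, .refl _⟩
  · exact ⟨⊤, .inr (.inl rfl), .refl _⟩
  refine ⟨powLog (κ * δ) e, .inr (.inr ⟨κ * δ, e, mul_pos hκ hδ, he, rfl⟩), ?_⟩
  refine (Comparable.of_eventuallyEq ?_).trans (Comparable.ofReal_const_mul (pow_pos hκ e))
  filter_upwards [self_mem_nhdsWithin] with r hr using powLog_rpow hκ hr δ e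

end Gauge

/-- For all small `c > 0` the function `J c` has the order of magnitude of a gauge which does not
depend on `c`. -/
def HasGauge (J : ℝ → ℝ → ENNReal) : Prop :=
  ∃ φ, IsGauge φ ∧ ∀ᶠ c in 𝓝[>] (0 : ℝ), Comparable (J c) φ

section HasGauge

variable {J J' : ℝ → ℝ → ENNReal}

theorem HasGauge.of_comparable (h : HasGauge J)
    (hJ : ∀ᶠ c in 𝓝[>] (0 : ℝ), Comparable (J' c) (J c)) : HasGauge J' := by
  obtain ⟨φ, hφ, hJφ⟩ := h
  exact ⟨φ, hφ, (hJ.and hJφ).mono fun c hc => hc.1.trans hc.2⟩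

theorem HasGauge.of_eventuallyEq (h : HasGauge J)
    (hJ : ∀ᶠ c in 𝓝[>] (0 : ℝ), J' c =ᶠ[𝓝[>] 0] J c) : HasGauge J' :=
  h.of_comparable (hJ.mono fun _ hc => .of_eventuallyEq hc)

theorem HasGauge.sum {κ : Type*} {s : Finset κ} {J : κ → ℝ → ℝ → ENNReal}
    (h : ∀ k ∈ s, HasGauge (J k)) : HasGauge (∑ k ∈ s, J k) := by
  choose! φ hφ hJ using h
  obtain ⟨χ, hχ, hsum⟩ := exists_isGauge_sum hφ
  refine ⟨χ, hχ, ?_⟩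
  filter_upwards [(eventually_all_finset s).2 hJ] with c hc
  rw [Finset.sum_apply]
  exact (Comparable.sum_congr hc).trans hsum

theorem HasGauge.comp_rpow (h : HasGauge J) {κ : ℝ} (hκ : 0 < κ) :
    HasGauge fun c r => J c (r ^ κ) := by
  obtain ⟨φ, hφ, hJ⟩ := h
  obtain ⟨ψ, hψ, hφψ⟩ := hφ.comp_rpow hκ
  exact ⟨ψ, hψ, hJ.mono fun c hc => (hc.comp (tendsto_rpow_nhdsGT_zero hκ)).trans hφψ⟩

theorem tendsto_const_mul_nhdsGT_zero {C : ℝ} (hC : 0 < C) :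
    Tendsto (fun c : ℝ => C * c) (𝓝[>] 0) (𝓝[>] 0) := by
  refine tendsto_nhdsWithin_of_tendsto_nhds_of_eventually_within _ ?_ ?_
  · exact (Continuous.tendsto' (by fun_prop) 0 0 (mul_zero C)).mono_left nhdsWithin_le_nhds
  · filter_upwards [self_mem_nhdsWithin] with c hc using mul_pos hC hc

theorem HasGauge.of_sandwich (h : HasGauge J) {a b : ℝ} (ha : 0 < a) (hb : 0 < b)
    (hlow : ∀ᶠ c in 𝓝[>] (0 : ℝ), Dominated (J (a * c)) (J' c))
    (hup : ∀ᶠ c in 𝓝[>] (0 : ℝ), Dominated (J' c) (J (b * c))) : HasGauge J' := by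
  obtain ⟨φ, hφ, hJ⟩ := h
  refine ⟨φ, hφ, ?_⟩
  filter_upwards [hlow, hup, (tendsto_const_mul_nhdsGT_zero ha).eventually hJ,
    (tendsto_const_mul_nhdsGT_zero hb).eventually hJ] with c hac hbc hJa hJb
  exact ⟨hbc.trans hJb.1, hJa.2.trans hac⟩

end HasGauge

/-! ### Integrals over boxes and changes of variables -/

theorem setLIntegral_biUnion_finset_le {α κ : Type*} [MeasurableSpace α] (μ : Measure α)
    (s : Finset κ) (w : α → ENNReal) (A : κ → Set α) :
    ∫⁻ p in ⋃ k ∈ s, A k, w p ∂μ ≤ ∑ k ∈ s, ∫⁻ p in A k, w p ∂μ := by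
  classical
  induction s using Finset.induction_on with
  | empty => simp
  | insert k s hk ih =>
    rw [Finset.set_biUnion_insert, Finset.sum_insert hk]
    exact (lintegral_union_le _ _ _).trans (add_le_add le_rfl ih)

theorem comparable_setLIntegral_sum {α κ : Type*} [MeasurableSpace α] {μ : Measure α}
    {s : Finset κ} {w : α → ENNReal} {A : κ → ℝ → Set α} {B : ℝ → Set α}
    (hAB : ∀ k ∈ s, ∀ᶠ r in 𝓝[>] (0 : ℝ), A k r ⊆ B r)
    (hBA : ∀ᶠ r in 𝓝[>] (0 : ℝ), μ (B r \ ⋃ k ∈ s, A k r) = 0) :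
    Comparable (fun r => ∫⁻ p in B r, w p ∂μ) (∑ k ∈ s, fun r => ∫⁻ p in A k r, w p ∂μ) := by
  constructor
  · refine .of_eventually_le ?_
    filter_upwards [hBA] with r hr
    rw [Finset.sum_apply]
    exact (lintegral_mono' (Measure.restrict_mono_ae (ae_le_set.2 hr)) le_rfl).trans
      (setLIntegral_biUnion_finset_le μ s w _)
  · refine .sum fun k hk => .of_eventually_le ?_
    filter_upwards [hAB k hk] with r hr using lintegral_mono_set hr

/-- The integral of `w` over the one-sided box `(0, r) × (-c, c)`. -/
def boxIntegral (w : ℝ × ℝ → ENNReal) (c r : ℝ) : ENNReal :=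
  ∫⁻ p in Ioo 0 r ×ˢ Ioo (-c) c, w p

theorem eventually_box_subset {U : Set (ℝ × ℝ)} (hU : U ∈ 𝓝 0) :
    ∀ᶠ c in 𝓝[>] (0 : ℝ), ∀ᶠ r in 𝓝[>] (0 : ℝ), Ioo 0 r ×ˢ Ioo (-c) c ⊆ U := by
  obtain ⟨ε, hε, hball⟩ := Metric.mem_nhds_iff.1 hU
  filter_upwards [eventually_lt_nhdsGT_zero hε] with c hc
  filter_upwards [eventually_lt_nhdsGT_zero hε] with r hr p hp
  refine hball ?_
  rw [mem_ball_zero_iff, Prod.norm_def, max_lt_iff, Real.norm_of_nonneg hp.1.1.le]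
  exact ⟨hp.1.2.trans hr, (abs_lt.2 hp.2).trans hc⟩

theorem HasGauge.congr_weight {w w' : ℝ × ℝ → ENNReal} (h : HasGauge (boxIntegral w))
    (hw : ∀ᶠ p in 𝓝 (0 : ℝ × ℝ), 0 < p.1 → w p = w' p) : HasGauge (boxIntegral w') := by
  refine h.of_eventuallyEq ?_
  filter_upwards [eventually_box_subset hw] with c hc
  filter_upwards [hc] with r hr
  exact setLIntegral_congr_fun (measurableSet_Ioo.prod measurableSet_Ioo)
    fun p hp => (hr hp hp.1.1).symm

theorem hasFDerivAt_fiberwise_affine {a b k : ℝ → ℝ} {a' b' k' : ℝ} {p : ℝ × ℝ}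
    (ha : HasDerivAt a a' p.1) (hb : HasDerivAt b b' p.1) (hk : HasDerivAt k k' p.1) :
    HasFDerivAt (fun p : ℝ × ℝ => (a p.1, b p.1 * p.2 + k p.1))
      (Matrix.toLin (Module.Basis.finTwoProd ℝ) (Module.Basis.finTwoProd ℝ)
        !![a', 0; b' * p.2 + k', b p.1]).toContinuousLinearMap p := by
  have hfst := hasFDerivAt_fst (𝕜 := ℝ) (p := p)
  refine ((ha.comp_hasFDerivAt p hfst).prodMk (((hb.comp_hasFDerivAt p hfst).mul
    hasFDerivAt_snd).add (hk.comp_hasFDerivAt p hfst))).congr_fderiv ?_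
  rw [Matrix.toLin_finTwoProd_toContinuousLinearMap]
  ext <;> simp [mul_comm]

theorem setLIntegral_image_fiberwise_affine {a b k a' : ℝ → ℝ} {I : Set ℝ} {S : Set (ℝ × ℝ)}
    (hS : MeasurableSet S) (hSI : MapsTo Prod.fst S I)
    (ha : ∀ s ∈ I, HasDerivAt a (a' s) s) (hb : ∀ s ∈ I, DifferentiableAt ℝ b s)
    (hk : ∀ s ∈ I, DifferentiableAt ℝ k s) (hinj : InjOn a I) (hb0 : ∀ s ∈ I, b s ≠ 0)
    (w : ℝ × ℝ → ENNReal) :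
    ∫⁻ p in (fun p : ℝ × ℝ => (a p.1, b p.1 * p.2 + k p.1)) '' S, w p =
      ∫⁻ p in S, ENNReal.ofReal |a' p.1 * b p.1| * w (a p.1, b p.1 * p.2 + k p.1) := by
  have hinjS : InjOn (fun p : ℝ × ℝ => (a p.1, b p.1 * p.2 + k p.1)) S := by
    intro p hp q hq hpq
    obtain ⟨hfst, hsnd⟩ := Prod.mk.inj hpq
    have hpq1 := hinj (hSI hp) (hSI hq) hfst
    rw [hpq1] at hsnd
    exact Prod.ext hpq1 (mul_left_cancel₀ (hb0 _ (hSI hq)) (add_right_cancel hsnd))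
  rw [lintegral_image_eq_lintegral_abs_det_fderiv_mul volume hS (fun p hp =>
    (hasFDerivAt_fiberwise_affine (ha _ (hSI hp)) (hb _ (hSI hp)).hasDerivAt
      (hk _ (hSI hp)).hasDerivAt).hasFDerivWithinAt) hinjS]
  simp only [ContinuousLinearMap.det, LinearMap.coe_toContinuousLinearMap,
    LinearMap.det_toLin, Matrix.det_fin_two_of, zero_mul, sub_zero]

theorem boxIntegral_comp_shear {φ : ℝ → ℝ} {r : ℝ} (hφ : ∀ s ∈ Ioo 0 r, DifferentiableAt ℝ φ s)
    (w : ℝ × ℝ → ENNReal) (c : ℝ) :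
    boxIntegral (w ∘ shear φ) c r = ∫⁻ p in shear φ '' (Ioo 0 r ×ˢ Ioo (-c) c), w p := by
  have hcov := setLIntegral_image_fiberwise_affine (a := fun s => s) (b := fun _ => 1)
    (a' := fun _ => 1) (measurableSet_Ioo.prod measurableSet_Ioo) (S := Ioo 0 r ×ˢ Ioo (-c) c)
    (fun p hp => hp.1) (fun s _ => hasDerivAt_id s) (fun s _ => differentiableAt_const 1) hφ
    (injOn_id _) (fun _ _ => one_ne_zero) w
  simp only [one_mul, mul_one, abs_one, ENNReal.ofReal_one] at hcov
  exact hcov.symm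

theorem image_shear_box_subset {φ : ℝ → ℝ} {c r : ℝ} (hφ : ∀ s ∈ Ioo 0 r, |φ s| < c) (c' : ℝ) :
    shear φ '' (Ioo 0 r ×ˢ Ioo (-c') c') ⊆ Ioo 0 r ×ˢ Ioo (-(c' + c)) (c' + c) := by
  rintro _ ⟨p, hp, rfl⟩
  exact ⟨hp.1, abs_lt.1 ((abs_add_le _ _).trans_lt (add_lt_add (abs_lt.2 hp.2) (hφ _ hp.1)))⟩

theorem box_subset_image_shear {φ : ℝ → ℝ} {c r : ℝ} (hφ : ∀ s ∈ Ioo 0 r, |φ s| < c) (c' : ℝ) :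
    Ioo 0 r ×ˢ Ioo (-c') c' ⊆ shear φ '' (Ioo 0 r ×ˢ Ioo (-(c' + c)) (c' + c)) :=
  fun p hp => ⟨(p.1, p.2 - φ p.1),
    ⟨hp.1, abs_lt.1 ((abs_sub _ _).trans_lt (add_lt_add (abs_lt.2 hp.2) (hφ _ hp.1)))⟩,
    Prod.ext rfl (sub_add_cancel _ _)⟩

theorem HasGauge.of_comp_shear {w : ℝ × ℝ → ENNReal} {φ : ℝ → ℝ} (hφ : AnalyticAt ℝ φ 0)
    (hφ0 : φ 0 = 0) (h : HasGauge (boxIntegral (w ∘ shear φ))) : HasGauge (boxIntegral w) := by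
  have hsmall : ∀ c > 0, ∀ᶠ r in 𝓝[>] (0 : ℝ), ∀ s ∈ Ioo 0 r,
      |φ s| < c ∧ DifferentiableAt ℝ φ s := by
    intro c hc
    have hφc : ∀ᶠ s in 𝓝 (0 : ℝ), |φ s| < c :=
      (hφ.continuousAt.abs.eventually_lt_const (by simpa [hφ0] using hc))
    exact eventually_forall_mem_Ioo (nhdsWithin_le_nhds
      (hφc.and (hφ.eventually_analyticAt.mono fun _ h => h.differentiableAt)))
  refine h.of_sandwich (a := 1 / 2) (b := 2) (by positivity) (by positivity) ?_ ?_ <;>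
    filter_upwards [self_mem_nhdsWithin] with c (hc : 0 < c) <;>
    refine .of_eventually_le ?_
  · filter_upwards [hsmall (c / 2) (half_pos hc)] with r hr
    rw [boxIntegral_comp_shear fun s hs => (hr s hs).2]
    refine lintegral_mono_set ((image_shear_box_subset (fun s hs => (hr s hs).1) _).trans ?_)
    rw [show 1 / 2 * c + c / 2 = c by ring]
  · filter_upwards [hsmall c hc] with r hr
    rw [boxIntegral_comp_shear fun s hs => (hr s hs).2, two_mul]
    exact lintegral_mono_set (box_subset_image_shear (fun s hs => (hr s hs).1) c)

/-- The region `{0 < s < r, |y - u₀ s ^ θ| < c s ^ θ}`. For `θ = p / Q` it is the image of a box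
`(0, r ^ (1 / Q)) × (-c, c)` under the weighted blow-up `blowUp Q p u₀`. -/
def blowRegion (θ u₀ c r : ℝ) : Set (ℝ × ℝ) :=
  {q | q.1 ∈ Ioo 0 r ∧ |q.2 - u₀ * q.1 ^ θ| < c * q.1 ^ θ}

/-- The weighted blow-up `(σ, u) ↦ (σ ^ Q, σ ^ p (u₀ + u))`, in the chart centred at `u₀`. -/
def blowUp (Q p : ℕ) (u₀ : ℝ) (z : ℝ × ℝ) : ℝ × ℝ := (z.1 ^ Q, z.1 ^ p * (u₀ + z.2))

/-- The pullback of `w` under the weighted blow-up, including the Jacobian. -/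
def blowWeight (w : ℝ × ℝ → ENNReal) (Q p : ℕ) (u₀ : ℝ) (z : ℝ × ℝ) : ENNReal :=
  ENNReal.ofReal (Q * z.1 ^ (Q - 1) * z.1 ^ p) * w (blowUp Q p u₀ z)

section BlowUp

variable {Q : ℕ} {p : ℕ} {u₀ c ρ : ℝ}

theorem pow_rpow_div {σ : ℝ} (hσ : 0 ≤ σ) (hQ : Q ≠ 0) (p : ℕ) :
    (σ ^ Q) ^ ((p : ℝ) / Q) = σ ^ p := by
  rw [← Real.rpow_natCast, ← Real.rpow_mul hσ, mul_div_cancel₀ _ (Nat.cast_ne_zero.2 hQ),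
    Real.rpow_natCast]

theorem mem_blowRegion_pow {σ y : ℝ} (hσ : 0 < σ) (hρ : 0 ≤ ρ) (hQ : Q ≠ 0) :
    (σ ^ Q, y) ∈ blowRegion (p / Q) u₀ c (ρ ^ Q) ↔ σ < ρ ∧ |y - u₀ * σ ^ p| < c * σ ^ p := by
  simp only [blowRegion, mem_ofPred_eq, mem_Ioo, pow_rpow_div hσ.le hQ,
    pow_lt_pow_iff_left₀ hσ.le hρ hQ, pow_pos hσ Q, true_and]

theorem image_blowUp_box (hρ : 0 ≤ ρ) (hQ : Q ≠ 0) :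
    (fun q : ℝ × ℝ => (q.1 ^ Q, q.1 ^ p * q.2 + u₀ * q.1 ^ p)) '' (Ioo 0 ρ ×ˢ Ioo (-c) c) =
      blowRegion (p / Q) u₀ c (ρ ^ Q) := by
  ext ⟨x, y⟩
  constructor
  · rintro ⟨⟨σ, u⟩, ⟨⟨hσ, hσρ⟩, hu⟩, hxy⟩
    rw [← hxy, mem_blowRegion_pow hσ hρ hQ]
    have hσp : 0 < σ ^ p := pow_pos hσ p
    refine ⟨hσρ, ?_⟩
    rw [add_sub_cancel_right, abs_mul, abs_of_pos hσp, mul_comm]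
    exact mul_lt_mul_of_pos_right (abs_lt.2 hu) hσp
  · intro hxy
    obtain ⟨σ, hσ, rfl⟩ : ∃ σ > 0, σ ^ Q = x :=
      ⟨x ^ (Q⁻¹ : ℝ), Real.rpow_pos_of_pos hxy.1.1 _, Real.rpow_inv_natCast_pow hxy.1.1.le hQ⟩
    obtain ⟨hσρ, hy⟩ := (mem_blowRegion_pow hσ hρ hQ).1 hxy
    have hσp : 0 < σ ^ p := pow_pos hσ p
    refine ⟨(σ, (y - u₀ * σ ^ p) / σ ^ p), ⟨⟨hσ, hσρ⟩, abs_lt.1 ?_⟩, Prod.ext rfl ?_⟩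
    · rwa [abs_div, abs_of_pos hσp, div_lt_iff₀ hσp]
    · change σ ^ p * ((y - u₀ * σ ^ p) / σ ^ p) + u₀ * σ ^ p = y
      rw [mul_div_cancel₀ _ hσp.ne', sub_add_cancel]

theorem setLIntegral_blowRegion (hρ : 0 ≤ ρ) (hQ : Q ≠ 0) (w : ℝ × ℝ → ENNReal) :
    ∫⁻ q in blowRegion (p / Q) u₀ c (ρ ^ Q), w q = boxIntegral (blowWeight w Q p u₀) c ρ := by
  have hS : MeasurableSet (Ioo 0 ρ ×ˢ Ioo (-c) c) := measurableSet_Ioo.prod measurableSet_Ioo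
  rw [← image_blowUp_box hρ hQ, boxIntegral, setLIntegral_image_fiberwise_affine
    (k := fun s => u₀ * s ^ p) hS (fun q hq => hq.1) (fun s _ => hasDerivAt_pow Q s)
    (fun s _ => differentiableAt_pow p) (fun s _ => (differentiableAt_pow p).const_mul u₀)
    (fun x hx y hy => (pow_left_inj₀ hx.1.le hy.1.le hQ).1) (fun s hs => (pow_pos hs.1 p).ne')]
  refine setLIntegral_congr_fun hS fun z hz => ?_
  have hz1 : 0 < z.1 := hz.1.1
  have hsnd : z.1 ^ p * z.2 + u₀ * z.1 ^ p = z.1 ^ p * (u₀ + z.2) := by ring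
  simp only [blowWeight, blowUp, hsnd]
  rw [abs_of_nonneg (by positivity)]

theorem HasGauge.setLIntegral_blowRegion {w : ℝ × ℝ → ENNReal} (hQ : Q ≠ 0)
    (h : HasGauge (boxIntegral (blowWeight w Q p u₀))) :
    HasGauge fun c r => ∫⁻ q in blowRegion (p / Q) u₀ c r, w q := by
  refine (h.comp_rpow (κ := (Q : ℝ)⁻¹) (by positivity)).of_eventuallyEq (.of_forall fun c => ?_)
  filter_upwards [self_mem_nhdsWithin] with r (hr : 0 < r)
  rw [← _root_.setLIntegral_blowRegion (by positivity) hQ w, Real.rpow_inv_natCast_pow hr.le hQ]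

end BlowUp

/-! ### One-dimensional integrals -/

theorem Comparable.ofReal_of_tendsto_div {f g : ℝ → ℝ} {L : ℝ} (hL : 0 < L)
    (hg : ∀ᶠ r in 𝓝[>] (0 : ℝ), 0 < g r)
    (h : Tendsto (fun r => f r / g r) (𝓝[>] 0) (𝓝 L)) :
    Comparable (fun r => ENNReal.ofReal (f r)) fun r => ENNReal.ofReal (g r) := by
  constructor
  · refine .ofReal (C := 2 * L) (by positivity) ?_
    filter_upwards [hg, h.eventually_lt_const (by linarith : L < 2 * L)] with r hr hlt
    exact ((div_lt_iff₀ hr).1 hlt).le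
  · refine .ofReal (C := 2 / L) (by positivity) ?_
    filter_upwards [hg, h.eventually_const_lt (half_lt_self hL)] with r hr hlt
    rw [lt_div_iff₀ hr] at hlt
    rw [div_mul_eq_mul_div, le_div_iff₀ hL]
    linarith

theorem powLog_zero (δ r : ℝ) : powLog δ 0 r = ENNReal.ofReal (r ^ δ) := by
  rw [powLog, pow_zero, mul_one]

section Scaling

variable {M : ℝ}

theorem tendsto_log_const_mul_div_log (hM : 0 < M) :
    Tendsto (fun r => Real.log (M * r) / Real.log r) (𝓝[>] 0) (𝓝 1) := by
  have hlim := (Real.tendsto_log_nhdsGT_zero.const_div_atBot (Real.log M)).add_const 1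
  rw [zero_add] at hlim
  refine hlim.congr' ?_
  filter_upwards [self_mem_nhdsWithin, eventually_lt_nhdsGT_zero one_pos] with r (hr : 0 < r) hr1
  rw [Real.log_mul hM.ne' hr.ne', add_div, div_self (Real.log_neg hr hr1).ne]

theorem comparable_powLog_const_mul (hM : 0 < M) (κ : ℝ) (e : ℕ) :
    Comparable (powLog κ e ∘ fun r => M * r) (powLog κ e) := by
  have hlim := (((tendsto_log_const_mul_div_log hM).abs.pow e).const_mul (M ^ κ))
  rw [abs_one, one_pow, mul_one] at hlim
  refine .ofReal_of_tendsto_div (Real.rpow_pos_of_pos hM κ) ?_ (hlim.congr' ?_)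
  · filter_upwards [self_mem_nhdsWithin, eventually_le_abs_log 1] with r (hr : 0 < r) hlog
    have := Real.rpow_pos_of_pos hr κ
    positivity
  · filter_upwards [self_mem_nhdsWithin] with r (hr : 0 < r)
    have := (Real.rpow_pos_of_pos hr κ).ne'
    rw [Real.mul_rpow hM.le hr.le, abs_div, div_pow]
    field_simp

theorem comparable_powLog_const_mul_rpow (hM : 0 < M) {θ : ℝ} (hθ : 0 < θ) (κ : ℝ) (e : ℕ) :
    Comparable (powLog κ e ∘ fun r => M * r ^ θ) (powLog (θ * κ) e) := by
  refine ((comparable_powLog_const_mul hM κ e).comp (tendsto_rpow_nhdsGT_zero hθ)).trans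
    ((Comparable.of_eventuallyEq ?_).trans (Comparable.ofReal_const_mul (pow_pos hθ e)))
  filter_upwards [self_mem_nhdsWithin] with r hr using powLog_rpow hθ hr κ e

end Scaling

theorem Dominated.setLIntegral {J φ : ℝ → ENNReal} (h : Dominated J φ) :
    Dominated (fun r => ∫⁻ s in Ioo 0 r, J s) fun r => ∫⁻ s in Ioo 0 r, φ s := by
  obtain ⟨C, hC⟩ := h
  refine ⟨C, ?_⟩
  filter_upwards [eventually_forall_mem_Ioo hC] with r hr
  rw [← lintegral_const_mul' _ _ ENNReal.coe_ne_top]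
  exact setLIntegral_mono' measurableSet_Ioo hr

theorem Comparable.setLIntegral {J φ : ℝ → ENNReal} (h : Comparable J φ) :
    Comparable (fun r => ∫⁻ s in Ioo 0 r, J s) fun r => ∫⁻ s in Ioo 0 r, φ s :=
  ⟨h.1.setLIntegral, h.2.setLIntegral⟩

theorem Dominated.mul_left {J φ : ℝ → ENNReal} (h : Dominated J φ) (u : ℝ → ENNReal) :
    Dominated (u * J) (u * φ) := by
  obtain ⟨C, hC⟩ := h
  refine ⟨C, ?_⟩
  filter_upwards [hC] with r hr
  calc u r * J r ≤ u r * (C * φ r) := by gcongr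
    _ = C * (u r * φ r) := mul_left_comm _ _ _

theorem Comparable.mul_left {J φ : ℝ → ENNReal} (h : Comparable J φ) (u : ℝ → ENNReal) :
    Comparable (u * J) (u * φ) :=
  ⟨h.1.mul_left u, h.2.mul_left u⟩

theorem setLIntegral_Ioo_ofReal_of_nonneg {f : ℝ → ℝ} {a b : ℝ} (hab : a ≤ b)
    (hf : IntervalIntegrable f volume a b) (h0 : ∀ x ∈ Ioo a b, 0 ≤ f x) :
    ∫⁻ x in Ioo a b, ENNReal.ofReal (f x) = ENNReal.ofReal (∫ x in a..b, f x) := by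
  rw [intervalIntegral.integral_of_le hab, integral_Ioc_eq_integral_Ioo,
    ofReal_integral_eq_lintegral_ofReal]
  · exact (intervalIntegrable_iff_integrableOn_Ioo_of_le hab).1 hf
  · exact (ae_restrict_iff' measurableSet_Ioo).2 (.of_forall h0)

section NearZero

variable {γ r : ℝ}

theorem setLIntegral_Ioo_zero_rpow (hγ : -1 < γ) (hr : 0 ≤ r) :
    ∫⁻ s in Ioo 0 r, ENNReal.ofReal (s ^ γ) = ENNReal.ofReal (r ^ (γ + 1) / (γ + 1)) := by
  rw [setLIntegral_Ioo_ofReal_of_nonneg hr (intervalIntegral.intervalIntegrable_rpow' hγ)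
    fun x hx => Real.rpow_nonneg hx.1.le _, integral_rpow (.inl hγ),
    Real.zero_rpow (by linarith), sub_zero]

theorem setLIntegral_Ioo_zero_rpow_eq_top (hγ : γ ≤ -1) (hr : 0 < r) :
    ∫⁻ s in Ioo 0 r, ENNReal.ofReal (s ^ γ) = ⊤ := by
  by_contra h
  rw [← ne_eq, lintegral_ofReal_ne_top_iff_integrable (by fun_prop)
    ((ae_restrict_iff' measurableSet_Ioo).2 (.of_forall fun x hx => Real.rpow_nonneg hx.1.le _))]
    at h
  exact hγ.not_gt ((intervalIntegral.integrableOn_Ioo_rpow_iff hr).1 h)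

theorem eventually_rpow_mul_abs_log_pow_le {η : ℝ} (hη : 0 < η) {e : ℕ} (he : e ≤ 1) :
    ∀ᶠ r in 𝓝[>] (0 : ℝ), ∀ s ∈ Ioo 0 r,
      s ^ η * |Real.log s| ^ e ≤ r ^ η * |Real.log r| ^ e := by
  filter_upwards [self_mem_nhdsWithin, eventually_lt_nhdsGT_zero one_pos,
    eventually_lt_nhdsGT_zero (inv_pos.2 (Real.exp_pos η⁻¹))] with r (hr : 0 < r) hr1 hrη s hs
  interval_cases e
  · simpa using Real.rpow_le_rpow hs.1.le hs.2.le hη.le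
  have hinv : ∀ x : ℝ, 0 < x → x < 1 →
      Real.log x⁻¹ / x⁻¹ ^ η = x ^ η * |Real.log x| ^ 1 := fun x hx hx1 => by
    rw [Real.log_inv, Real.inv_rpow hx.le, div_inv_eq_mul, pow_one,
      abs_of_neg (Real.log_neg hx hx1), mul_comm]
  have hmem : ∀ x : ℝ, 0 < x → x ≤ r → x⁻¹ ∈ Ici (Real.exp η⁻¹) := fun x hx hxr =>
    ((lt_inv_comm₀ (Real.exp_pos _) hx).2 (hxr.trans_lt hrη)).le
  rw [← hinv s hs.1 (hs.2.trans hr1), ← hinv r hr hr1]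
  exact Real.log_div_self_rpow_antitoneOn hη (hmem r hr le_rfl) (hmem s hs.1 hs.2.le)
    (inv_anti₀ hs.1 hs.2.le)

theorem dominated_setLIntegral_powLog (hγ : -1 < γ) {e : ℕ} (he : e ≤ 1) :
    Dominated (fun r => ∫⁻ s in Ioo 0 r, powLog γ e s) (powLog (γ + 1) e) := by
  set η := (γ + 1) / 2 with hη
  have hη0 : 0 < η := by linarith
  refine ⟨(1 / η).toNNReal, ?_⟩
  filter_upwards [self_mem_nhdsWithin, eventually_rpow_mul_abs_log_pow_le hη0 he]
    with r (hr : 0 < r) hmono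
  calc ∫⁻ s in Ioo 0 r, powLog γ e s
      ≤ ∫⁻ s in Ioo 0 r, powLog η e r * ENNReal.ofReal (s ^ (γ - η)) := by
        refine setLIntegral_mono' measurableSet_Ioo fun s hs => ?_
        have hs0 : 0 < s := hs.1
        rw [powLog, powLog, ← ENNReal.ofReal_mul (by positivity)]
        refine ENNReal.ofReal_le_ofReal ?_
        rw [← sub_add_cancel γ η, Real.rpow_add hs0, mul_assoc, mul_comm, add_sub_cancel_right]
        exact mul_le_mul_of_nonneg_right (hmono s hs) (by positivity)
    _ = powLog η e r * ENNReal.ofReal (r ^ η / η) := by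
        rw [lintegral_const_mul' _ _ (show powLog η e r ≠ ⊤ from ENNReal.ofReal_ne_top),
          setLIntegral_Ioo_zero_rpow (by linarith) hr.le, show γ - η + 1 = η by linarith]
    _ = (1 / η).toNNReal * powLog (γ + 1) e r := by
        rw [powLog, powLog, ← ENNReal.ofReal_mul (by positivity),
          ← ENNReal.ofReal, ← ENNReal.ofReal_mul (by positivity),
          show γ + 1 = η + η by linarith, Real.rpow_add hr]
        ring_nf

theorem powLog_dominated_setLIntegral (hγ : -1 < γ) (e : ℕ) :
    Dominated (powLog (γ + 1) e) fun r => ∫⁻ s in Ioo 0 r, powLog γ e s := by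
  have hγ' : 0 < γ + 1 := by linarith
  refine ⟨(γ + 1).toNNReal, ?_⟩
  filter_upwards [self_mem_nhdsWithin, eventually_lt_nhdsGT_zero one_pos] with r (hr : 0 < r) hr1
  calc powLog (γ + 1) e r
      = ENNReal.ofReal (γ + 1) * (ENNReal.ofReal (|Real.log r| ^ e) *
          ENNReal.ofReal (r ^ (γ + 1) / (γ + 1))) := by
        rw [powLog, ← ENNReal.ofReal_mul (by positivity), ← ENNReal.ofReal_mul (by positivity)]
        congr 1
        field_simp
    _ = ENNReal.ofReal (γ + 1) * ∫⁻ s in Ioo 0 r, ENNReal.ofReal (|Real.log r| ^ e) *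
          ENNReal.ofReal (s ^ γ) := by
        rw [lintegral_const_mul' _ _ ENNReal.ofReal_ne_top, setLIntegral_Ioo_zero_rpow hγ hr.le]
    _ ≤ ENNReal.ofReal (γ + 1) * ∫⁻ s in Ioo 0 r, powLog γ e s := by
        gcongr ENNReal.ofReal (γ + 1) * ?_
        refine setLIntegral_mono' measurableSet_Ioo fun s hs => ?_
        have hlog : |Real.log r| ≤ |Real.log s| := by
          rw [abs_of_neg (Real.log_neg hr hr1), abs_of_neg (Real.log_neg hs.1 (hs.2.trans hr1))]
          exact neg_le_neg (Real.log_le_log hs.1 hs.2.le)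
        have hs0 : 0 < s := hs.1
        rw [powLog, mul_comm, ← ENNReal.ofReal_mul (by positivity)]
        gcongr

theorem exists_isGauge_setLIntegral_powLog (γ : ℝ) {e : ℕ} (he : e ≤ 1) :
    ∃ φ, IsGauge φ ∧ Comparable (fun r => ∫⁻ s in Ioo 0 r, powLog γ e s) φ := by
  rcases le_or_gt γ (-1) with hγ | hγ
  · refine ⟨⊤, .inr (.inl rfl), .of_le le_top,
      (Dominated.of_eventually_le ?_).trans (dominated_powLog_of_le γ e.zero_le).setLIntegral⟩
    filter_upwards [self_mem_nhdsWithin] with r (hr : 0 < r)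
    simp only [powLog_zero, setLIntegral_Ioo_zero_rpow_eq_top hγ hr, le_top]
  · exact ⟨_, .inr (.inr ⟨γ + 1, e, by linarith, he, rfl⟩), dominated_setLIntegral_powLog hγ he,
      powLog_dominated_setLIntegral hγ e⟩

end NearZero

section AwayFromZero

variable {β l c : ℝ}

theorem setLIntegral_Ioo_rpow (hβ : β ≠ -1) (hl : 0 < l) (hlc : l ≤ c) :
    ∫⁻ y in Ioo l c, ENNReal.ofReal (y ^ β) =
      ENNReal.ofReal ((c ^ (β + 1) - l ^ (β + 1)) / (β + 1)) := by
  have h0 : (0 : ℝ) ∉ uIcc l c := notMem_uIcc_of_lt hl (hl.trans_le hlc)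
  rw [setLIntegral_Ioo_ofReal_of_nonneg hlc (intervalIntegral.intervalIntegrable_rpow (.inr h0))
    fun x hx => Real.rpow_nonneg (hl.trans hx.1).le _, integral_rpow (.inr ⟨hβ, h0⟩)]

theorem setLIntegral_Ioo_rpow_neg_one (hl : 0 < l) (hlc : l ≤ c) :
    ∫⁻ y in Ioo l c, ENNReal.ofReal (y ^ (-1 : ℝ)) = ENNReal.ofReal (Real.log (c / l)) := by
  have h0 : (0 : ℝ) ∉ uIcc l c := notMem_uIcc_of_lt hl (hl.trans_le hlc)
  rw [setLIntegral_Ioo_ofReal_of_nonneg hlc (intervalIntegral.intervalIntegrable_rpow (.inr h0))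
    fun x hx => Real.rpow_nonneg (hl.trans hx.1).le _]
  simp only [Real.rpow_neg_one, integral_inv_of_pos hl (hl.trans_le hlc)]

theorem comparable_setLIntegral_Ioo_of_lt (hβ : β < -1) (hc : 0 < c) :
    Comparable (fun l => ∫⁻ y in Ioo l c, ENNReal.ofReal (y ^ β)) (powLog (β + 1) 0) := by
  have hβ1 : 0 < -(β + 1) := by linarith
  have hlim := (((tendsto_rpow_nhdsGT_zero hβ1).mono_right nhdsWithin_le_nhds).const_mul
    (c ^ (β + 1))).const_sub 1 |>.div_const (-(β + 1))
  rw [mul_zero, sub_zero] at hlim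
  rw [funext (powLog_zero (β + 1))]
  refine (Comparable.of_eventuallyEq ?_).trans (.ofReal_of_tendsto_div
    (f := fun l => (c ^ (β + 1) - l ^ (β + 1)) / (β + 1)) (one_div_pos.2 hβ1) ?_ (hlim.congr' ?_))
  · filter_upwards [self_mem_nhdsWithin, eventually_lt_nhdsGT_zero hc] with l hl hlc
    exact setLIntegral_Ioo_rpow hβ.ne hl hlc.le
  · filter_upwards [self_mem_nhdsWithin] with l hl using Real.rpow_pos_of_pos hl _
  · filter_upwards [self_mem_nhdsWithin] with l (hl : 0 < l)
    have hlβ := (Real.rpow_pos_of_pos hl (β + 1)).ne'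
    have hβ0 : β + 1 ≠ 0 := by linarith
    rw [Real.rpow_neg hl.le]
    field_simp
    ring

theorem comparable_setLIntegral_Ioo_neg_one (hc : 0 < c) :
    Comparable (fun l => ∫⁻ y in Ioo l c, ENNReal.ofReal (y ^ (-1 : ℝ))) (powLog 0 1) := by
  refine (Comparable.of_eventuallyEq ?_).trans
    (comparable_powLog_const_mul (inv_pos.2 hc) 0 1)
  filter_upwards [self_mem_nhdsWithin, eventually_lt_nhdsGT_zero hc] with l (hl : 0 < l) hlc
  have hlog : Real.log (c⁻¹ * l) < 0 :=
    Real.log_neg (by positivity) ((inv_mul_lt_one₀ hc).2 hlc)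
  rw [setLIntegral_Ioo_rpow_neg_one hl hlc.le, Function.comp_apply, powLog, Real.rpow_zero, one_mul,
    pow_one, abs_of_neg hlog, ← Real.log_inv, mul_inv, inv_inv, div_eq_mul_inv]

theorem comparable_setLIntegral_Ioo_of_gt (hβ : -1 < β) (hc : 0 < c) :
    Comparable (fun l => ∫⁻ y in Ioo l c, ENNReal.ofReal (y ^ β)) (powLog 0 0) := by
  have hβ1 : 0 < β + 1 := by linarith
  have hlim := (((tendsto_rpow_nhdsGT_zero hβ1).mono_right nhdsWithin_le_nhds).const_sub
    (c ^ (β + 1))).div_const (β + 1)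
  rw [sub_zero] at hlim
  simp only [funext (powLog_zero 0), Real.rpow_zero]
  refine (Comparable.of_eventuallyEq ?_).trans (.ofReal_of_tendsto_div
    (f := fun l => (c ^ (β + 1) - l ^ (β + 1)) / (β + 1))
    (div_pos (Real.rpow_pos_of_pos hc (β + 1)) hβ1) (.of_forall fun _ => one_pos) ?_)
  · filter_upwards [self_mem_nhdsWithin, eventually_lt_nhdsGT_zero hc] with l hl hlc
    exact setLIntegral_Ioo_rpow hβ.ne' hl hlc.le
  · simpa only [div_one] using hlim

theorem exists_comparable_setLIntegral_Ioo (β : ℝ) :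
    ∃ (κ : ℝ) (e : ℕ), e ≤ 1 ∧ ∀ c, 0 < c →
      Comparable (fun l => ∫⁻ y in Ioo l c, ENNReal.ofReal (y ^ β)) (powLog κ e) := by
  rcases lt_trichotomy β (-1) with hβ | rfl | hβ
  · exact ⟨β + 1, 0, zero_le_one, fun c => comparable_setLIntegral_Ioo_of_lt hβ⟩
  · exact ⟨0, 1, le_rfl, fun c => comparable_setLIntegral_Ioo_neg_one⟩
  · exact ⟨0, 0, zero_le_one, fun c => comparable_setLIntegral_Ioo_of_gt hβ⟩

end AwayFromZero

/-! ### Wedges -/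

/-- The region `{0 < s < r, k(s) < ε y < c}`, where `ε = ±1` selects the upper or the lower half
plane. -/
def wedge (k : ℝ → ℝ) (ε c r : ℝ) : Set (ℝ × ℝ) :=
  {p | p.1 ∈ Ioo 0 r ∧ ε * p.2 ∈ Ioo (k p.1) c}

section Wedge

variable {k : ℝ → ℝ} {ε c r : ℝ}

theorem measurableSet_wedge (hk : Measurable k) : MeasurableSet (wedge k ε c r) := by
  have hlow : MeasurableSet {p : ℝ × ℝ | k p.1 < ε * p.2} :=
    measurableSet_lt (by fun_prop) (by fun_prop)
  have hup : MeasurableSet {p : ℝ × ℝ | ε * p.2 < c} :=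
    measurableSet_lt (by fun_prop) (by fun_prop)
  exact (measurable_fst measurableSet_Ioo).inter (hlow.inter hup)

theorem sign_mul_eq_abs (hε : |ε| = 1) {y : ℝ} (hy : 0 ≤ ε * y) : ε * y = |y| := by
  rw [← abs_of_nonneg hy, abs_mul, hε, one_mul]

theorem wedge_subset_box (hε : |ε| = 1) (hk : ∀ s, 0 < s → 0 ≤ k s) :
    wedge k ε c r ⊆ Ioo 0 r ×ˢ Ioo (-c) c := by
  intro p hp
  refine ⟨hp.1, abs_lt.1 ?_⟩
  rw [← sign_mul_eq_abs hε ((hk _ hp.1.1).trans hp.2.1.le)]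
  exact hp.2.2

theorem isPreconnected_wedge (hk : ContinuousOn k (Ioo 0 r)) (hε : ε ≠ 0)
    (hkc : ∀ s ∈ Ioo 0 r, k s < c) : IsPreconnected (wedge k ε c r) := by
  have himage : wedge k ε c r =
      (fun q : ℝ × ℝ => (q.1, ε⁻¹ * (k q.1 + q.2 * (c - k q.1)))) '' (Ioo 0 r ×ˢ Ioo 0 1) := by
    ext ⟨s, y⟩
    constructor
    · rintro ⟨hs, hy⟩
      have hpos : 0 < c - k s := sub_pos.2 (hkc s hs)
      refine ⟨(s, (ε * y - k s) / (c - k s)), ⟨hs, div_pos (sub_pos.2 hy.1) hpos,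
        (div_lt_one hpos).2 (sub_lt_sub_right hy.2 _)⟩, Prod.ext rfl ?_⟩
      change ε⁻¹ * (k s + (ε * y - k s) / (c - k s) * (c - k s)) = y
      rw [div_mul_cancel₀ _ hpos.ne', add_sub_cancel, inv_mul_cancel_left₀ hε]
    · rintro ⟨⟨s', u⟩, ⟨hs, hu⟩, hsy⟩
      obtain ⟨rfl, rfl⟩ := Prod.mk.inj hsy
      have hpos : 0 < c - k s' := sub_pos.2 (hkc s' hs)
      refine ⟨hs, ?_⟩
      simp only [mul_inv_cancel_left₀ hε]
      exact ⟨lt_add_of_pos_right _ (mul_pos hu.1 hpos), by nlinarith [hu.2]⟩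
  rw [himage]
  refine (isPreconnected_Ioo.prod isPreconnected_Ioo).image _ ?_
  have hk' : ContinuousOn (fun q : ℝ × ℝ => k q.1) (Ioo 0 r ×ˢ Ioo 0 1) :=
    hk.comp continuousOn_fst fun q hq => hq.1
  exact continuousOn_fst.prodMk (continuousOn_const.mul
    (hk'.add (continuousOn_snd.mul (continuousOn_const.sub hk'))))

theorem setLIntegral_sign_mul_Ioo (hε : |ε| = 1) {l : ℝ} (hl : 0 ≤ l) (β : ℝ) :
    ∫⁻ y in {y | ε * y ∈ Ioo l c}, ENNReal.ofReal (|y| ^ β) =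
      ∫⁻ y in Ioo l c, ENNReal.ofReal (y ^ β) := by
  have hmp : MeasurePreserving (fun y : ℝ => ε * y) := by
    rcases eq_or_eq_neg_of_abs_eq hε with rfl | rfl
    · simp only [one_mul]
      exact .id volume
    · simp only [neg_one_mul]
      exact Measure.measurePreserving_neg volume
  rw [← hmp.setLIntegral_comp_preimage measurableSet_Ioo (by fun_prop)]
  refine setLIntegral_congr_fun (hmp.measurable measurableSet_Ioo) fun y hy => ?_
  simp only [sign_mul_eq_abs hε (hl.trans hy.1.le)]

theorem setLIntegral_wedge (hk : Measurable k) (hk0 : ∀ s, 0 < s → 0 ≤ k s) (hε : |ε| = 1)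
    (α β : ℝ) :
    ∫⁻ p in wedge k ε c r, ENNReal.ofReal (p.1 ^ α * |p.2| ^ β) =
      ∫⁻ s in Ioo 0 r, ENNReal.ofReal (s ^ α) * ∫⁻ y in Ioo (k s) c, ENNReal.ofReal (y ^ β) := by
  have hS := measurableSet_wedge (ε := ε) (c := c) (r := r) hk
  rw [← lintegral_indicator hS, Measure.volume_eq_prod,
    lintegral_prod _ (Measurable.indicator (by fun_prop) hS).aemeasurable,
    ← lintegral_indicator measurableSet_Ioo]
  congr 1 with s
  by_cases hs : s ∈ Ioo 0 r
  · have hfibre : MeasurableSet {y : ℝ | ε * y ∈ Ioo (k s) c} :=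
      measurable_const_mul ε measurableSet_Ioo
    rw [indicator_of_mem hs, ← setLIntegral_sign_mul_Ioo hε (hk0 s hs.1),
      ← lintegral_const_mul' _ _ ENNReal.ofReal_ne_top, ← lintegral_indicator hfibre]
    congr 1 with y
    have hmem : (s, y) ∈ wedge k ε c r ↔ y ∈ {y | ε * y ∈ Ioo (k s) c} := and_iff_right hs
    simp only [indicator, hmem, ← ENNReal.ofReal_mul (Real.rpow_nonneg hs.1.le _)]
  · have hout : ∀ y, (s, y) ∉ wedge k ε c r := fun y h => hs h.1
    simp only [indicator_of_notMem hs, indicator_of_notMem (hout _), lintegral_zero]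

end Wedge

theorem hasGauge_wedge_rpow {M θ : ℝ} (hM : 0 < M) (hθ : 0 < θ) (α β : ℝ) {ε : ℝ}
    (hε : |ε| = 1) :
    HasGauge fun c r => ∫⁻ p in wedge (fun s => M * s ^ θ) ε c r,
      ENNReal.ofReal (p.1 ^ α * |p.2| ^ β) := by
  obtain ⟨κ, e, he, hinner⟩ := exists_comparable_setLIntegral_Ioo β
  obtain ⟨φ, hφ, houter⟩ := exists_isGauge_setLIntegral_powLog (α + θ * κ) he
  refine ⟨φ, hφ, ?_⟩
  filter_upwards [self_mem_nhdsWithin] with c (hc : 0 < c)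
  have hlower : Tendsto (fun s : ℝ => M * s ^ θ) (𝓝[>] 0) (𝓝[>] 0) :=
    (tendsto_const_mul_nhdsGT_zero hM).comp (tendsto_rpow_nhdsGT_zero hθ)
  have hprod : ((fun s => ENNReal.ofReal (s ^ α)) * powLog (θ * κ) e)
      =ᶠ[𝓝[>] 0] powLog (α + θ * κ) e := by
    filter_upwards [self_mem_nhdsWithin] with s (hs : 0 < s)
    rw [Pi.mul_apply, powLog, powLog, ← ENNReal.ofReal_mul (Real.rpow_nonneg hs.le _),
      Real.rpow_add hs, mul_assoc]
  simp only [setLIntegral_wedge (k := fun s => M * s ^ θ) (by fun_prop)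
    (fun s hs => (mul_pos hM (Real.rpow_pos_of_pos hs _)).le) hε]
  exact (((((hinner c hc).comp hlower).trans (comparable_powLog_const_mul_rpow hM hθ κ e)).mul_left
    fun s => ENNReal.ofReal (s ^ α)).trans (.of_eventuallyEq hprod)).setLIntegral.trans houter

theorem hasGauge_wedge_zero (α β : ℝ) {ε : ℝ} (hε : |ε| = 1) :
    HasGauge fun c r => ∫⁻ p in wedge (fun _ => 0) ε c r,
      ENNReal.ofReal (p.1 ^ α * |p.2| ^ β) := by
  simp only [setLIntegral_wedge measurable_const (fun _ _ => le_rfl) hε]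
  rcases le_or_gt β (-1) with hβ | hβ
  · refine ⟨⊤, .inr (.inl rfl), ?_⟩
    filter_upwards [self_mem_nhdsWithin] with c (hc : 0 < c)
    refine .of_eventuallyEq ?_
    filter_upwards [self_mem_nhdsWithin] with r (hr : 0 < r)
    have htop : ∀ s ∈ Ioo 0 r, ENNReal.ofReal (s ^ α) *
        ∫⁻ y in Ioo 0 c, ENNReal.ofReal (y ^ β) = ⊤ := fun s hs => by
      rw [setLIntegral_Ioo_zero_rpow_eq_top hβ hc,
        ENNReal.mul_top (ENNReal.ofReal_pos.2 (Real.rpow_pos_of_pos hs.1 _)).ne']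
    rw [setLIntegral_congr_fun measurableSet_Ioo htop, setLIntegral_const, Real.volume_Ioo,
      sub_zero, ENNReal.top_mul (ENNReal.ofReal_pos.2 hr).ne', Pi.top_apply]
  · obtain ⟨φ, hφ, hφc⟩ := exists_isGauge_setLIntegral_powLog α zero_le_one
    refine ⟨φ, hφ, ?_⟩
    filter_upwards [self_mem_nhdsWithin] with c (hc : 0 < c)
    have hK : 0 < c ^ (β + 1) / (β + 1) :=
      div_pos (Real.rpow_pos_of_pos hc _) (by linarith)
    simp only [powLog_zero] at hφc
    simp only [setLIntegral_Ioo_zero_rpow hβ hc.le,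
      lintegral_mul_const' _ _ ENNReal.ofReal_ne_top]
    simp only [mul_comm _ (ENNReal.ofReal (c ^ (β + 1) / (β + 1)))]
    exact (Comparable.const_mul (ENNReal.ofReal_pos.2 hK).ne' ENNReal.ofReal_ne_top _).trans hφc

/-! ### Newton slopes and leading polynomials -/

theorem exists_min_slope {κ : Type*} {T : Finset κ} {o : κ → ℕ∞} {D : κ → ℕ}
    (hD : ∀ x ∈ T, D x ≠ 0) (ho : ∀ x ∈ T, o x ≠ 0) (hfin : ∃ x ∈ T, o x ≠ ⊤) :
    ∃ p Q : ℕ, p ≠ 0 ∧ Q ≠ 0 ∧ (∀ x ∈ T, ((p * D x : ℕ) : ℕ∞) ≤ Q * o x) ∧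
      ∃ x ∈ T, Q * o x = (p * D x : ℕ) := by
  classical
  obtain ⟨x₁, hx₁, hfin₁⟩ := hfin
  obtain ⟨x₀, hx₀, hmin⟩ := (T.filter (o · ≠ ⊤)).exists_min_image
    (fun x => ((o x).toNat : ℚ) / D x) ⟨x₁, Finset.mem_filter.2 ⟨hx₁, hfin₁⟩⟩
  obtain ⟨hx₀T, hx₀fin⟩ := Finset.mem_filter.1 hx₀
  have hDpos : ∀ x ∈ T, (0 : ℚ) < D x := fun x hx => by exact_mod_cast (hD x hx).bot_lt
  refine ⟨(o x₀).toNat, D x₀, by simp [ho x₀ hx₀T, hx₀fin], hD x₀ hx₀T, fun x hx => ?_, x₀, hx₀T,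
    ?_⟩
  · by_cases hxfin : o x = ⊤
    · rw [hxfin, ENat.mul_top (by exact_mod_cast hD x₀ hx₀T)]
      exact le_top
    · have hle := hmin x (Finset.mem_filter.2 ⟨hx, hxfin⟩)
      rw [div_le_div_iff₀ (hDpos x₀ hx₀T) (hDpos x hx)] at hle
      rw [← ENat.natCast_toNat hxfin, mul_comm (D x₀ : ℕ∞)]
      exact_mod_cast hle
  · rw [mul_comm, Nat.cast_mul, ENat.natCast_toNat hx₀fin]

theorem analyticOrderAt_pow_zero (n : ℕ) : analyticOrderAt (fun σ : ℝ => σ ^ n) 0 = n := by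
  have h := analyticOrderAt_centeredMonomial (𝕜 := ℝ) (z₀ := 0) (n := n)
  simp only [sub_zero] at h
  exact h

theorem analyticOrderAt_comp_pow {f : ℝ → ℝ} (hf : AnalyticAt ℝ f 0) {Q : ℕ} (hQ : Q ≠ 0) :
    analyticOrderAt (fun σ => f (σ ^ Q)) 0 = Q * analyticOrderAt f 0 := by
  have hpow : analyticOrderAt (fun σ : ℝ => σ ^ Q - 0 ^ Q) 0 = Q := by
    simpa only [zero_pow hQ, sub_zero] using analyticOrderAt_pow_zero Q
  have hcomp := AnalyticAt.analyticOrderAt_comp (f := f) (g := fun σ : ℝ => σ ^ Q) (z₀ := 0)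
    (by rwa [zero_pow hQ]) (analyticAt_id.fun_pow Q)
  rw [hpow, zero_pow hQ, mul_comm] at hcomp
  exact hcomp

theorem exists_comp_pow_eq_pow_mul {f : ℝ → ℝ} (hf : AnalyticAt ℝ f 0) {Q m : ℕ} (hQ : Q ≠ 0)
    (hm : (m : ℕ∞) ≤ Q * analyticOrderAt f 0) :
    ∃ b, AnalyticAt ℝ b 0 ∧ (∀ᶠ σ in 𝓝 0, f (σ ^ Q) = σ ^ m * b σ) ∧
      (b 0 ≠ 0 ↔ Q * analyticOrderAt f 0 = m) := by
  have hfQ : AnalyticAt ℝ (fun σ => f (σ ^ Q)) 0 :=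
    hf.fun_comp_of_eq (analyticAt_id.fun_pow Q) (zero_pow hQ)
  rw [← analyticOrderAt_comp_pow hf hQ] at hm ⊢
  obtain ⟨b, hb, heq⟩ := (natCast_le_analyticOrderAt hfQ).1 hm
  simp only [sub_zero, smul_eq_mul] at heq
  refine ⟨b, hb, heq, ?_⟩
  have horder : analyticOrderAt (fun σ => f (σ ^ Q)) 0 = m + analyticOrderAt b 0 := by
    rw [analyticOrderAt_congr heq, ← analyticOrderAt_pow_zero m]
    exact analyticOrderAt_mul (analyticAt_id.fun_pow m) hb
  rw [horder, ← hb.analyticOrderAt_eq_zero]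
  exact ⟨fun h => by rw [h, add_zero],
    fun h => ENat.add_right_injective_of_ne_top (ENat.natCast_ne_top m) (h.trans (add_zero _).symm)⟩

theorem exists_newton_slope {ι : Type*} [Finite ι] {d : ι → ℕ} {c : ι → ℕ → ℝ → ℝ}
    (hc : ∀ i j, AnalyticAt ℝ (c i j) 0) (h0 : ∀ i, ∀ j < d i, c i j 0 = 0)
    (hne : ∃ i, ∃ j < d i, ¬ ∀ᶠ s in 𝓝 (0 : ℝ), c i j s = 0) :
    ∃ (p Q : ℕ) (b : ι → ℕ → ℝ → ℝ), p ≠ 0 ∧ Q ≠ 0 ∧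
      (∀ i, ∀ j < d i, AnalyticAt ℝ (b i j) 0 ∧
        ∀ᶠ σ in 𝓝 (0 : ℝ), c i j (σ ^ Q) = σ ^ (p * (d i - j)) * b i j σ) ∧
      ∃ i, ∃ j < d i, b i j 0 ≠ 0 := by
  have := Fintype.ofFinite ι
  let T : Finset (Σ _ : ι, ℕ) := Finset.univ.sigma fun i => Finset.range (d i)
  have hT : ∀ x, x ∈ T ↔ x.2 < d x.1 := by simp [T]
  obtain ⟨i₁, j₁, hj₁, hne₁⟩ := hne
  obtain ⟨p, Q, hp, hQ, hle, ⟨i₀, j₀⟩, hx₀, heq⟩ := exists_min_slope (T := T)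
    (o := fun x => analyticOrderAt (c x.1 x.2) 0) (D := fun x => d x.1 - x.2)
    (fun x hx => (Nat.sub_pos_of_lt ((hT x).1 hx)).ne')
    (fun x hx => (hc x.1 x.2).analyticOrderAt_ne_zero.2 (h0 _ _ ((hT x).1 hx)))
    ⟨⟨i₁, j₁⟩, (hT _).2 hj₁, fun h => hne₁ (analyticOrderAt_eq_top.1 h)⟩
  choose! b hb hcb hb0 using fun i j (hj : j < d i) =>
    exists_comp_pow_eq_pow_mul (hc i j) hQ (hle ⟨i, j⟩ ((hT _).2 hj))
  have hj₀ : j₀ < d i₀ := (hT _).1 hx₀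
  exact ⟨p, Q, b, hp, hQ, fun i j hj => ⟨hb i j hj, hcb i j hj⟩, i₀, j₀, hj₀,
    (hb0 i₀ j₀ hj₀).2 heq⟩

section TopPoly

open Polynomial

/-- The polynomial with coefficients `a j` for `j < d` and leading coefficient `l`. It serves as the
leading polynomial of a Taylor form along a Newton slope. -/
def topPoly (d : ℕ) (a : ℕ → ℝ) (l : ℝ) : ℝ[X] :=
  ∑ j ∈ Finset.range d, C (a j) * X ^ j + C l * X ^ d

variable (d : ℕ) (a : ℕ → ℝ) (l : ℝ)

theorem eval_topPoly (u : ℝ) :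
    (topPoly d a l).eval u = ∑ j ∈ Finset.range d, a j * u ^ j + l * u ^ d := by
  simp [topPoly, eval_finsetSum]

variable {d} in
theorem coeff_topPoly_of_lt {j : ℕ} (hj : j < d) : (topPoly d a l).coeff j = a j := by
  simp [topPoly, finsetSum_coeff, coeff_X_pow, hj, hj.ne]

theorem coeff_topPoly_self : (topPoly d a l).coeff d = l := by
  simp [topPoly, finsetSum_coeff, coeff_X_pow]

theorem natDegree_topPoly_le : (topPoly d a l).natDegree ≤ d := by
  refine (natDegree_add_le _ _).trans (max_le ?_ (natDegree_C_mul_X_pow_le _ _))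
  exact natDegree_sum_le_of_forall_le _ _ fun j hj =>
    (natDegree_C_mul_X_pow_le _ _).trans (Finset.mem_range.1 hj).le

theorem rootMultiplicity_topPoly_le (u : ℝ) : (topPoly d a l).rootMultiplicity u ≤ d := by
  classical
  rw [← count_roots]
  exact ((Multiset.count_le_card _ _).trans (card_roots' _)).trans (natDegree_topPoly_le d a l)

variable {d a l}

theorem topPoly_ne_zero (hl : l ≠ 0) : topPoly d a l ≠ 0 := fun h =>
  hl (by rw [← coeff_topPoly_self d a l, h, coeff_zero])

theorem coeff_of_rootMultiplicity_topPoly (hl : l ≠ 0) {u : ℝ}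
    (h : (topPoly d a l).rootMultiplicity u = d) {j : ℕ} (hj : j < d) :
    a j = l * ((-u) ^ (d - j) * d.choose j) := by
  have hdvd : (X - C u) ^ d ∣ topPoly d a l :=
    (le_rootMultiplicity_iff (topPoly_ne_zero hl)).1 h.ge
  have hdeg : (topPoly d a l).natDegree = d :=
    (natDegree_topPoly_le d a l).antisymm
      (le_natDegree_of_ne_zero (by rwa [coeff_topPoly_self]))
  have hlead : (topPoly d a l).leadingCoeff = l := by
    rw [leadingCoeff, hdeg, coeff_topPoly_self]
  have heq : topPoly d a l = C l * (X + C (-u)) ^ d := by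
    have hmonic := eq_leadingCoeff_mul_of_monic_of_dvd_of_natDegree_le ((monic_X_sub_C u).pow d)
      hdvd (by simp [hdeg])
    rwa [hlead, sub_eq_add_neg, ← C_neg] at hmonic
  rw [← coeff_topPoly_of_lt a l hj, heq, coeff_C_mul, coeff_X_add_C_pow]

theorem sum_rootMultiplicity_topPoly_lt {ι : Type*} [Fintype ι] {d : ι → ℕ} {a : ι → ℕ → ℝ}
    {l : ι → ℝ} (hl : ∀ i, l i ≠ 0) {i₁ : ι} {m : ℕ} (hm : d i₁ = m + 1) (ha : a i₁ m = 0)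
    (hne : ∃ i, ∃ j < d i, a i j ≠ 0) (u : ℝ) :
    ∑ i, (topPoly (d i) (a i) (l i)).rootMultiplicity u < ∑ i, d i := by
  have hle : ∀ i ∈ Finset.univ, (topPoly (d i) (a i) (l i)).rootMultiplicity u ≤ d i :=
    fun i _ => rootMultiplicity_topPoly_le _ _ _ u
  refine (Finset.sum_le_sum hle).lt_of_ne fun heq => ?_
  have hfull : ∀ i, (topPoly (d i) (a i) (l i)).rootMultiplicity u = d i := fun i =>
    (Finset.sum_eq_sum_iff_of_le hle).1 heq i (Finset.mem_univ i)
  have hu : u = 0 := by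
    have hsub := coeff_of_rootMultiplicity_topPoly (hl i₁) (hfull i₁)
      (m.lt_succ_self.trans_eq hm.symm)
    have hchoose : (m + 1 : ℝ) ≠ 0 := m.cast_add_one_ne_zero
    simpa [ha, hm, hl i₁, hchoose] using hsub
  obtain ⟨i, j, hj, hne⟩ := hne
  refine hne ((coeff_of_rootMultiplicity_topPoly (hl i) (hfull i) hj).trans ?_)
  rw [hu, neg_zero, zero_pow (Nat.sub_pos_of_lt hj).ne', zero_mul, mul_zero]

theorem RegularOrder.of_eventually_eq_eval {F : ℝ × ℝ → ℝ} (hF : AnalyticAt ℝ F 0) {P : ℝ[X]}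
    (hP : P ≠ 0) {u₀ : ℝ} (h : ∀ᶠ u in 𝓝 (0 : ℝ), F (0, u) = P.eval (u₀ + u)) :
    RegularOrder F (P.rootMultiplicity u₀) := by
  obtain ⟨R, hR, hR0⟩ := exists_eq_pow_rootMultiplicity_mul_and_not_dvd P hP u₀
  rw [dvd_iff_isRoot] at hR0
  refine ⟨hF, (analyticAt_comp_zero_left hF).analyticOrderAt_eq_natCast.2
    ⟨fun u => R.eval (u₀ + u), ?_, by simpa using hR0, ?_⟩⟩
  · exact AnalyticAt.aeval_polynomial (analyticAt_const.add analyticAt_id) R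
  · filter_upwards [h] with u hu
    rw [hu, hR, eval_mul, ← hR]
    simp

end TopPoly

/-! ### The weights `χ_E s ^ α ∏ |F i| ^ γ i` -/

/-- The weight `χ_E s ^ α ∏ |F i| ^ γ i`. -/
def locWeight {ι : Type*} [Fintype ι] (F : ι → ℝ × ℝ → ℝ) (γ : ι → ℝ) (α : ℝ)
    (E : Set (ℝ × ℝ)) : ℝ × ℝ → ENNReal :=
  E.indicator fun p => ENNReal.ofReal (p.1 ^ α * ∏ i, |F i p| ^ γ i)

/-- Near the origin and to the right of the axis `x = 0`, the frontier of `E` lies in the union of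
the zero sets of the `F i`. -/
def FrontierInZeros {ι : Type*} (F : ι → ℝ × ℝ → ℝ) (E : Set (ℝ × ℝ)) : Prop :=
  ∀ᶠ p in 𝓝 (0 : ℝ × ℝ), 0 < p.1 → p ∈ frontier E → ∃ i, F i p = 0

theorem map_mem_frontier_of_continuousAt {X Y : Type*} [TopologicalSpace X] [TopologicalSpace Y]
    {Φ : X → Y} {E : Set Y} {x : X} (hΦ : ContinuousAt Φ x) (hx : x ∈ frontier (Φ ⁻¹' E)) :
    Φ x ∈ frontier E := by
  rw [frontier_eq_closure_inter_closure] at hx ⊢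
  exact ⟨mem_closure_iff_frequently.2 (hΦ.frequently (mem_closure_iff_frequently.1 hx.1)),
    mem_closure_iff_frequently.2 (hΦ.frequently (mem_closure_iff_frequently.1 hx.2))⟩

theorem subset_or_disjoint_of_isPreconnected {X : Type*} [TopologicalSpace X] {S E : Set X}
    (hS : IsPreconnected S) (hSE : Disjoint S (frontier E)) : S ⊆ E ∨ Disjoint S E := by
  have hcover : S ⊆ interior E ∪ interior Eᶜ := by
    rw [interior_compl, ← compl_subset_compl, compl_union, compl_compl, inter_comm]
    exact hSE.subset_compl_left
  refine (hS.subset_or_subset isOpen_interior isOpen_interior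
    (disjoint_compl_right.mono interior_subset interior_subset) hcover).imp
    (·.trans interior_subset) fun h => ?_
  exact disjoint_compl_left.mono_left (h.trans interior_subset)

theorem FrontierInZeros.comap {ι : Type*} {F F' : ι → ℝ × ℝ → ℝ} {E : Set (ℝ × ℝ)}
    {Φ : ℝ × ℝ → ℝ × ℝ} (h : FrontierInZeros F E) (hΦ : ∀ᶠ p in 𝓝 0, ContinuousAt Φ p)
    (hΦ0 : Φ 0 = 0) (hpos : ∀ p, 0 < p.1 → 0 < (Φ p).1)
    (hF : ∀ᶠ p in 𝓝 (0 : ℝ × ℝ), 0 < p.1 → ∀ i, F i (Φ p) = 0 → F' i p = 0) :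
    FrontierInZeros F' (Φ ⁻¹' E) := by
  have hlim : Tendsto Φ (𝓝 0) (𝓝 0) := by simpa only [hΦ0] using hΦ.self_of_nhds.tendsto
  filter_upwards [hlim.eventually h, hΦ, hF] with p hp hΦp hFp hp0 hpE
  obtain ⟨i, hi⟩ := hp (hpos p hp0) (map_mem_frontier_of_continuousAt hΦp hpE)
  exact ⟨i, hFp hp0 i hi⟩

section Comparison

variable {ι : Type*} [Fintype ι]

theorem rpow_le_max_mul_rpow {a b t x : ℝ} (ha : 0 < a) (ht : 0 < t) (h1 : a * t ≤ x)
    (h2 : x ≤ b * t) (γ : ℝ) : x ^ γ ≤ max (a ^ γ) (b ^ γ) * t ^ γ := by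
  have hx : 0 < x := (mul_pos ha ht).trans_le h1
  have hb : 0 < b := pos_of_mul_pos_left (hx.trans_le h2) ht.le
  rcases le_total 0 γ with hγ | hγ
  · calc x ^ γ ≤ (b * t) ^ γ := Real.rpow_le_rpow hx.le h2 hγ
      _ = b ^ γ * t ^ γ := Real.mul_rpow hb.le ht.le
      _ ≤ _ := by gcongr; exact le_max_right _ _
  · calc x ^ γ ≤ (a * t) ^ γ := Real.rpow_le_rpow_of_nonpos (mul_pos ha ht) h1 hγ
      _ = a ^ γ * t ^ γ := Real.mul_rpow ha.le ht.le
      _ ≤ _ := by gcongr; exact le_max_left _ _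

theorem prod_rpow_le_prod_max_mul {a b t x : ι → ℝ} (ha : ∀ i, 0 < a i) (ht : ∀ i, 0 < t i)
    (h1 : ∀ i, a i * t i ≤ x i) (h2 : ∀ i, x i ≤ b i * t i) (γ : ι → ℝ) :
    ∏ i, x i ^ γ i ≤ (∏ i, max (a i ^ γ i) (b i ^ γ i)) * ∏ i, t i ^ γ i := by
  rw [← Finset.prod_mul_distrib]
  exact Finset.prod_le_prod
    (fun i _ => Real.rpow_nonneg ((mul_pos (ha i) (ht i)).le.trans (h1 i)) _)
    fun i _ => rpow_le_max_mul_rpow (ha i) (ht i) (h1 i) (h2 i) _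

theorem prod_pow_rpow {t : ℝ} (ht : 0 < t) (d : ι → ℕ) (γ : ι → ℝ) :
    ∏ i, (t ^ d i) ^ γ i = t ^ ∑ i, d i * γ i := by
  rw [Real.rpow_sum_of_pos ht]
  exact Finset.prod_congr rfl fun i _ => by rw [← Real.rpow_natCast_mul ht.le]

theorem abs_le_and_le_abs_of_close {x y l : ℝ} {d : ℕ}
    (h : |x - y ^ d * l| ≤ |l| / 2 * |y| ^ d) :
    |l| / 2 * |y| ^ d ≤ |x| ∧ |x| ≤ 3 / 2 * |l| * |y| ^ d := by
  have habs : |y ^ d * l| = |l| * |y| ^ d := by rw [abs_mul, abs_pow, mul_comm]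
  have hupper := abs_sub_abs_le_abs_sub x (y ^ d * l)
  have hlower := abs_sub_abs_le_abs_sub (y ^ d * l) x
  rw [abs_sub_comm] at hlower
  constructor <;> linarith

theorem exists_locWeight_comparable {F : ι → ℝ × ℝ → ℝ} {d : ι → ℕ} {l : ι → ℝ} (γ : ι → ℝ)
    (α : ℝ) (E : Set (ℝ × ℝ)) (hl : ∀ i, l i ≠ 0) :
    ∃ C D : NNReal, ∀ p ∈ E, 0 < p.1 → p.2 ≠ 0 →
      (∀ i, |F i p - p.2 ^ d i * l i| ≤ |l i| / 2 * |p.2| ^ d i) →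
      locWeight F γ α E p ≤ C * ENNReal.ofReal (p.1 ^ α * |p.2| ^ ∑ i, d i * γ i) ∧
      ENNReal.ofReal (p.1 ^ α * |p.2| ^ ∑ i, d i * γ i) ≤ D * locWeight F γ α E p := by
  set a : ι → ℝ := fun i => |l i| / 2
  set b : ι → ℝ := fun i => 3 / 2 * |l i|
  have ha : ∀ i, 0 < a i := fun i => half_pos (abs_pos.2 (hl i))
  have hb : ∀ i, 0 < b i := fun i => mul_pos (by norm_num) (abs_pos.2 (hl i))
  refine ⟨(∏ i, max (a i ^ γ i) (b i ^ γ i)).toNNReal,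
    (∏ i, max ((b i)⁻¹ ^ γ i) ((a i)⁻¹ ^ γ i)).toNNReal, fun p hpE hp1 hp2 hclose => ?_⟩
  have ht : ∀ i, 0 < |p.2| ^ d i := fun i => pow_pos (abs_pos.2 hp2) _
  have hlow : ∀ i, a i * |p.2| ^ d i ≤ |F i p| := fun i =>
    (abs_le_and_le_abs_of_close (hclose i)).1
  have hupp : ∀ i, |F i p| ≤ b i * |p.2| ^ d i := fun i =>
    (abs_le_and_le_abs_of_close (hclose i)).2
  have hF : ∀ i, 0 < |F i p| := fun i => (mul_pos (ha i) (ht i)).trans_le (hlow i)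
  have := Real.rpow_nonneg hp1.le α
  rw [locWeight, indicator_of_mem hpE, ← prod_pow_rpow (abs_pos.2 hp2)]
  constructor <;>
    rw [← ENNReal.ofReal, ← ENNReal.ofReal_mul (Finset.prod_nonneg fun i _ => by
      have := ha i; have := hb i; positivity), mul_left_comm]
  · gcongr
    exact prod_rpow_le_prod_max_mul ha ht hlow hupp γ
  · gcongr
    exact prod_rpow_le_prod_max_mul (fun i => inv_pos.2 (hb i)) hF
      (fun i => (inv_mul_le_iff₀ (hb i)).2 (hupp i))
      (fun i => (le_inv_mul_iff₀ (ha i)).2 (hlow i)) γ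

end Comparison

theorem Dominated.setLIntegral_of_le {α : Type*} [MeasurableSpace α] {μ : Measure α}
    {A : ℝ → Set α} {w w' : α → ENNReal} {C : NNReal} (hA : ∀ r, MeasurableSet (A r))
    (h : ∀ᶠ r in 𝓝[>] (0 : ℝ), ∀ p ∈ A r, w p ≤ C * w' p) :
    Dominated (fun r => ∫⁻ p in A r, w p ∂μ) fun r => ∫⁻ p in A r, w' p ∂μ := by
  refine ⟨C, ?_⟩
  filter_upwards [h] with r hr
  rw [← lintegral_const_mul' _ _ ENNReal.coe_ne_top]
  exact setLIntegral_mono' (hA r) hr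

section Wedge

variable {ι : Type*} {F : ι → ℝ × ℝ → ℝ} {E : Set (ℝ × ℝ)} {k : ℝ → ℝ} {ε : ℝ}
  {d : ι → ℕ} {l : ι → ℝ}

theorem ne_zero_of_mem_wedge {c r : ℝ} {q : ℝ × ℝ} (hk0 : ∀ s, 0 < s → 0 ≤ k s)
    (hq : q ∈ wedge k ε c r) : q.2 ≠ 0 := by
  intro h
  have := hq.2.1
  rw [h, mul_zero] at this
  exact this.not_ge (hk0 _ hq.1.1)

theorem exists_wedge_close (hk : Continuous k) (hk0 : k 0 = 0) (hkn : ∀ s, 0 < s → 0 ≤ k s)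
    (hε : |ε| = 1) (hEF : FrontierInZeros F E) (hl : ∀ i, l i ≠ 0)
    (hF : ∀ᶠ q in 𝓝 (0 : ℝ × ℝ), 0 < q.1 → k q.1 < |q.2| →
      ∀ i, |F i q - q.2 ^ d i * l i| ≤ |l i| / 2 * |q.2| ^ d i) :
    ∃ c > 0, ∃ r > 0,
      (∀ q ∈ wedge k ε c r, ∀ i, |F i q - q.2 ^ d i * l i| ≤ |l i| / 2 * |q.2| ^ d i) ∧
      (wedge k ε c r ⊆ E ∨ Disjoint (wedge k ε c r) E) := by
  obtain ⟨c, hbox, hc : 0 < c⟩ :=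
    ((eventually_box_subset (hEF.and hF)).and self_mem_nhdsWithin).exists
  have hkc : ∀ᶠ s in 𝓝[>] (0 : ℝ), k s < c :=
    nhdsWithin_le_nhds ((hk.tendsto' 0 0 hk0).eventually_lt_const hc)
  obtain ⟨r, ⟨hsub, hkr⟩, hr : 0 < r⟩ :=
    ((hbox.and (eventually_forall_mem_Ioo hkc)).and self_mem_nhdsWithin).exists
  have hgood := (wedge_subset_box hε hkn).trans hsub
  have hclose : ∀ q ∈ wedge k ε c r, ∀ i,
      |F i q - q.2 ^ d i * l i| ≤ |l i| / 2 * |q.2| ^ d i := fun q hq => by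
    refine (hgood hq).2 hq.1.1 (hq.2.1.trans_eq ?_)
    exact sign_mul_eq_abs hε ((hkn _ hq.1.1).trans hq.2.1.le)
  refine ⟨c, hc, r, hr, hclose, subset_or_disjoint_of_isPreconnected
    (isPreconnected_wedge hk.continuousOn (abs_pos.1 (hε ▸ one_pos)) hkr)
    (disjoint_left.2 fun q hq hqE => ?_)⟩
  obtain ⟨i, hi⟩ := (hgood hq).1 hq.1.1 hqE
  have hlow := (abs_le_and_le_abs_of_close (hclose q hq i)).1
  rw [hi, abs_zero] at hlow
  have := abs_pos.2 (hl i)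
  have := abs_pos.2 (ne_zero_of_mem_wedge hkn hq)
  exact hlow.not_gt (by positivity)

theorem hasGauge_wedge_locWeight [Fintype ι] (γ : ι → ℝ) (α : ℝ) (hk : Continuous k) (hk0 : k 0 = 0)
    (hkn : ∀ s, 0 < s → 0 ≤ k s) (hε : |ε| = 1) (hEF : FrontierInZeros F E)
    (hl : ∀ i, l i ≠ 0)
    (hF : ∀ᶠ q in 𝓝 (0 : ℝ × ℝ), 0 < q.1 → k q.1 < |q.2| →
      ∀ i, |F i q - q.2 ^ d i * l i| ≤ |l i| / 2 * |q.2| ^ d i)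
    (hmono : HasGauge fun c r => ∫⁻ q in wedge k ε c r,
      ENNReal.ofReal (q.1 ^ α * |q.2| ^ ∑ i, d i * γ i)) :
    HasGauge fun c r => ∫⁻ q in wedge k ε c r, locWeight F γ α E q := by
  obtain ⟨c₀, hc₀, r₀, hr₀, hclose, hE⟩ := exists_wedge_close hk hk0 hkn hε hEF hl hF
  have hsub : ∀ᶠ c in 𝓝[>] (0 : ℝ), ∀ᶠ r in 𝓝[>] (0 : ℝ),
      wedge k ε c r ⊆ wedge k ε c₀ r₀ := by
    filter_upwards [eventually_lt_nhdsGT_zero hc₀] with c hc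
    filter_upwards [eventually_lt_nhdsGT_zero hr₀] with r hr q hq
    exact ⟨⟨hq.1.1, hq.1.2.trans hr⟩, hq.2.1, hq.2.2.trans hc⟩
  have hmeas (c r : ℝ) : MeasurableSet (wedge k ε c r) := measurableSet_wedge hk.measurable
  rcases hE with hE | hE
  · obtain ⟨C, D, hCD⟩ := exists_locWeight_comparable γ α E hl (F := F) (d := d)
    refine hmono.of_comparable ?_
    filter_upwards [hsub] with c hc
    exact ⟨.setLIntegral_of_le (hmeas c) (hc.mono fun r hr q hq =>
        (hCD q (hE (hr hq)) hq.1.1 (ne_zero_of_mem_wedge hkn hq) (hclose q (hr hq))).1),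
      .setLIntegral_of_le (hmeas c) (hc.mono fun r hr q hq =>
        (hCD q (hE (hr hq)) hq.1.1 (ne_zero_of_mem_wedge hkn hq) (hclose q (hr hq))).2)⟩
  · refine ⟨0, .inl rfl, hsub.mono fun c hc => .of_eventuallyEq (hc.mono fun r hr => ?_)⟩
    refine (setLIntegral_congr_fun (hmeas c r) fun q hq => ?_).trans lintegral_zero
    exact indicator_of_notMem (disjoint_left.1 hE (hr hq)) _

end Wedge

theorem HasGauge.boxIntegral_of_cover {κ : Type*} {s : Finset κ} {w : ℝ × ℝ → ENNReal}
    {k : ℝ → ℝ} {A : κ → ℝ → Set (ℝ × ℝ)} (hk : ∀ s, 0 < s → 0 ≤ k s)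
    (hwedge : ∀ ε : ℝ, |ε| = 1 → HasGauge fun c r => ∫⁻ q in wedge k ε c r, w q)
    (hA : ∀ j ∈ s, HasGauge fun _ r => ∫⁻ q in A j r, w q)
    (hsub : ∀ j ∈ s, ∀ᶠ c in 𝓝[>] (0 : ℝ), ∀ᶠ r in 𝓝[>] (0 : ℝ),
      A j r ⊆ Ioo 0 r ×ˢ Ioo (-c) c)
    (hcov : ∀ r, volume ({q | q.1 ∈ Ioo 0 r ∧ |q.2| ≤ k q.1} \ ⋃ j ∈ s, A j r) = 0) :
    HasGauge (boxIntegral w) := by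
  let B : κ ⊕ ℝ → ℝ → ℝ → Set (ℝ × ℝ) := Sum.elim (fun j _ => A j) fun ε => wedge k ε
  have hsign : ∀ ε ∈ ({1, -1} : Finset ℝ), |ε| = 1 := by simp
  have hsum : HasGauge (∑ j ∈ s.disjSum {1, -1}, fun c r => ∫⁻ q in B j c r, w q) := by
    refine .sum fun j hj => ?_
    rcases Finset.mem_disjSum.1 hj with ⟨i, hi, rfl⟩ | ⟨ε, hε, rfl⟩
    · exact hA i hi
    · exact hwedge ε (hsign ε hε)
  refine hsum.of_comparable ?_
  filter_upwards [(eventually_all_finset s).2 hsub] with c hc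
  rw [Finset.sum_apply]
  refine comparable_setLIntegral_sum (fun j hj => ?_) (.of_forall fun r => ?_)
  · rcases Finset.mem_disjSum.1 hj with ⟨i, hi, rfl⟩ | ⟨ε, hε, rfl⟩
    · exact hc i hi
    · exact .of_forall fun r => wedge_subset_box (hsign ε hε) hk
  · rw [← nonpos_iff_eq_zero, ← hcov r]
    refine measure_mono fun q hq => ⟨⟨hq.1.1, ?_⟩, fun hqA => hq.2 ?_⟩
    · by_contra! hlt
      refine hq.2 (mem_iUnion₂.2 ?_)
      rcases lt_abs.1 hlt with h | h
      · exact ⟨.inr 1, by simp, hq.1.1, by simpa using ⟨h, hq.1.2.2⟩⟩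
      · exact ⟨.inr (-1), by simp, hq.1.1, by simpa using ⟨h, neg_lt.1 hq.1.2.1⟩⟩
    · obtain ⟨j, hj, hqj⟩ := mem_iUnion₂.1 hqA
      exact mem_iUnion₂.2 ⟨.inl j, Finset.inl_mem_disjSum.2 hj, hqj⟩

theorem eventually_abs_pow_mul_sub_le {U : ℝ × ℝ → ℝ} (hU : ContinuousAt U 0) (d : ℕ) {η : ℝ}
    (hη : 0 < η) :
    ∀ᶠ p in 𝓝 (0 : ℝ × ℝ), |p.2 ^ d * U p - p.2 ^ d * U 0| ≤ η * |p.2| ^ d := by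
  filter_upwards [Metric.continuousAt_iff'.1 hU η hη] with p hp
  rw [← mul_sub, abs_mul, abs_pow, mul_comm]
  gcongr
  exact hp.le

theorem hasGauge_of_normal_crossings {ι : Type*} [Fintype ι] {F U : ι → ℝ × ℝ → ℝ} {d : ι → ℕ}
    (γ : ι → ℝ) (α : ℝ) {E : Set (ℝ × ℝ)} (hEF : FrontierInZeros F E)
    (hU : ∀ i, ContinuousAt (U i) 0) (hU0 : ∀ i, U i 0 ≠ 0)
    (hF : ∀ i, ∀ᶠ p in 𝓝 (0 : ℝ × ℝ), F i p = p.2 ^ d i * U i p) :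
    HasGauge (boxIntegral (locWeight F γ α E)) := by
  have hclose : ∀ᶠ p in 𝓝 (0 : ℝ × ℝ), ∀ i,
      |F i p - p.2 ^ d i * U i 0| ≤ |U i 0| / 2 * |p.2| ^ d i := by
    refine eventually_all.2 fun i => ?_
    filter_upwards [hF i, eventually_abs_pow_mul_sub_le (hU i) (d i)
      (half_pos (abs_pos.2 (hU0 i)))] with p hFp hp
    rwa [hFp]
  refine HasGauge.boxIntegral_of_cover (s := (∅ : Finset ℕ)) (k := fun _ => 0) (A := fun _ _ => ∅)
    (fun _ _ => le_rfl) (fun ε hε => ?_) (by simp) (by simp) fun r => ?_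
  · exact hasGauge_wedge_locWeight γ α continuous_const rfl (fun _ _ => le_rfl) hε hEF hU0
      (hclose.mono fun _ h _ _ => h) (hasGauge_wedge_zero α _ hε)
  · refine measure_mono_null (t := univ ×ˢ {0}) (fun q hq => ⟨trivial, abs_nonpos_iff.1 hq.1.2⟩) ?_
    rw [Measure.volume_eq_prod, Measure.prod_prod, Real.volume_singleton, mul_zero]

/-! ### Above the Newton slope -/

section Slope

variable {Q p : ℕ}

theorem eventually_abs_le_mul_rpow_pow {c b : ℝ → ℝ} {e : ℕ} (hQ : Q ≠ 0)
    (hb : ContinuousAt b 0) (hcb : ∀ᶠ σ in 𝓝 (0 : ℝ), c (σ ^ Q) = σ ^ (p * e) * b σ) :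
    ∀ᶠ s in 𝓝[>] (0 : ℝ), |c s| ≤ (|b 0| + 1) * (s ^ ((p : ℝ) / Q)) ^ e := by
  have hroot : Tendsto (fun s : ℝ => s ^ (Q⁻¹ : ℝ)) (𝓝[>] 0) (𝓝 0) :=
    (tendsto_rpow_nhdsGT_zero (by positivity)).mono_right nhdsWithin_le_nhds
  have hbound : ∀ᶠ σ in 𝓝 (0 : ℝ), |b σ| < |b 0| + 1 :=
    hb.abs.eventually_lt_const (lt_add_one _)
  filter_upwards [self_mem_nhdsWithin, hroot.eventually hbound, hroot.eventually hcb]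
    with s (hs : 0 < s) hbs hcs
  have hσ : 0 ≤ s ^ (Q⁻¹ : ℝ) := Real.rpow_nonneg hs.le _
  rw [← Real.rpow_inv_natCast_pow hs.le hQ, pow_rpow_div hσ hQ, hcs, abs_mul, pow_mul, mul_comm,
    abs_of_nonneg (pow_nonneg (pow_nonneg hσ p) e)]
  gcongr

theorem abs_sum_mul_pow_le {d : ℕ} {c B : ℕ → ℝ} {t y M : ℝ} (hM : 1 ≤ M) (ht : 0 ≤ t)
    (hty : M * t ≤ |y|) (hB : ∀ j, 0 ≤ B j) (hc : ∀ j < d, |c j| ≤ B j * t ^ (d - j)) :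
    |∑ j ∈ Finset.range d, c j * y ^ j| ≤ (∑ j ∈ Finset.range d, B j) / M * |y| ^ d := by
  have hM0 : 0 < M := one_pos.trans_le hM
  have hterm : ∀ j ∈ Finset.range d, |c j * y ^ j| ≤ B j / M * |y| ^ d := by
    intro j hj
    have hjd : j < d := Finset.mem_range.1 hj
    have hpow : t ^ (d - j) ≤ |y| ^ (d - j) / M :=
      calc t ^ (d - j) ≤ (|y| / M) ^ (d - j) := by gcongr; rwa [le_div_iff₀' hM0]
        _ = |y| ^ (d - j) / M ^ (d - j) := div_pow _ _ _
        _ ≤ |y| ^ (d - j) / M := by gcongr; exact le_self_pow₀ hM (Nat.sub_ne_zero_of_lt hjd)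
    calc |c j * y ^ j| = |c j| * |y| ^ j := by rw [abs_mul, abs_pow]
      _ ≤ B j * (|y| ^ (d - j) / M) * |y| ^ j := by
          gcongr
          exact (hc j hjd).trans (mul_le_mul_of_nonneg_left hpow (hB j))
      _ = B j / M * (|y| ^ (d - j) * |y| ^ j) := by ring
      _ = B j / M * |y| ^ d := by rw [← pow_add, Nat.sub_add_cancel hjd.le]
  calc _ ≤ ∑ j ∈ Finset.range d, |c j * y ^ j| := Finset.abs_sum_le_sum_abs _ _
    _ ≤ ∑ j ∈ Finset.range d, B j / M * |y| ^ d := Finset.sum_le_sum hterm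
    _ = _ := by rw [Finset.sum_div, Finset.sum_mul]

theorem TaylorForm.eventually_close_above_slope {F U : ℝ × ℝ → ℝ} {d : ℕ} {c b : ℕ → ℝ → ℝ}
    (hT : TaylorForm F d c U) (hU0 : U 0 ≠ 0) (hQ : Q ≠ 0)
    (hb : ∀ j < d, ContinuousAt (b j) 0)
    (hcb : ∀ j < d, ∀ᶠ σ in 𝓝 (0 : ℝ), c j (σ ^ Q) = σ ^ (p * (d - j)) * b j σ) :
    ∀ᶠ M in atTop, ∀ᶠ q in 𝓝 (0 : ℝ × ℝ), 0 < q.1 → M * q.1 ^ ((p : ℝ) / Q) < |q.2| →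
      |F q - q.2 ^ d * U 0| ≤ |U 0| / 2 * |q.2| ^ d := by
  set B : ℕ → ℝ := fun j => |b j 0| + 1
  have hU0' : 0 < |U 0| / 4 := div_pos (abs_pos.2 hU0) (by norm_num)
  have hM : ∀ᶠ M in atTop, (∑ j ∈ Finset.range d, B j) / M ≤ |U 0| / 4 :=
    (tendsto_id.const_div_atTop _).eventually_le_const hU0'
  have hcoeff : ∀ᶠ s in 𝓝[>] (0 : ℝ), ∀ j ∈ Finset.range d,
      |c j s| ≤ B j * (s ^ ((p : ℝ) / Q)) ^ (d - j) :=
    (eventually_all_finset _).2 fun j hj => eventually_abs_le_mul_rpow_pow hQ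
      (hb j (Finset.mem_range.1 hj)) (hcb j (Finset.mem_range.1 hj))
  have hfst : Tendsto Prod.fst (𝓝 (0 : ℝ × ℝ)) (𝓝 0) := continuous_fst.tendsto' _ _ rfl
  filter_upwards [hM, eventually_ge_atTop 1] with M hM hM1
  filter_upwards [hT.eq, hfst.eventually (eventually_nhdsWithin_iff.1 hcoeff),
    eventually_abs_pow_mul_sub_le hT.rem.continuousAt d hU0']
    with q hFq hcq hUq hq1 hq2
  have hsum := abs_sum_mul_pow_le hM1 (Real.rpow_nonneg hq1.le _) hq2.le
    (fun j => by positivity) fun j hj => hcq hq1 j (Finset.mem_range.2 hj)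
  have hsum' := hsum.trans (mul_le_mul_of_nonneg_right hM (by positivity))
  rw [hFq, add_sub_assoc]
  refine (abs_add_le _ _).trans ((add_le_add hsum' hUq).trans_eq ?_)
  ring

end Slope

/-! ### Blowing up -/

section BlowUp

variable {Q p : ℕ} {u₀ : ℝ}

theorem eventually_const_mul_rpow_lt {θ : ℝ} (hθ : 0 < θ) (C : ℝ) {c : ℝ} (hc : 0 < c) :
    ∀ᶠ s in 𝓝[>] (0 : ℝ), C * s ^ θ < c :=
  (((tendsto_rpow_nhdsGT_zero hθ).mono_right nhdsWithin_le_nhds).const_mul C).eventually_lt_const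
    (by rwa [mul_zero])

theorem eventually_blowRegion_subset_box {θ : ℝ} (hθ : 0 < θ) (u₀ c₁ : ℝ) :
    ∀ᶠ c in 𝓝[>] (0 : ℝ), ∀ᶠ r in 𝓝[>] (0 : ℝ),
      blowRegion θ u₀ c₁ r ⊆ Ioo 0 r ×ˢ Ioo (-c) c := by
  filter_upwards [self_mem_nhdsWithin] with c (hc : 0 < c)
  filter_upwards [eventually_forall_mem_Ioo
    (eventually_const_mul_rpow_lt hθ (c₁ + |u₀|) hc)] with r hr q hq
  refine ⟨hq.1, abs_lt.1 ?_⟩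
  calc |q.2| = |(q.2 - u₀ * q.1 ^ θ) + u₀ * q.1 ^ θ| := by rw [sub_add_cancel]
    _ ≤ |q.2 - u₀ * q.1 ^ θ| + |u₀ * q.1 ^ θ| := abs_add_le _ _
    _ ≤ c₁ * q.1 ^ θ + |u₀| * q.1 ^ θ := by
        rw [abs_mul u₀, abs_of_pos (Real.rpow_pos_of_pos hq.1.1 θ)]
        exact add_le_add_left hq.2.le _
    _ < c := by rw [← add_mul]; exact hr _ hq.1

theorem exists_finset_subset_iUnion_blowRegion (θ M : ℝ) {ρ : ℝ → ℝ} (hρ : ∀ u, 0 < ρ u) :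
    ∃ t : Finset ℝ, ∀ r, {q : ℝ × ℝ | q.1 ∈ Ioo 0 r ∧ |q.2| ≤ M * q.1 ^ θ} ⊆
      ⋃ u ∈ t, blowRegion θ u (ρ u) r := by
  obtain ⟨t, -, ht⟩ := (isCompact_Icc (a := -M) (b := M)).elim_nhds_subcover
    (fun u => Metric.ball u (ρ u)) fun u _ => Metric.ball_mem_nhds u (hρ u)
  refine ⟨t, fun r q hq => ?_⟩
  have hpos : 0 < q.1 ^ θ := Real.rpow_pos_of_pos hq.1.1 θ
  have hratio : q.2 / q.1 ^ θ ∈ Icc (-M) M :=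
    abs_le.1 (by rw [abs_div, abs_of_pos hpos]; exact (div_le_iff₀ hpos).2 hq.2)
  obtain ⟨u, hu, hqu⟩ := mem_iUnion₂.1 (ht hratio)
  refine mem_iUnion₂.2 ⟨u, hu, hq.1, ?_⟩
  calc |q.2 - u * q.1 ^ θ| = |q.2 / q.1 ^ θ - u| * q.1 ^ θ := by
        rw [← abs_of_pos hpos, ← abs_mul, abs_of_pos hpos, sub_mul, div_mul_cancel₀ _ hpos.ne']
    _ < ρ u * q.1 ^ θ := mul_lt_mul_of_pos_right hqu hpos

theorem HasGauge.of_blowUp {w : ℝ × ℝ → ENNReal} (hQ : Q ≠ 0) (hp : p ≠ 0) {M : ℝ} (hM : 0 ≤ M)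
    (hblow : ∀ u₀, HasGauge (boxIntegral (blowWeight w Q p u₀)))
    (hwedge : ∀ ε : ℝ, |ε| = 1 → HasGauge fun c r =>
      ∫⁻ q in wedge (fun s => M * s ^ ((p : ℝ) / Q)) ε c r, w q) :
    HasGauge (boxIntegral w) := by
  have hpiece : ∀ u₀ : ℝ, ∃ ρ > 0, HasGauge fun _ r =>
      ∫⁻ q in blowRegion ((p : ℝ) / Q) u₀ ρ r, w q := by
    intro u₀
    obtain ⟨φ, hφ, hc⟩ := (hblow u₀).setLIntegral_blowRegion hQ
    obtain ⟨ρ, hρφ, hρ : 0 < ρ⟩ := (hc.and self_mem_nhdsWithin).exists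
    exact ⟨ρ, hρ, φ, hφ, .of_forall fun _ => hρφ⟩
  choose ρ hρ hgauge using hpiece
  obtain ⟨t, ht⟩ := exists_finset_subset_iUnion_blowRegion ((p : ℝ) / Q) M hρ
  exact .boxIntegral_of_cover (fun s hs => mul_nonneg hM (Real.rpow_nonneg hs.le _)) hwedge
    (fun u _ => hgauge u) (fun u _ => eventually_blowRegion_subset_box (by positivity) u (ρ u))
    fun r => by rw [sdiff_eq_empty.2 (ht r), measure_empty]

/-- The strict transform, under the weighted blow-up centred at `u₀`, of a function with Taylor
form `∑ j < d, c j (s) y ^ j + y ^ d U`, where `c j (σ ^ Q) = σ ^ (p (d - j)) b j (σ)`. -/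
def strictTransform (d : ℕ) (b : ℕ → ℝ → ℝ) (U : ℝ × ℝ → ℝ) (Q p : ℕ) (u₀ : ℝ) (z : ℝ × ℝ) : ℝ :=
  ∑ j ∈ Finset.range d, b j z.1 * (u₀ + z.2) ^ j + (u₀ + z.2) ^ d * U (blowUp Q p u₀ z)

theorem analyticAt_blowUp (Q p : ℕ) (u₀ : ℝ) (z : ℝ × ℝ) : AnalyticAt ℝ (blowUp Q p u₀) z :=
  (analyticAt_fst.fun_pow Q).prod
    ((analyticAt_fst.fun_pow p).fun_mul (analyticAt_const.fun_add analyticAt_snd))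

theorem blowUp_zero_left (hQ : Q ≠ 0) (hp : p ≠ 0) (u₀ u : ℝ) : blowUp Q p u₀ (0, u) = 0 := by
  simp [blowUp, hQ, hp]

theorem analyticAt_strictTransform {d : ℕ} {b : ℕ → ℝ → ℝ} {U : ℝ × ℝ → ℝ}
    (hb : ∀ j < d, AnalyticAt ℝ (b j) 0) (hU : AnalyticAt ℝ U 0) (hQ : Q ≠ 0) (hp : p ≠ 0)
    (u₀ : ℝ) : AnalyticAt ℝ (strictTransform d b U Q p u₀) 0 := by
  have hlin : AnalyticAt ℝ (fun z : ℝ × ℝ => u₀ + z.2) 0 := analyticAt_const.fun_add analyticAt_snd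
  have hcoeff : ∀ j < d, AnalyticAt ℝ (fun z : ℝ × ℝ => b j z.1) 0 := fun j hj =>
    AnalyticAt.fun_comp (f := Prod.fst) (g := b j) (hb j hj) analyticAt_fst
  exact (Finset.analyticAt_fun_sum _ fun j hj =>
    (hcoeff j (Finset.mem_range.1 hj)).fun_mul (hlin.fun_pow j)).fun_add ((hlin.fun_pow d).fun_mul
      (hU.fun_comp_of_eq (analyticAt_blowUp Q p u₀ 0) (blowUp_zero_left hQ hp u₀ 0)))

theorem regularOrder_strictTransform {d : ℕ} {b : ℕ → ℝ → ℝ} {U : ℝ × ℝ → ℝ}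
    (hb : ∀ j < d, AnalyticAt ℝ (b j) 0) (hU : AnalyticAt ℝ U 0) (hU0 : U 0 ≠ 0) (hQ : Q ≠ 0)
    (hp : p ≠ 0) (u₀ : ℝ) :
    RegularOrder (strictTransform d b U Q p u₀)
      ((topPoly d (fun j => b j 0) (U 0)).rootMultiplicity u₀) := by
  refine .of_eventually_eq_eval (analyticAt_strictTransform hb hU hQ hp u₀)
    (topPoly_ne_zero hU0) (.of_forall fun u => ?_)
  rw [eval_topPoly, strictTransform, blowUp_zero_left hQ hp, mul_comm (U 0)]

theorem TaylorForm.comp_blowUp {F U : ℝ × ℝ → ℝ} {d : ℕ} {c b : ℕ → ℝ → ℝ}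
    (hT : TaylorForm F d c U) (hQ : Q ≠ 0) (hp : p ≠ 0)
    (hcb : ∀ j < d, ∀ᶠ σ in 𝓝 (0 : ℝ), c j (σ ^ Q) = σ ^ (p * (d - j)) * b j σ) (u₀ : ℝ) :
    ∀ᶠ z in 𝓝 (0 : ℝ × ℝ), F (blowUp Q p u₀ z) =
      z.1 ^ (p * d) * strictTransform d b U Q p u₀ z := by
  have hblow : Tendsto (blowUp Q p u₀) (𝓝 0) (𝓝 0) :=
    (analyticAt_blowUp Q p u₀ 0).continuousAt.tendsto.trans_eq
      (congrArg 𝓝 (blowUp_zero_left hQ hp u₀ 0))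
  have hfst : Tendsto Prod.fst (𝓝 (0 : ℝ × ℝ)) (𝓝 0) := continuous_fst.tendsto' _ _ rfl
  have hcb' : ∀ᶠ σ in 𝓝 (0 : ℝ), ∀ j ∈ Finset.range d,
      c j (σ ^ Q) = σ ^ (p * (d - j)) * b j σ :=
    (eventually_all_finset _).2 fun j hj => hcb j (Finset.mem_range.1 hj)
  filter_upwards [hblow.eventually hT.eq, hfst.eventually hcb'] with z hFz hcz
  rw [hFz, strictTransform, mul_add (z.1 ^ (p * d)), Finset.mul_sum]
  congr 1
  · refine Finset.sum_congr rfl fun j hj => ?_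
    have hpow : z.1 ^ (p * d) = z.1 ^ (p * (d - j)) * (z.1 ^ p) ^ j := by
      rw [← pow_mul, ← pow_add, ← mul_add, Nat.sub_add_cancel (Finset.mem_range.1 hj).le]
    simp only [blowUp, hcz j hj, hpow, mul_pow]
    ring
  · simp only [blowUp, mul_pow, pow_mul]
    ring

theorem blowWeight_locWeight {ι : Type*} [Fintype ι] {F G : ι → ℝ × ℝ → ℝ} (γ : ι → ℝ) (α : ℝ)
    (E : Set (ℝ × ℝ)) {k : ι → ℕ} {z : ℝ × ℝ} (hz : 0 < z.1)
    (h : ∀ i, F i (blowUp Q p u₀ z) = z.1 ^ k i * G i z) :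
    blowWeight (locWeight F γ α E) Q p u₀ z = ENNReal.ofReal Q *
      locWeight G γ ((Q - 1 : ℕ) + p + Q * α + ∑ i, k i * γ i) (blowUp Q p u₀ ⁻¹' E) z := by
  have hprod : ∏ i, |F i (blowUp Q p u₀ z)| ^ γ i =
      z.1 ^ (∑ i, k i * γ i) * ∏ i, |G i z| ^ γ i := by
    rw [← prod_pow_rpow hz, ← Finset.prod_mul_distrib]
    refine Finset.prod_congr rfl fun i _ => ?_
    rw [h i, abs_mul, abs_of_pos (pow_pos hz _), Real.mul_rpow (pow_pos hz _).le (abs_nonneg _)]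
  have hfst : (blowUp Q p u₀ z).1 ^ α = z.1 ^ (Q * α) := (Real.rpow_natCast_mul hz.le _ _).symm
  rw [blowWeight, locWeight, locWeight]
  by_cases hE : blowUp Q p u₀ z ∈ E
  · rw [indicator_of_mem hE, indicator_of_mem (mem_preimage.2 hE),
      ← ENNReal.ofReal_mul (by positivity), ← ENNReal.ofReal_mul (by positivity), hprod, hfst,
      Real.rpow_add hz, Real.rpow_add hz, Real.rpow_add hz, Real.rpow_natCast, Real.rpow_natCast]
    ring_nf
  · rw [indicator_of_notMem hE, indicator_of_notMem (mt mem_preimage.1 hE), mul_zero, mul_zero]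

end BlowUp

theorem HasGauge.const_mul {w : ℝ × ℝ → ENNReal} (h : HasGauge (boxIntegral w)) {C : ENNReal}
    (hC0 : C ≠ 0) (hC : C ≠ ⊤) : HasGauge (boxIntegral fun p => C * w p) := by
  refine h.of_comparable (.of_forall fun c => ?_)
  have heq : boxIntegral (fun p => C * w p) c = fun r => C * boxIntegral w c r :=
    funext fun r => lintegral_const_mul' _ _ hC
  exact heq ▸ Comparable.const_mul hC0 hC _

theorem FrontierInZeros.comp_shear {ι : Type*} {F : ι → ℝ × ℝ → ℝ} {E : Set (ℝ × ℝ)}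
    (h : FrontierInZeros F E) {φ : ℝ → ℝ} (hφ : AnalyticAt ℝ φ 0) (hφ0 : φ 0 = 0) :
    FrontierInZeros (fun i => F i ∘ shear φ) (shear φ ⁻¹' E) :=
  h.comap ((analyticAt_shear (p := 0) hφ).eventually_analyticAt.mono fun _ hp => hp.continuousAt)
    (shear_zero hφ0) (fun _ hp => hp) (.of_forall fun _ _ _ hi => hi)

theorem eq_zero_of_eventually_pow_mul_eq_zero {b : ℝ → ℝ} {e : ℕ} (hb : ContinuousAt b 0)
    (h : ∀ᶠ σ in 𝓝 (0 : ℝ), σ ^ e * b σ = 0) : b 0 = 0 := by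
  have hzero : ∀ᶠ σ in 𝓝[≠] (0 : ℝ), b σ = 0 := by
    filter_upwards [nhdsWithin_le_nhds h, self_mem_nhdsWithin] with σ hσ hσ0
    exact (mul_eq_zero.1 hσ).resolve_left (pow_ne_zero e hσ0)
  exact tendsto_nhds_unique (hb.tendsto.mono_left nhdsWithin_le_nhds)
    (tendsto_const_nhds.congr' (hzero.mono fun _ h => h.symm))

/-! ### Induction on the sum of the orders -/

section Induction

variable {ι : Type*} [Fintype ι] {F U : ι → ℝ × ℝ → ℝ} {d : ι → ℕ} {c b : ι → ℕ → ℝ → ℝ}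
  {E : Set (ℝ × ℝ)} {p Q : ℕ} {α : ℝ}

theorem hasGauge_of_coeff_eq_zero (γ : ι → ℝ) (hEF : FrontierInZeros F E)
    (hT : ∀ i, TaylorForm (F i) (d i) (c i) (U i)) (hU0 : ∀ i, U i 0 ≠ 0)
    (hc : ∀ i, ∀ j < d i, ∀ᶠ s in 𝓝 (0 : ℝ), c i j s = 0) :
    HasGauge (boxIntegral (locWeight F γ α E)) := by
  refine hasGauge_of_normal_crossings (d := d) γ α hEF (fun i => (hT i).rem.continuousAt) hU0
    fun i => ?_
  have hfst : Tendsto Prod.fst (𝓝 (0 : ℝ × ℝ)) (𝓝 0) := continuous_fst.tendsto' _ _ rfl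
  have hci : ∀ᶠ s in 𝓝 (0 : ℝ), ∀ j ∈ Finset.range (d i), c i j s = 0 :=
    (eventually_all_finset _).2 fun j hj => hc i j (Finset.mem_range.1 hj)
  filter_upwards [(hT i).eq, hfst.eventually hci] with q hFq hcq
  rw [hFq, Finset.sum_eq_zero fun j hj => by rw [hcq j hj, zero_mul], zero_add]

theorem hasGauge_of_hasGauge_strictTransform (γ : ι → ℝ) (hEF : FrontierInZeros F E)
    (hT : ∀ i, TaylorForm (F i) (d i) (c i) (U i)) (hU0 : ∀ i, U i 0 ≠ 0) (hp : p ≠ 0)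
    (hQ : Q ≠ 0)
    (hb : ∀ i, ∀ j < d i, AnalyticAt ℝ (b i j) 0 ∧
      ∀ᶠ σ in 𝓝 (0 : ℝ), c i j (σ ^ Q) = σ ^ (p * (d i - j)) * b i j σ)
    (hblow : ∀ (u₀ α' : ℝ) (E' : Set (ℝ × ℝ)),
      FrontierInZeros (fun i => strictTransform (d i) (b i) (U i) Q p u₀) E' →
      HasGauge (boxIntegral
        (locWeight (fun i => strictTransform (d i) (b i) (U i) Q p u₀) γ α' E'))) :
    HasGauge (boxIntegral (locWeight F γ α E)) := by
  have hθ : 0 < (p : ℝ) / Q := by positivity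
  obtain ⟨M, hclose, hM⟩ := ((eventually_all.2 fun i => (hT i).eventually_close_above_slope
    (hU0 i) hQ (fun j hj => (hb i j hj).1.continuousAt) fun j hj => (hb i j hj).2).and
      (eventually_gt_atTop 0)).exists
  refine .of_blowUp hQ hp hM.le (fun u₀ => ?_) fun ε hε => ?_
  · have hFblow := eventually_all.2 fun i =>
      (hT i).comp_blowUp hQ hp (fun j hj => (hb i j hj).2) u₀
    refine ((hblow u₀ ((Q - 1 : ℕ) + p + Q * α + ∑ i, (p * d i : ℕ) * γ i) _
      (hEF.comap (Φ := blowUp Q p u₀)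
        (.of_forall fun z => (analyticAt_blowUp Q p u₀ z).continuousAt)
        (blowUp_zero_left hQ hp u₀ 0) (fun z hz => pow_pos hz Q) ?_)).const_mul
        (C := ENNReal.ofReal Q) (by simpa using hQ) ENNReal.ofReal_ne_top).congr_weight ?_
    · filter_upwards [hFblow] with z hz hz0 i hi
      exact (mul_eq_zero.1 ((hz i).symm.trans hi)).resolve_left (pow_pos hz0 _).ne'
    · filter_upwards [hFblow] with z hz hz0 using (blowWeight_locWeight γ α E hz0 hz).symm
  · exact hasGauge_wedge_locWeight γ α (continuous_const.mul (Real.continuous_rpow_const hθ.le))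
      (by rw [Real.zero_rpow hθ.ne', mul_zero])
      (fun s hs => mul_nonneg hM.le (Real.rpow_nonneg hs.le _)) hε hEF hU0
      ((eventually_all.2 hclose).mono fun q hq h0 hk i => hq i h0 hk)
      (hasGauge_wedge_rpow hM hθ α _ hε)

theorem hasGauge_locWeight (γ : ι → ℝ) (hF : ∀ i, RegularOrder (F i) (d i))
    (hEF : FrontierInZeros F E) : HasGauge (boxIntegral (locWeight F γ α E)) := by
  induction hD : ∑ i, d i using Nat.strong_induction_on generalizing F α E d with
  | _ D ih =>
  by_cases hd : ∀ i, d i = 0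
  · choose c U hT using fun i => exists_taylorForm (hF i).analytic (d i)
    exact hasGauge_of_coeff_eq_zero γ hEF hT (fun i => (hT i).rem_ne_zero (hF i))
      fun i j hj => absurd hj (by simp [hd i])
  obtain ⟨i₁, hi₁⟩ := not_forall.1 hd
  obtain ⟨m, hm⟩ := Nat.exists_eq_succ_of_ne_zero hi₁
  obtain ⟨φ, hφ, hφ0, hkill⟩ := RegularOrder.exists_shear (hm ▸ hF i₁)
  refine HasGauge.of_comp_shear hφ hφ0 ?_
  change HasGauge (boxIntegral (locWeight (fun i => F i ∘ shear φ) γ α (shear φ ⁻¹' E)))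
  have hF' : ∀ i, RegularOrder (F i ∘ shear φ) (d i) := fun i => (hF i).comp_shear hφ hφ0
  choose c U hT using fun i => exists_taylorForm (hF' i).analytic (d i)
  have hU0 : ∀ i, U i 0 ≠ 0 := fun i => (hT i).rem_ne_zero (hF' i)
  by_cases hall : ∀ i, ∀ j < d i, ∀ᶠ s in 𝓝 (0 : ℝ), c i j s = 0
  · exact hasGauge_of_coeff_eq_zero γ (hEF.comp_shear hφ hφ0) hT hU0 hall
  simp only [not_forall, exists_prop] at hall
  obtain ⟨p, Q, b, hp, hQ, hb, hne⟩ :=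
    exists_newton_slope (fun i => (hT i).coeff) (fun i => (hT i).coeff_zero (hF' i)) hall
  have hbm : b i₁ m 0 = 0 := by
    have hT₁ := hT i₁
    rw [hm] at hT₁
    have hcm := hkill _ _ hT₁
    obtain ⟨hban, hbeq⟩ := hb i₁ m (hm ▸ m.lt_succ_self)
    refine eq_zero_of_eventually_pow_mul_eq_zero (e := p * (d i₁ - m))
      hban.continuousAt ?_
    filter_upwards [hbeq, ((continuous_pow Q).tendsto' (0 : ℝ) 0 (zero_pow hQ)).eventually hcm]
      with σ hσ hσ0 using hσ.symm.trans hσ0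
  refine hasGauge_of_hasGauge_strictTransform γ (hEF.comp_shear hφ hφ0) hT hU0 hp hQ hb
    fun u₀ α' E' hE' => ih _ ?_ (fun i => regularOrder_strictTransform
      (fun j hj => (hb i j hj).1) (hT i).rem (hU0 i) hQ hp u₀) hE' rfl
  exact hD ▸ sum_rootMultiplicity_topPoly_lt hU0 hm hbm hne u₀

end Induction

/-! ### Thin sets -/

section NonzeroGerms

variable {E : Type*} [NormedAddCommGroup E] [NormedSpace ℝ E] {f g : E → ℝ} {x : E}

theorem eventually_eq_zero_of_eventually_mem (hf : AnalyticAt ℝ f x) {V : Set E} (hV : IsOpen V)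
    (hx : x ∈ closure V) (h : ∀ᶠ y in 𝓝 x, y ∈ V → f y = 0) : ∀ᶠ y in 𝓝 x, f y = 0 := by
  obtain ⟨ε, hε, hball⟩ := Metric.eventually_nhds_iff_ball.1 (hf.eventually_analyticAt.and h)
  obtain ⟨y, hyε, hyV⟩ := mem_closure_iff.1 hx _ Metric.isOpen_ball (Metric.mem_ball_self hε)
  have hy : f =ᶠ[𝓝 y] 0 := by
    filter_upwards [Metric.isOpen_ball.mem_nhds hyε, hV.mem_nhds hyV] with z hzε hzV
      using (hball z hzε).2 hzV
  have han : AnalyticOnNhd ℝ f (Metric.ball x ε) := fun z hz => (hball z hz).1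
  exact (han.eqOn_zero_of_preconnected_of_eventuallyEq_zero (convex_ball x ε).isPreconnected hyε
    hy).eventuallyEq_of_mem (Metric.ball_mem_nhds x hε)

theorem eventually_eq_zero_or_of_mul (hf : AnalyticAt ℝ f x) (hg : AnalyticAt ℝ g x)
    (h : ∀ᶠ y in 𝓝 x, f y * g y = 0) : (∀ᶠ y in 𝓝 x, f y = 0) ∨ ∀ᶠ y in 𝓝 x, g y = 0 := by
  refine or_iff_not_imp_left.2 fun hne =>
    eventually_eq_zero_of_eventually_mem hg (isOpen_interior (s := {y | f y ≠ 0})) ?_ ?_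
  · have hcont : ∀ᶠ y in 𝓝 x, ContinuousAt f y :=
      hf.eventually_analyticAt.mono fun _ hy => hy.continuousAt
    refine mem_closure_iff_frequently.2 (((not_eventually.1 hne).and_eventually hcont).mono ?_)
    exact fun y hy => mem_interior_iff_mem_nhds.2 (hy.2.eventually_ne hy.1)
  · exact h.mono fun y hy hyV => (mul_eq_zero.1 hy).resolve_left (interior_subset hyV)

theorem not_eventually_prod_eq_zero {ι : Type*} {s : Finset ι} {f : ι → E → ℝ}
    (hf : ∀ i ∈ s, AnalyticAt ℝ (f i) x) (hf0 : ∀ i ∈ s, ¬ ∀ᶠ y in 𝓝 x, f i y = 0) :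
    ¬ ∀ᶠ y in 𝓝 x, ∏ i ∈ s, f i y = 0 := by
  classical
  induction s using Finset.induction_on with
  | empty => simp [(nhds_neBot (x := x)).ne]
  | insert i s hi ih =>
    simp only [Finset.prod_insert hi]
    rw [Finset.forall_mem_insert] at hf hf0
    intro h
    exact (eventually_eq_zero_or_of_mul hf.1 (Finset.analyticAt_fun_prod s hf.2) h).elim hf0.1
      (ih hf.2 hf0.2)

theorem not_eventually_comp_eq_zero {X Y : Type*} [TopologicalSpace X] [TopologicalSpace Y]
    {f : Y → ℝ} {Φ : X → Y} {Ψ : Y → X} {x : X} {y : Y} (hf : ¬ ∀ᶠ z in 𝓝 y, f z = 0)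
    (hΨ : Tendsto Ψ (𝓝 y) (𝓝 x)) (h : Function.LeftInverse Φ Ψ) :
    ¬ ∀ᶠ z in 𝓝 x, f (Φ z) = 0 :=
  mt (fun hz => (hΨ.eventually hz).mono fun z => by rw [h z]; exact id) hf

end NonzeroGerms

/-- Near the origin, `S` is contained in the zero set of a nonzero analytic function. -/
def IsAnalyticallyThin (S : Set (ℝ × ℝ)) : Prop :=
  ∃ φ : ℝ × ℝ → ℝ, AnalyticAt ℝ φ 0 ∧ (¬ ∀ᶠ p in 𝓝 0, φ p = 0) ∧ ∀ᶠ p in 𝓝 0, p ∈ S → φ p = 0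

section IsAnalyticallyThin

variable {S T : Set (ℝ × ℝ)}

theorem IsAnalyticallyThin.mono (hT : IsAnalyticallyThin T)
    (h : ∀ᶠ p in 𝓝 0, p ∈ S → p ∈ T) : IsAnalyticallyThin S := by
  obtain ⟨φ, hφ, hφ0, hφT⟩ := hT
  exact ⟨φ, hφ, hφ0, (h.and hφT).mono fun p hp hpS => hp.2 (hp.1 hpS)⟩

theorem IsAnalyticallyThin.iUnion {ι : Type*} [Finite ι] {S : ι → Set (ℝ × ℝ)}
    (hS : ∀ i, IsAnalyticallyThin (S i)) : IsAnalyticallyThin (⋃ i, S i) := by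
  cases nonempty_fintype ι
  choose φ hφ hφ0 hφS using hS
  refine ⟨fun p => ∏ i, φ i p, Finset.analyticAt_fun_prod _ fun i _ => hφ i,
    not_eventually_prod_eq_zero (fun i _ => hφ i) fun i _ => hφ0 i, ?_⟩
  filter_upwards [eventually_all.2 hφS] with p hp hpS
  obtain ⟨i, hi⟩ := mem_iUnion.1 hpS
  exact Finset.prod_eq_zero (Finset.mem_univ i) (hp i hi)

theorem IsAnalyticallyThin.union (hS : IsAnalyticallyThin S) (hT : IsAnalyticallyThin T) :
    IsAnalyticallyThin (S ∪ T) := by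
  rw [union_eq_iUnion]
  exact .iUnion (Bool.forall_bool.2 ⟨hT, hS⟩)

theorem IsAnalyticallyThin.preimage {Φ Ψ : ℝ × ℝ → ℝ × ℝ} (hT : IsAnalyticallyThin T)
    (hΦ : AnalyticAt ℝ Φ 0) (hΦ0 : Φ 0 = 0) (hΨ : Tendsto Ψ (𝓝 0) (𝓝 0))
    (hΦΨ : Function.LeftInverse Φ Ψ) : IsAnalyticallyThin (Φ ⁻¹' T) := by
  obtain ⟨φ, hφ, hφ0, hφT⟩ := hT
  have hlim : Tendsto Φ (𝓝 0) (𝓝 0) := hΦ.continuousAt.tendsto.trans_eq (congrArg 𝓝 hΦ0)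
  exact ⟨fun p => φ (Φ p), hφ.fun_comp_of_eq hΦ hΦ0, not_eventually_comp_eq_zero hφ0 hΨ hΦΨ,
    hlim.eventually hφT⟩

theorem isAnalyticallyThin_of_eventually_notMem (h : ∀ᶠ p in 𝓝 0, p ∉ S) :
    IsAnalyticallyThin S :=
  ⟨1, analyticAt_const, by simp [nhds_neBot.ne], h.mono fun _ hp hpS => absurd hpS hp⟩

end IsAnalyticallyThin

/-! ### Graphs over a root are thin -/

theorem exists_analyticAt_hasSum {a : ℕ → ℝ} {t : ℝ} (ht : 0 < t)
    (h : Summable fun n => ‖a n‖ * t ^ n) :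
    ∃ g : ℝ → ℝ, AnalyticAt ℝ g 0 ∧ ∀ᶠ x in 𝓝 0, HasSum (fun n => x ^ n * a n) (g x) := by
  lift t to NNReal using ht.le
  set P := FormalMultilinearSeries.ofScalars ℝ a
  have hrad : 0 < P.radius := by
    refine (ENNReal.coe_pos.2 (NNReal.coe_pos.1 ht)).trans_le (P.le_radius_of_summable_norm ?_)
    simpa only [P, FormalMultilinearSeries.ofScalars_norm] using h
  have hP : HasFPowerSeriesAt P.sum P 0 := (P.hasFPowerSeriesOnBall hrad).hasFPowerSeriesAt
  refine ⟨P.sum, hP.analyticAt, (hasFPowerSeriesAt_iff'.1 hP).mono fun x hx => ?_⟩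
  simpa only [P, sub_zero, smul_eq_mul, FormalMultilinearSeries.coeff_ofScalars] using hx

theorem exists_eq_sum_pow_mul_comp_pow {h : ℝ → ℝ} (hh : AnalyticAt ℝ h 0) (N : ℕ) [NeZero N] :
    ∃ g : Fin N → ℝ → ℝ, (∀ j, AnalyticAt ℝ (g j) 0) ∧
      ∀ᶠ t in 𝓝 (0 : ℝ), h t = ∑ j : Fin N, t ^ (j : ℕ) * g j (t ^ N) := by
  obtain ⟨P, hP⟩ := hh
  set a : ℕ → ℝ := P.coeff
  have hsum : ∀ᶠ t in 𝓝 (0 : ℝ), HasSum (fun n => t ^ n * a n) (h t) := by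
    simpa only [sub_zero, smul_eq_mul] using hasFPowerSeriesAt_iff'.1 hP
  obtain ⟨t₀, ht₀, ht₀pos : 0 < t₀⟩ :=
    ((hsum.filter_mono nhdsWithin_le_nhds).and self_mem_nhdsWithin :
      ∀ᶠ t in 𝓝[>] (0 : ℝ), _).exists
  have hres : ∀ j : Fin N, Summable fun k => ‖a (k * N + j)‖ * (t₀ ^ N) ^ k := fun j => by
    have hinj : Function.Injective fun k : ℕ => k * N + j :=
      (add_left_injective _).comp (mul_left_injective₀ (NeZero.ne N))
    refine ((ht₀.summable.norm.comp_injective hinj).mul_left (t₀ ^ (j : ℕ))⁻¹).congr fun k => ?_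
    simp only [Function.comp_apply, norm_mul, norm_pow, Real.norm_of_nonneg ht₀pos.le]
    field_simp
    ring
  choose g hg hgsum using fun j => exists_analyticAt_hasSum (pow_pos ht₀pos N) (hres j)
  refine ⟨g, hg, ?_⟩
  have hpow : Tendsto (fun t : ℝ => t ^ N) (𝓝 0) (𝓝 0) :=
    (continuous_pow N).tendsto' _ _ (zero_pow (NeZero.ne N))
  filter_upwards [hsum, hpow.eventually (eventually_all.2 hgsum)] with t ht htg
  have hsplit : HasSum (fun q : Fin N × ℕ => t ^ (q.2 * N + q.1) * a (q.2 * N + q.1)) (h t) :=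
    ((Equiv.prodComm _ _).trans (Nat.divModEquiv N).symm).hasSum_iff.2 ht
  refine (hsplit.prod_fiberwise fun j => ?_).unique (hasSum_fintype _)
  refine ((htg j).mul_left (t ^ (j : ℕ))).congr_fun fun k => ?_
  ring

section RootMulMatrix

variable {N : ℕ} {g : Fin N → ℝ → ℝ}

/-- The matrix of multiplication by `∑ j, t ^ j * g j x` with respect to `1, t, …, t ^ (N - 1)`,
where `x = t ^ N`. Its characteristic polynomial is the norm that eliminates the root `t`. -/
def rootMulMatrix (g : Fin N → ℝ → ℝ) (x : ℝ) : Matrix (Fin N) (Fin N) ℝ :=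
  Matrix.of fun i l => (if i ≤ l then 1 else x) * g (l - i) x

theorem ite_mul_pow_val_add (t : ℝ) (i j : Fin N) :
    (if i ≤ i + j then 1 else t ^ N) * t ^ (i + j : Fin N).val = t ^ i.val * t ^ j.val := by
  have hval := Fin.val_add_eq_ite i j
  have hj : j.val < N := j.isLt
  rw [← pow_add]
  by_cases h : N ≤ i.val + j.val
  · rw [if_pos h] at hval
    rw [if_neg (fun hle => by have := Fin.le_def.1 hle; lia), hval, ← pow_add,
      Nat.add_sub_cancel' h]
  · rw [if_neg h] at hval
    rw [if_pos (Fin.le_def.2 (by lia)), hval, one_mul]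

theorem rootMulMatrix_mulVec [NeZero N] (g : Fin N → ℝ → ℝ) (t : ℝ) :
    (rootMulMatrix g (t ^ N)).mulVec (fun l => t ^ l.val) =
      (∑ j, t ^ j.val * g j (t ^ N)) • fun l : Fin N => t ^ l.val := by
  ext i
  simp only [Matrix.mulVec, dotProduct, rootMulMatrix, Matrix.of_apply, Pi.smul_apply, smul_eq_mul]
  rw [Finset.sum_mul]
  refine (Fintype.sum_equiv (Equiv.addLeft i) _ _ fun j => ?_).symm
  rw [Equiv.coe_addLeft, add_sub_cancel_left, mul_right_comm (ite _ _ _), ite_mul_pow_val_add]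
  ring

theorem det_scalar_sub_rootMulMatrix_eq_zero [NeZero N] (g : Fin N → ℝ → ℝ) (t : ℝ) :
    (Matrix.scalar (Fin N) (∑ j, t ^ j.val * g j (t ^ N)) - rootMulMatrix g (t ^ N)).det = 0 := by
  refine Matrix.exists_mulVec_eq_zero_iff.1 ⟨fun l => t ^ l.val, fun h => ?_, ?_⟩
  · simpa using congrFun h 0
  · rw [Matrix.sub_mulVec, rootMulMatrix_mulVec, Matrix.scalar_apply,
      ← Matrix.smul_one_eq_diagonal, Matrix.smul_mulVec, Matrix.one_mulVec, sub_self]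

theorem analyticAt_det_scalar_sub_rootMulMatrix (hg : ∀ j, AnalyticAt ℝ (g j) 0) :
    AnalyticAt ℝ (fun p : ℝ × ℝ => (Matrix.scalar (Fin N) p.2 - rootMulMatrix g p.1).det) 0 := by
  have hentry : ∀ i l, AnalyticAt ℝ
      (fun p : ℝ × ℝ => (Matrix.scalar (Fin N) p.2 - rootMulMatrix g p.1) i l) 0 := by
    intro i l
    have hgl : AnalyticAt ℝ (fun p : ℝ × ℝ => g (l - i) p.1) 0 :=
      AnalyticAt.fun_comp (f := Prod.fst) (g := g (l - i)) (hg _) analyticAt_fst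
    simp only [Matrix.sub_apply, Matrix.scalar_apply, Matrix.diagonal_apply, rootMulMatrix,
      Matrix.of_apply]
    refine AnalyticAt.fun_sub ?_ (AnalyticAt.fun_mul ?_ hgl)
    · split_ifs
      exacts [analyticAt_snd, analyticAt_const]
    · split_ifs
      exacts [analyticAt_const, analyticAt_fst]
  simp only [Matrix.det_apply']
  exact Finset.analyticAt_fun_sum _ fun τ _ =>
    analyticAt_const.fun_mul (Finset.analyticAt_fun_prod _ fun i _ => hentry _ i)

theorem not_eventually_det_scalar_sub_rootMulMatrix_eq_zero (g : Fin N → ℝ → ℝ) :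
    ¬ ∀ᶠ p : ℝ × ℝ in 𝓝 0, (Matrix.scalar (Fin N) p.2 - rootMulMatrix g p.1).det = 0 := by
  intro h
  have hroots : ∀ᶠ y in 𝓝 (0 : ℝ), (rootMulMatrix g 0).charpoly.IsRoot y := by
    have hy : Tendsto (fun y : ℝ => ((0 : ℝ), y)) (𝓝 0) (𝓝 0) :=
      (Continuous.prodMk_right 0).tendsto' _ _ rfl
    filter_upwards [hy.eventually h] with y hy
    rwa [Polynomial.IsRoot, Matrix.eval_charpoly]
  refine (infinite_of_mem_nhds 0 hroots) ?_
  exact Polynomial.finite_setOfPred_isRoot (rootMulMatrix g 0).charpoly_monic.ne_zero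

end RootMulMatrix

theorem isAnalyticallyThin_graph_root {h : ℝ → ℝ} (hh : AnalyticAt ℝ h 0) {N : ℕ} (hN : N ≠ 0)
    {σ : ℝ} (hσ : σ = 1 ∨ σ = -1) (T : ℝ) :
    IsAnalyticallyThin ((fun t => (σ * t, h (t ^ (1 / (N : ℝ))))) '' Icc 0 T) := by
  have : NeZero N := ⟨hN⟩
  have hσσ : σ * σ = 1 := by rcases hσ with rfl | rfl <;> norm_num
  obtain ⟨g, hg, hgh⟩ := exists_eq_sum_pow_mul_comp_pow hh N
  let Φ : ℝ × ℝ → ℝ × ℝ := fun p => (σ * p.1, p.2)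
  have hΦ : Continuous Φ := by fun_prop
  have hΦΦ : Function.LeftInverse Φ Φ := fun p =>
    Prod.ext (by simp only [Φ, ← mul_assoc, hσσ, one_mul]) rfl
  refine IsAnalyticallyThin.mono (T := Φ ⁻¹' {p | 0 ≤ p.1 ∧ p.2 = h (p.1 ^ (1 / (N : ℝ)))})
    (.preimage ⟨_, analyticAt_det_scalar_sub_rootMulMatrix hg,
      not_eventually_det_scalar_sub_rootMulMatrix_eq_zero g, ?_⟩
      ((analyticAt_const.fun_mul analyticAt_fst).prod analyticAt_snd) (by simp [Φ])
      (hΦ.tendsto' 0 0 (by simp [Φ])) hΦΦ) (.of_forall ?_)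
  · have hroot : Tendsto (fun p : ℝ × ℝ => p.1 ^ (1 / (N : ℝ))) (𝓝 0) (𝓝 0) :=
      ((Real.continuous_rpow_const (by positivity)).comp continuous_fst).tendsto' _ _
        (by simp [hN])
    filter_upwards [hroot.eventually hgh] with p hp ⟨hp1, hp2⟩
    have hpow : (p.1 ^ (1 / (N : ℝ))) ^ N = p.1 := by
      rw [one_div, Real.rpow_inv_natCast_pow hp1 hN]
    have hdet := det_scalar_sub_rootMulMatrix_eq_zero g (p.1 ^ (1 / (N : ℝ)))
    rwa [← hp, ← hp2, hpow] at hdet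
  · rintro _ ⟨t, ht, rfl⟩
    have ht' : σ * (σ * t) = t := by rw [← mul_assoc, hσσ, one_mul]
    exact ⟨by simpa only [Φ, ht'] using ht.1, by simp only [Φ, ht']⟩

/-! ### Admissible domains -/

theorem IsBoundaryCurve.zero_mem {r₀ : ℝ} {C : Set (ℝ × ℝ)} (hC : IsBoundaryCurve r₀ C) :
    (0 : ℝ × ℝ) ∈ C := by
  obtain ⟨N, h, σ, T, hN, -, hT, -, hh0, -, -, hCeq⟩ := hC
  have hroot : h ((0 : ℝ) ^ (1 / (N : ℝ))) = 0 := by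
    rw [Real.zero_rpow (by positivity), hh0]
  rcases hCeq with rfl | rfl
  · exact ⟨0, ⟨le_rfl, hT.le⟩, by simp only [hroot, mul_zero, Prod.mk_zero_zero]⟩
  · exact ⟨0, ⟨le_rfl, hT.le⟩, by simp only [hroot, mul_zero, Prod.mk_zero_zero]⟩

theorem IsBoundaryCurve.isAnalyticallyThin {r₀ : ℝ} {C : Set (ℝ × ℝ)}
    (hC : IsBoundaryCurve r₀ C) : IsAnalyticallyThin C := by
  obtain ⟨N, h, σ, T, hN, hσ, hT, hh, -, -, -, hCeq⟩ := hC
  have hthin := isAnalyticallyThin_graph_root (hh 0 ⟨le_rfl, by positivity⟩) hN.ne' hσ T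
  rcases hCeq with rfl | rfl
  · exact hthin
  · refine (hthin.preimage analyticAt_swap rfl (continuous_swap.tendsto 0)
      Prod.swap_leftInverse).mono (.of_forall ?_)
    rintro _ ⟨t, ht, rfl⟩
    exact ⟨t, ht, rfl⟩

theorem frontier_iUnion_subset {X ι : Type*} [TopologicalSpace X] [Finite ι] (S : ι → Set X) :
    frontier (⋃ i, S i) ⊆ ⋃ i, frontier (S i) := by
  rintro x ⟨hx, hxint⟩
  rw [closure_iUnion_of_finite] at hx
  obtain ⟨i, hi⟩ := mem_iUnion.1 hx
  exact mem_iUnion.2 ⟨i, hi, fun h => hxint (interior_mono (subset_iUnion S i) h)⟩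

theorem isOpen_disk2 (r : ℝ) : IsOpen (disk2 r) := isOpen_lt (by fun_prop) continuous_const

theorem zero_mem_disk2 {r : ℝ} (hr : 0 < r) : (0 : ℝ × ℝ) ∈ disk2 r := by
  simpa [disk2] using pow_pos hr 2

theorem isAnalyticallyThin_of_subset_circle2 {r : ℝ} (hr : 0 < r) {A : Set (ℝ × ℝ)}
    (hA : A ⊆ circle2 r) : IsAnalyticallyThin A := by
  refine isAnalyticallyThin_of_eventually_notMem ?_
  filter_upwards [(isOpen_disk2 r).mem_nhds (zero_mem_disk2 hr)] with p hp hpA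
  exact (mem_ofPred.1 hp).ne (hA hpA)

theorem IsStdDomain.isOpen {E : Set (ℝ × ℝ)} (hE : IsStdDomain E) : IsOpen E := by
  obtain ⟨r₀, -, rfl | ⟨m, Es, Cs, -, rfl, -, -, hEs, -⟩⟩ := hE
  · exact isOpen_disk2 r₀
  · exact isOpen_iUnion fun i => (hEs i).1

theorem IsStdDomain.zero_mem_closure {E : Set (ℝ × ℝ)} (hE : IsStdDomain E) :
    (0 : ℝ × ℝ) ∈ closure E := by
  obtain ⟨r₀, hr₀, rfl | ⟨m, Es, Cs, hm, rfl, -, hCs, hEs, -⟩⟩ := hE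
  · exact subset_closure (zero_mem_disk2 hr₀)
  · obtain ⟨-, -, -, A, -, -, hfr⟩ := hEs ⟨0, hm⟩
    have hzero : (0 : ℝ × ℝ) ∈ frontier (Es ⟨0, hm⟩) := by
      rw [hfr]
      exact .inl (.inl (hCs _ _).zero_mem)
    exact closure_mono (subset_iUnion Es ⟨0, hm⟩) (frontier_subset_closure hzero)

theorem IsStdDomain.isAnalyticallyThin_frontier {E : Set (ℝ × ℝ)} (hE : IsStdDomain E) :
    IsAnalyticallyThin (frontier E) := by
  obtain ⟨r₀, hr₀, rfl | ⟨m, Es, Cs, -, rfl, -, hCs, hEs, -⟩⟩ := hE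
  · refine isAnalyticallyThin_of_eventually_notMem ?_
    filter_upwards [(isOpen_disk2 r₀).mem_nhds (zero_mem_disk2 hr₀)] with p hp hpfr
    exact (isOpen_disk2 r₀).inter_frontier_eq.subset ⟨hp, hpfr⟩
  · have hfr : ∀ i, IsAnalyticallyThin (frontier (Es i)) := fun i => by
      obtain ⟨-, -, -, A, hA, -, hfr⟩ := hEs i
      rw [hfr]
      exact (((hCs i 0).isAnalyticallyThin.union (hCs i 1).isAnalyticallyThin).union
        (isAnalyticallyThin_of_subset_circle2 hr₀ hA))
    exact (IsAnalyticallyThin.iUnion hfr).mono (.of_forall (frontier_iUnion_subset Es))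

theorem hasGauge_locWeight_of_isAnalyticallyThin {ι : Type*} [Fintype ι] {f : ι → ℝ × ℝ → ℝ}
    (γ : ι → ℝ) {α : ℝ} {E : Set (ℝ × ℝ)} (hf : ∀ i, AnalyticAt ℝ (f i) 0)
    (hf0 : ∀ i, ¬ ∀ᶠ p in 𝓝 0, f i p = 0) (hE : IsAnalyticallyThin (frontier E)) :
    HasGauge (boxIntegral (locWeight f γ α E)) := by
  obtain ⟨φ, hφ, hφ0, hφE⟩ := hE
  choose a d G hG hfG using fun i => exists_eq_fst_pow_mul (hf i) (hf0 i)
  obtain ⟨b, e, H, hH, hφH⟩ := exists_eq_fst_pow_mul hφ hφ0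
  let F : Option ι → ℝ × ℝ → ℝ := fun o => o.elim H G
  let γ' : Option ι → ℝ := fun o => o.elim 0 γ
  have hF : ∀ o, RegularOrder (F o) (o.elim e d) := Option.rec hH hG
  have hEF : FrontierInZeros F E := by
    filter_upwards [hφE, hφH] with p hpφ hpH hpos hpE
    have hzero : p.1 ^ b * H p = 0 := hpH ▸ hpφ hpE
    exact ⟨none, (mul_eq_zero.1 hzero).resolve_left (pow_pos hpos b).ne'⟩
  refine (hasGauge_locWeight (α := α + ∑ i, a i * γ i) γ' hF hEF).congr_weight ?_
  filter_upwards [eventually_all.2 hfG] with p hp hpos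
  have hprod : p.1 ^ (α + ∑ i, a i * γ i) * ∏ o, |F o p| ^ γ' o =
      p.1 ^ α * ∏ i, |f i p| ^ γ i := by
    rw [Real.rpow_add hpos, mul_assoc, ← prod_pow_rpow hpos, Fintype.prod_option]
    simp only [F, γ', Option.elim_none, Option.elim_some, Real.rpow_zero, one_mul]
    rw [← Finset.prod_mul_distrib]
    refine congrArg _ (Finset.prod_congr rfl fun i _ => ?_)
    rw [hp i, abs_mul, abs_of_pos (pow_pos hpos _), Real.mul_rpow (by positivity) (abs_nonneg _)]
  simp only [locWeight, indicator, hprod]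

/-! ### Strips -/

/-- Coordinates with respect to `v` and `perp2 v`. For a unit vector `v` this is a reflection. -/
def frame (v : ℝ × ℝ) : ℝ × ℝ →ₗ[ℝ] ℝ × ℝ where
  toFun p := (dot2 p v, dot2 p (perp2 v))
  map_add' p q := by ext <;> simp only [dot2, Prod.fst_add, Prod.snd_add] <;> ring
  map_smul' t p := by
    ext <;> simp only [dot2, Prod.smul_fst, Prod.smul_snd, smul_eq_mul, RingHom.id_apply] <;> ring

section Frame

variable {v : ℝ × ℝ}

theorem frame_involutive (hv : v.1 ^ 2 + v.2 ^ 2 = 1) : Function.Involutive (frame v) := fun p => by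
  ext <;> simp only [frame, dot2, perp2, LinearMap.coe_mk, AddHom.coe_mk]
  · linear_combination p.1 * hv
  · linear_combination p.2 * hv

theorem continuous_frame (v : ℝ × ℝ) : Continuous (frame v) :=
  (frame v).continuous_of_finiteDimensional

theorem analyticAt_frame (v p : ℝ × ℝ) : AnalyticAt ℝ (frame v) p :=
  (LinearMap.toContinuousLinearMap (frame v)).analyticAt p

theorem tendsto_frame (v : ℝ × ℝ) : Tendsto (frame v) (𝓝 0) (𝓝 0) :=
  (continuous_frame v).tendsto' _ _ (map_zero _)

theorem measurePreserving_frame (hv : v.1 ^ 2 + v.2 ^ 2 = 1) : MeasurePreserving (frame v) := by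
  have hdet : LinearMap.det (frame v) * LinearMap.det (frame v) = 1 := by
    rw [← LinearMap.det_comp, ← LinearMap.det_id (A := ℝ) (M := ℝ × ℝ)]
    exact congrArg _ (LinearMap.ext (frame_involutive hv))
  have habs : |(LinearMap.det (frame v))⁻¹| = 1 := by
    rw [abs_inv, abs_eq_abs.2 (mul_self_eq_one_iff.1 hdet), abs_one, inv_one]
  refine ⟨(continuous_frame v).measurable, ?_⟩
  rw [Measure.map_linearMap_addHaar_eq_smul_addHaar volume (left_ne_zero_of_mul_eq_one hdet), habs,
    ENNReal.ofReal_one, one_smul]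

theorem setLIntegral_preimage_frame (hv : v.1 ^ 2 + v.2 ^ 2 = 1) (w : ℝ × ℝ → ENNReal)
    (S : Set (ℝ × ℝ)) : ∫⁻ p in frame v ⁻¹' S, w p = ∫⁻ p in S, w (frame v p) := by
  have hemb : MeasurableEmbedding (frame v) :=
    (MeasurableEquiv.ofInvolutive (frame v) (frame_involutive hv)
      (continuous_frame v).measurable).measurableEmbedding
  rw [← (measurePreserving_frame hv).setLIntegral_comp_preimage_emb hemb (fun p => w (frame v p)) S]
  simp only [frame_involutive hv _]

theorem volume_frame_fst_eq_zero (hv : v.1 ^ 2 + v.2 ^ 2 = 1) :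
    volume {p : ℝ × ℝ | (frame v p).1 = 0} = 0 := by
  have heq : {p : ℝ × ℝ | (frame v p).1 = 0} = frame v ⁻¹' ({0} ×ˢ univ) := by
    ext p
    simp
  rw [heq, (measurePreserving_frame hv).measure_preimage
    ((measurableSet_singleton 0).prod .univ).nullMeasurableSet, Measure.volume_eq_prod,
    Measure.prod_prod, Real.volume_singleton, zero_mul]

end Frame

theorem frame_neg (v p : ℝ × ℝ) : frame (-v) p = -frame v p := by
  ext <;> simp only [frame, dot2, perp2, LinearMap.coe_mk, AddHom.coe_mk, Prod.fst_neg,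
    Prod.snd_neg] <;> ring

theorem mem_strip2 {v p : ℝ × ℝ} {r c : ℝ} :
    p ∈ strip2 v r c ↔ |(frame v p).1| < r ∧ |(frame v p).2| < c := Iff.rfl

theorem HasGauge.setLIntegral_strip2 {v : ℝ × ℝ} (hv : v.1 ^ 2 + v.2 ^ 2 = 1)
    {w : ℝ × ℝ → ENNReal}
    (hw : ∀ u, u.1 ^ 2 + u.2 ^ 2 = 1 → HasGauge (boxIntegral fun p => w (frame u p))) :
    HasGauge fun c r => ∫⁻ p in strip2 v r c, w p := by
  classical
  have hunit : ∀ u ∈ ({v, -v} : Finset (ℝ × ℝ)), u.1 ^ 2 + u.2 ^ 2 = 1 := by simp [hv]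
  refine (HasGauge.sum fun u hu => hw u (hunit u hu)).of_comparable (.of_forall fun c => ?_)
  have hsum : (∑ u ∈ {v, -v}, boxIntegral fun p => w (frame u p)) c =
      ∑ u ∈ {v, -v}, fun r => ∫⁻ p in frame u ⁻¹' (Ioo 0 r ×ˢ Ioo (-c) c), w p := by
    rw [Finset.sum_apply]
    exact Finset.sum_congr rfl fun u hu =>
      funext fun r => (setLIntegral_preimage_frame (hunit u hu) w _).symm
  rw [hsum]
  refine comparable_setLIntegral_sum (fun u hu => .of_forall fun r p hp => ?_)
    (.of_forall fun r => measure_mono_null ?_ (volume_frame_fst_eq_zero hv))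
  · obtain ⟨⟨hpos, hr⟩, hc⟩ := hp
    have hu : u = v ∨ u = -v := by simpa using hu
    rcases hu with rfl | rfl
    · exact ⟨(abs_of_pos hpos).trans_lt hr, abs_lt.2 hc⟩
    · rw [mem_strip2, ← abs_neg, ← abs_neg (frame v p).2, ← Prod.fst_neg, ← Prod.snd_neg,
        ← frame_neg]
      exact ⟨(abs_of_pos hpos).trans_lt hr, abs_lt.2 hc⟩
  · rintro p ⟨hp, hpu⟩
    by_contra hne
    rw [mem_strip2, abs_lt, abs_lt] at hp
    refine hpu ?_
    simp only [Finset.mem_insert, Finset.mem_singleton, iUnion_iUnion_eq_or_left,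
      iUnion_iUnion_eq_left, mem_union, mem_preimage, mem_prod, mem_Ioo, frame_neg, Prod.fst_neg,
      Prod.snd_neg, neg_pos]
    rcases lt_or_gt_of_ne hne with hlt | hgt
    · exact .inr ⟨⟨hlt, by linarith⟩, by linarith, by linarith⟩
    · exact .inl ⟨⟨hgt, hp.1.2⟩, hp.2⟩

theorem hasGauge_setLIntegral_strip2 {n : ℕ} {f : Fin n → ℝ × ℝ → ℝ} (γ : Fin n → ℝ)
    {E : Set (ℝ × ℝ)} (hf : ∀ i, AnalyticAt ℝ (f i) 0) (hf0 : ∀ i, ¬ ∀ᶠ p in 𝓝 0, f i p = 0)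
    (hE : IsAnalyticallyThin (frontier E)) {v : ℝ × ℝ} (hv : v.1 ^ 2 + v.2 ^ 2 = 1) :
    HasGauge fun c r => ∫⁻ p in strip2 v r c, ENNReal.ofReal (stdFun n f γ E p) := by
  refine .setLIntegral_strip2 hv fun u hu => ?_
  have hthin : IsAnalyticallyThin (frontier (frame u ⁻¹' E)) :=
    (hE.preimage (analyticAt_frame u 0) (map_zero _) (tendsto_frame u)
      (frame_involutive hu).leftInverse).mono
      (.of_forall fun p => map_mem_frontier_of_continuousAt (continuous_frame u).continuousAt)
  have hw : (fun p => ENNReal.ofReal (stdFun n f γ E (frame u p))) =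
      locWeight (fun i p => f i (frame u p)) γ 0 (frame u ⁻¹' E) := by
    ext p
    by_cases hp : frame u p ∈ E <;> simp [stdFun, locWeight, hp]
  rw [hw]
  exact hasGauge_locWeight_of_isAnalyticallyThin γ
    (fun i => (hf i).fun_comp_of_eq (analyticAt_frame u 0) (map_zero _))
    (fun i => not_eventually_comp_eq_zero (hf0 i) (tendsto_frame u)
      (frame_involutive hu).leftInverse) hthin

section Strip

variable {v : ℝ × ℝ} {r r' c : ℝ}

theorem isOpen_strip2 (v : ℝ × ℝ) (r c : ℝ) : IsOpen (strip2 v r c) :=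
  (isOpen_lt (continuous_frame v).fst.abs continuous_const).inter
    (isOpen_lt (continuous_frame v).snd.abs continuous_const)

theorem zero_mem_strip2 (hr : 0 < r) (hc : 0 < c) : (0 : ℝ × ℝ) ∈ strip2 v r c := by
  simpa [mem_strip2] using ⟨hr, hc⟩

theorem strip2_mono (h : r ≤ r') : strip2 v r c ⊆ strip2 v r' c :=
  fun _ hp => ⟨hp.1.trans_le h, hp.2⟩

theorem eventually_strip2_subset (hv : v.1 ^ 2 + v.2 ^ 2 = 1) {U : Set (ℝ × ℝ)} (hU : U ∈ 𝓝 0) :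
    ∀ᶠ c in 𝓝[>] (0 : ℝ), strip2 v c c ⊆ U := by
  obtain ⟨ε, hε, hball⟩ := Metric.mem_nhds_iff.1 ((tendsto_frame v) hU)
  filter_upwards [eventually_lt_nhdsGT_zero hε] with c hc p hp
  have hframe : frame v p ∈ Metric.ball 0 ε := by
    rw [mem_ball_zero_iff, Prod.norm_def, max_lt_iff]
    exact ⟨hp.1.trans hc, hp.2.trans hc⟩
  simpa only [mem_preimage, frame_involutive hv p] using hball hframe

end Strip

section StdFun

variable {n : ℕ} {f : Fin n → ℝ × ℝ → ℝ} {E S : Set (ℝ × ℝ)}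

theorem stdFun_nonneg (f : Fin n → ℝ × ℝ → ℝ) (γ : Fin n → ℝ) (E : Set (ℝ × ℝ)) (p : ℝ × ℝ) :
    0 ≤ stdFun n f γ E p :=
  indicator_nonneg (fun _ _ => Finset.prod_nonneg fun _ _ => Real.rpow_nonneg (abs_nonneg _) _) p

theorem stdFun_pos (γ : Fin n → ℝ) {p : ℝ × ℝ} (hp : p ∈ E) (hf : ∏ i, f i p ≠ 0) :
    0 < stdFun n f γ E p := by
  rw [stdFun, indicator_of_mem hp]
  exact Finset.prod_pos fun i hi =>
    Real.rpow_pos_of_pos (abs_pos.2 (Finset.prod_ne_zero_iff.1 hf i hi)) _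

theorem setLIntegral_stdFun_pos (γ : Fin n → ℝ) (hf : ∀ i, AnalyticAt ℝ (f i) 0)
    (hf0 : ∀ i, ¬ ∀ᶠ p in 𝓝 0, f i p = 0) (hE : 0 ∈ closure (interior E)) (hS : IsOpen S)
    (hS0 : 0 ∈ S) (hint : IntegrableOn (stdFun n f γ E) S) :
    0 < ∫⁻ p in S, ENNReal.ofReal (stdFun n f γ E p) := by
  rw [pos_iff_ne_zero]
  intro hzero
  rw [lintegral_eq_zero_iff' hint.aestronglyMeasurable.aemeasurable.ennreal_ofReal, EventuallyEq,
    ae_restrict_iff' hS.measurableSet] at hzero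
  have hprod : AnalyticAt ℝ (fun p => ∏ i, f i p) 0 :=
    Finset.analyticAt_fun_prod _ fun i _ => hf i
  refine not_eventually_prod_eq_zero (fun i _ => hf i) (fun i _ => hf0 i)
    (eventually_eq_zero_of_eventually_mem hprod isOpen_interior hE ?_)
  filter_upwards [hprod.eventually_analyticAt, hS.mem_nhds hS0] with p hp hpS hpE
  by_contra hne
  have hpos : ∀ᶠ q in 𝓝 p, ¬ (q ∈ S → ENNReal.ofReal (stdFun n f γ E q) = 0) := by
    filter_upwards [hp.continuousAt.eventually_ne hne, hS.mem_nhds hpS,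
      mem_interior_iff_mem_nhds.1 hpE] with q hq hqS hqE hqzero
    exact (stdFun_pos γ hqE hq).not_ge (ENNReal.ofReal_eq_zero.1 (hqzero hqS))
  exact (Measure.measure_pos_of_mem_nhds volume hpos).ne' hzero

end StdFun

/-! ### From orders of magnitude to bounds -/

theorem IsGauge.exists_eq_powLog {J φ : ℝ → ENNReal} (hφ : IsGauge φ) (hJ : Comparable J φ)
    (h : ∃ᶠ r in 𝓝[>] (0 : ℝ), J r ≠ 0 ∧ J r ≠ ⊤) :
    ∃ (δ : ℝ) (e : ℕ), 0 < δ ∧ e ≤ 1 ∧ φ = powLog δ e := by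
  obtain ⟨⟨C, hC⟩, ⟨D, hD⟩⟩ := hJ
  rcases hφ with rfl | rfl | hφ
  · obtain ⟨r, hr, hle⟩ := (h.and_eventually hC).exists
    exact absurd (by simpa using hle) hr.1
  · obtain ⟨r, hr, hle⟩ := (h.and_eventually hD).exists
    exact absurd (top_le_iff.1 hle) (ENNReal.mul_ne_top ENNReal.coe_ne_top hr.2)
  · exact hφ

theorem exists_forall_le_mul_of_eventually_le {u w : ℝ → ℝ} {c C : ℝ}
    (h : ∀ᶠ r in 𝓝[>] (0 : ℝ), u r ≤ C * w r)
    (hu : ∀ ρ > 0, ∃ M, ∀ r ∈ Ico ρ c, u r ≤ M)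
    (hw : ∀ ρ > 0, ∃ η > 0, ∀ r ∈ Ico ρ c, η ≤ w r) :
    ∃ K > 0, ∀ r ∈ Ioo 0 c, u r ≤ K * w r := by
  obtain ⟨ρ, hρ, hC⟩ := mem_nhdsGT_iff_exists_Ioo_subset.1 h
  obtain ⟨M, hM⟩ := hu ρ hρ
  obtain ⟨η, hη, hηw⟩ := hw ρ hρ
  have hwpos : ∀ r ∈ Ioo 0 c, 0 < w r := fun r hr => by
    obtain ⟨ε, hε, hεw⟩ := hw r hr.1
    exact hε.trans_le (hεw r ⟨le_rfl, hr.2⟩)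
  refine ⟨max 1 (max C (|M| / η)), by positivity, fun r hr => ?_⟩
  rcases lt_or_ge r ρ with hlt | hge
  · exact (hC ⟨hr.1, hlt⟩).trans (mul_le_mul_of_nonneg_right
      ((le_max_left _ _).trans (le_max_right _ _)) (hwpos r hr).le)
  · calc u r ≤ |M| := (hM r ⟨hge, hr.2⟩).trans (le_abs_self M)
      _ = |M| / η * η := (div_mul_cancel₀ _ hη.ne').symm
      _ ≤ max 1 (max C (|M| / η)) * w r := by
        gcongr
        · exact (le_max_right _ _).trans (le_max_right _ _)
        · exact hηw r ⟨hge, hr.2⟩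

theorem rpow_mul_abs_log_pow_mem_Icc {δ ρ r c : ℝ} (hδ : 0 ≤ δ) (e : ℕ) (hρ : 0 < ρ) (hρr : ρ ≤ r)
    (hrc : r ≤ c) (hc : c < 1) :
    r ^ δ * |Real.log r| ^ e ∈
      Icc (ρ ^ δ * |Real.log c| ^ e) (c ^ δ * |Real.log ρ| ^ e) := by
  have hanti : ∀ {x y : ℝ}, 0 < x → x ≤ y → y ≤ c → |Real.log y| ≤ |Real.log x| := by
    intro x y hx hxy hy
    have hy0 : Real.log y ≤ 0 := Real.log_nonpos (hx.le.trans hxy) (hy.trans hc.le)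
    have hle : Real.log x ≤ Real.log y := Real.log_le_log hx hxy
    rw [abs_of_nonpos hy0, abs_of_nonpos (hle.trans hy0)]
    exact neg_le_neg hle
  have hr : 0 < r := hρ.trans_le hρr
  have hc0 : 0 < c := hr.trans_le hrc
  have hlog₁ := hanti hr hrc le_rfl
  have hlog₂ := hanti hρ hρr hrc
  constructor <;> gcongr

theorem Comparable.exists_bounds_of_monotone {J : ℝ → ENNReal} {δ c : ℝ} {e : ℕ}
    (h : Comparable J (powLog δ e)) (hδ : 0 ≤ δ) (hc0 : 0 < c) (hc : c < 1) (hJ : Monotone J)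
    (hpos : ∀ r > 0, r ≤ c → J r ≠ 0) (htop : J c ≠ ⊤) :
    ∃ a b : ℝ, 0 < a ∧ 0 < b ∧ ∀ r : ℝ, 0 < r → r < c →
      a * r ^ δ * |Real.log r| ^ e ≤ (J r).toReal ∧
      (J r).toReal ≤ b * r ^ δ * |Real.log r| ^ e := by
  obtain ⟨⟨C, hC⟩, ⟨D, hD⟩⟩ := h
  have hJtop : ∀ {r}, r ≤ c → J r ≠ ⊤ := fun hr => ne_top_of_le_ne_top htop (hJ hr)
  have hJle : ∀ ρ > 0, ∃ M, ∀ r ∈ Ico ρ c, (J r).toReal ≤ M := fun ρ _ =>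
    ⟨(J c).toReal, fun r hr => ENNReal.toReal_mono htop (hJ hr.2.le)⟩
  have hleJ : ∀ ρ > 0, ∃ η > 0, ∀ r ∈ Ico ρ c, η ≤ (J r).toReal := fun ρ hρ => by
    refine ⟨(J (min ρ c)).toReal, ENNReal.toReal_pos (hpos _ (lt_min hρ hc0) (min_le_right _ _))
      (hJtop (min_le_right _ _)), fun r hr => ENNReal.toReal_mono (hJtop hr.2.le) (hJ ?_)⟩
    exact (min_le_left _ _).trans hr.1
  have hmle : ∀ ρ > 0, ∃ M, ∀ r ∈ Ico ρ c, r ^ δ * |Real.log r| ^ e ≤ M := fun ρ hρ =>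
    ⟨_, fun r hr => (rpow_mul_abs_log_pow_mem_Icc hδ e hρ hr.1 hr.2.le hc).2⟩
  have hlem : ∀ ρ > 0, ∃ η > 0, ∀ r ∈ Ico ρ c, η ≤ r ^ δ * |Real.log r| ^ e := fun ρ hρ => by
    have hlog := abs_pos.2 (Real.log_neg hc0 hc).ne
    exact ⟨ρ ^ δ * |Real.log c| ^ e, by positivity,
      fun r hr => (rpow_mul_abs_log_pow_mem_Icc hδ e hρ hr.1 hr.2.le hc).1⟩
  obtain ⟨b, hb, hbJ⟩ := exists_forall_le_mul_of_eventually_le (C := C)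
    (by
      filter_upwards [hC, self_mem_nhdsWithin] with r hr (hr0 : 0 < r)
      refine ENNReal.toReal_le_of_le_ofReal (by positivity) ?_
      rwa [ENNReal.ofReal_mul C.coe_nonneg, ENNReal.ofReal_coe_nnreal]) hJle hlem
  obtain ⟨A, hA, hAJ⟩ := exists_forall_le_mul_of_eventually_le (C := D)
    (by
      filter_upwards [hD, eventually_lt_nhdsGT_zero hc0] with r hr hrc
      have hfin : (D : ENNReal) * J r ≠ ⊤ := ENNReal.mul_ne_top ENNReal.coe_ne_top (hJtop hrc.le)
      simpa using (ENNReal.ofReal_le_iff_le_toReal hfin).1 hr) hmle hleJ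
  refine ⟨A⁻¹, b, inv_pos.2 hA, hb, fun r hr0 hrc => ?_⟩
  rw [mul_assoc, mul_assoc]
  exact ⟨(inv_mul_le_iff₀ hA).2 (hAJ r ⟨hr0, hrc⟩), hbJ r ⟨hr0, hrc⟩⟩

end

theorem strip_integral_bound_general {n : ℕ} (f : Fin n → ℝ × ℝ → ℝ) (γ : Fin n → ℝ)
    (E : Set (ℝ × ℝ)) (hf : ∀ i, AnalyticAt ℝ (f i) 0) (hf0 : ∀ i, ¬ ∀ᶠ p in 𝓝 0, f i p = 0)
    (hE0 : 0 ∈ closure (interior E)) (hE : IsAnalyticallyThin (frontier E))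
    (hint : ∃ U ∈ 𝓝 0, IntegrableOn (stdFun n f γ E) U)
    (v : ℝ × ℝ) (hv : v.1 ^ 2 + v.2 ^ 2 = 1) :
    ∃ (δv cv : ℝ) (ev : ℕ), 0 < δv ∧ 0 < cv ∧ (ev = 0 ∨ ev = 1) ∧
      ∀ c : ℝ, 0 < c → c < cv →
        ∃ a b : ℝ, 0 < a ∧ 0 < b ∧ ∀ r : ℝ, 0 < r → r < c →
          a * r ^ δv * |Real.log r| ^ ev ≤ (∫ p in strip2 v r c, stdFun n f γ E p) ∧
          (∫ p in strip2 v r c, stdFun n f γ E p) ≤ b * r ^ δv * |Real.log r| ^ ev := by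
  obtain ⟨U, hU, hintU⟩ := hint
  obtain ⟨φ, hφ, hJφ⟩ := hasGauge_setLIntegral_strip2 γ hf hf0 hE hv
  obtain ⟨cv, hcv : 0 < cv, hsmall⟩ := mem_nhdsGT_iff_exists_Ioo_subset.1
    (hJφ.and ((eventually_strip2_subset hv hU).and (eventually_lt_nhdsGT_zero one_pos)))
  let J : ℝ → ℝ → ENNReal := fun c r => ∫⁻ p in strip2 v r c, ENNReal.ofReal (stdFun n f γ E p)
  have hintc : ∀ {c r}, c ∈ Ioo 0 cv → r ≤ c → IntegrableOn (stdFun n f γ E) (strip2 v r c) :=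
    fun hc hr => hintU.mono_set ((strip2_mono hr).trans (hsmall hc).2.1)
  have hpos : ∀ {c r}, c ∈ Ioo 0 cv → 0 < r → r ≤ c → J c r ≠ 0 := fun hc hr0 hr =>
    (setLIntegral_stdFun_pos γ hf hf0 hE0 (isOpen_strip2 v _ _) (zero_mem_strip2 hr0 hc.1)
      (hintc hc hr)).ne'
  have htop : ∀ {c r}, c ∈ Ioo 0 cv → r ≤ c → J c r ≠ ⊤ := fun hc hr =>
    (hintc hc hr).lintegral_lt_top.ne
  obtain ⟨δ, e, hδ, he, rfl⟩ : ∃ (δ : ℝ) (e : ℕ), 0 < δ ∧ e ≤ 1 ∧ φ = powLog δ e := by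
    obtain ⟨c, hc⟩ := exists_between hcv
    refine hφ.exists_eq_powLog (hsmall hc).1 (Eventually.frequently ?_)
    filter_upwards [self_mem_nhdsWithin, eventually_lt_nhdsGT_zero hc.1] with r hr0 hrc
    exact ⟨hpos hc hr0 hrc.le, htop hc hrc.le⟩
  refine ⟨δ, cv, e, hδ, hcv, Nat.le_one_iff_eq_zero_or_eq_one.1 he, fun c hc0 hc => ?_⟩
  obtain ⟨hcmp, -, hc1⟩ := hsmall ⟨hc0, hc⟩
  obtain ⟨a, b, ha, hb, hab⟩ := hcmp.exists_bounds_of_monotone hδ.le hc0 hc1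
    (fun r r' h => lintegral_mono_set (strip2_mono h)) (fun r => hpos ⟨hc0, hc⟩)
    (htop ⟨hc0, hc⟩ le_rfl)
  refine ⟨a, b, ha, hb, fun r hr0 hrc => ?_⟩
  rw [integral_eq_lintegral_of_nonneg_ae (.of_forall (stdFun_nonneg f γ E))
    (hintc ⟨hc0, hc⟩ hrc.le).aestronglyMeasurable]
  exact hab r hr0 hrc

theorem strip_integral_bound {n : ℕ} (f : Fin n → ℝ × ℝ → ℝ) (γ : Fin n → ℝ)
    (E : Set (ℝ × ℝ)) (hsf : StandardForm n f γ E)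
    (v : ℝ × ℝ) (hv : v.1 ^ 2 + v.2 ^ 2 = 1) :
    ∃ (δv cv : ℝ) (ev : ℕ), 0 < δv ∧ 0 < cv ∧ (ev = 0 ∨ ev = 1) ∧
      ∀ c : ℝ, 0 < c → c < cv →
        ∃ a b : ℝ, 0 < a ∧ 0 < b ∧ ∀ r : ℝ, 0 < r → r < c →
          a * r ^ δv * |Real.log r| ^ ev ≤ (∫ p in strip2 v r c, stdFun n f γ E p) ∧
          (∫ p in strip2 v r c, stdFun n f γ E p) ≤ b * r ^ δv * |Real.log r| ^ ev := by
  obtain ⟨U, hU, hfU⟩ := hsf.analytic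
  exact strip_integral_bound_general f γ E (fun i => hfU i 0 (mem_of_mem_nhds hU)) hsf.nontriv
    (hsf.domain.isOpen.interior_eq.symm ▸ hsf.domain.zero_mem_closure)
    hsf.domain.isAnalyticallyThin_frontier hsf.integ v hv
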